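/- Fix real κ > 0, η > 0 and a ∈ (0, 1/2). There exist C > 0 and f₀ > 0 such that for all f ∈ (0, f₀): D_f(0) ≠ 0, and for every R_L > 2f^a there exists r with (1 − f)·R_L < r < R_L such that D_f has no zeros on the circle {|z| = r} and |(1/2π)·∫₀^{2π} log|D_f(re^{it})/D_f(0)| dt − (8/(9π))·r^{3/2}/f| ≤ C·(1 + r^{1/2})·(log(f⁻¹ + r))² (log denotes the natural logarithm). -/

import Mathlib

open Real

/-- Taylor coefficients of the Airy function `Ai`:
`a₀ = 3^{−2/3}/Γ(2/3)`, `a₁ = −3^{−1/3}/Γ(1/3)`, `a₂ = 0`,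
`a_{k+3} = a_k/((k+3)(k+2))`. -/
noncomputable def airyCoeff : ℕ → ℂ
  | 0 => (3 : ℂ) ^ (-(2 : ℂ) / 3) / Complex.Gamma (2 / 3)
  | 1 => -((3 : ℂ) ^ (-(1 : ℂ) / 3) / Complex.Gamma (1 / 3))
  | 2 => 0
  | (k + 3) => airyCoeff k / (((k : ℂ) + 3) * ((k : ℂ) + 2))

/-- The Airy function `Ai`, as the entire function with the above Taylor
coefficients at `0`. -/
noncomputable def Ai (z : ℂ) : ℂ := ∑' k : ℕ, airyCoeff k * z ^ k

/-- `ω = e^{2πi/3}` -/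
noncomputable def ωc : ℂ := Complex.exp (2 * π * Complex.I / 3)

/-- `W = f^{1/3}·e^{−iπ/6}/(2π)` -/
noncomputable def Wf (f : ℝ) : ℂ :=
  ((f ^ ((1 : ℝ) / 3) : ℝ) : ℂ) * Complex.exp (-(π : ℂ) * Complex.I / 6) / (2 * π)

/-- `α₊(z) = Ai(−ω(z − κf)f^{−2/3})·Ai(−(z − κf)f^{−2/3})` -/
noncomputable def alphaP (κ f : ℝ) (z : ℂ) : ℂ :=
  Ai (-ωc * (z - κ * f) * ((f ^ (-(2 : ℝ) / 3) : ℝ) : ℂ)) *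
    Ai (-(z - κ * f) * ((f ^ (-(2 : ℝ) / 3) : ℝ) : ℂ))

/-- `α₋(z) = Ai(−ω(z + κf)f^{−2/3})·Ai(−(z + κf)f^{−2/3})` -/
noncomputable def alphaM (κ f : ℝ) (z : ℂ) : ℂ :=
  Ai (-ωc * (z + κ * f) * ((f ^ (-(2 : ℝ) / 3) : ℝ) : ℂ)) *
    Ai (-(z + κ * f) * ((f ^ (-(2 : ℝ) / 3) : ℝ) : ℂ))

/-- `β₊(z) = Ai(−ω(z + κf)f^{−2/3})·Ai(−(z − κf)f^{−2/3})` -/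
noncomputable def betaP (κ f : ℝ) (z : ℂ) : ℂ :=
  Ai (-ωc * (z + κ * f) * ((f ^ (-(2 : ℝ) / 3) : ℝ) : ℂ)) *
    Ai (-(z - κ * f) * ((f ^ (-(2 : ℝ) / 3) : ℝ) : ℂ))

/-- `β₋(z) = Ai(−ω(z − κf)f^{−2/3})·Ai(−(z + κf)f^{−2/3})` -/
noncomputable def betaM (κ f : ℝ) (z : ℂ) : ℂ :=
  Ai (-ωc * (z - κ * f) * ((f ^ (-(2 : ℝ) / 3) : ℝ) : ℂ)) *
    Ai (-(z + κ * f) * ((f ^ (-(2 : ℝ) / 3) : ℝ) : ℂ))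

/-- The resonance determinant `D_f` of the Stark Hamiltonian
`p² + fx + η⁻¹(δ_κ + δ_{−κ})`:
`D_f(z) = 1 + (α₊ + α₋)/(ηW) + β₊(β₋ − β₊)/(η²W²)`. -/
noncomputable def Df (κ η f : ℝ) (z : ℂ) : ℂ :=
  1 + (alphaP κ f z + alphaM κ f z) / (η * Wf f)
    + betaP κ f z * (betaM κ f z - betaP κ f z) / (η ^ 2 * (Wf f) ^ 2)

/-- The moments `∫₀^∞ τⁿ e^{-τ³/3} dτ`. -/
noncomputable def cubicMoment (n : ℕ) : ℝ :=
  ∫ τ in Set.Ioi (0 : ℝ), τ ^ n * Real.exp (-τ ^ 3 / 3)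

lemma cubicMoment_eq (n : ℕ) :
    cubicMoment n = (3 : ℝ) ^ (((n : ℝ) - 2) / 3) * Real.Gamma (((n : ℝ) + 1) / 3) := by
  have h := integral_rpow_mul_exp_neg_mul_rpow (p := 3) (q := n) (b := 1 / 3) (by norm_num)
    (by have := n.cast_nonneg (α := ℝ); linarith) (by norm_num)
  have h2 : cubicMoment n
      = ∫ x in Set.Ioi (0 : ℝ), x ^ (n : ℝ) * Real.exp (-(1 / 3) * x ^ (3 : ℝ)) := by
    unfold cubicMoment
    refine MeasureTheory.setIntegral_congr_fun measurableSet_Ioi fun x hx => ?_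
    have : x ^ (3 : ℝ) = x ^ (3 : ℕ) := by exact_mod_cast Real.rpow_natCast x 3
    simp only [Real.rpow_natCast, this]
    ring_nf
  rw [h2, h]
  have h3 : (1 / 3 : ℝ) ^ (-((n : ℝ) + 1) / 3) * (1 / 3) = (3 : ℝ) ^ (((n : ℝ) - 2) / 3) := by
    rw [one_div, Real.inv_rpow (by norm_num), ← Real.rpow_neg (by norm_num)]
    rw [show (3 : ℝ)⁻¹ = (3 : ℝ) ^ (-1 : ℝ) from (Real.rpow_neg_one 3).symm,
      ← Real.rpow_add (by norm_num)]
    congr 1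
    ring
  rw [h3]

lemma cubicMoment_add_three (n : ℕ) : cubicMoment (n + 3) = (n + 1) * cubicMoment n := by
  rw [cubicMoment_eq, cubicMoment_eq]
  have h1 : (((n + 3 : ℕ) : ℝ) + 1) / 3 = ((n : ℝ) + 1) / 3 + 1 := by push_cast; ring
  have h2 : (((n + 3 : ℕ) : ℝ) - 2) / 3 = ((n : ℝ) - 2) / 3 + 1 := by push_cast; ring
  rw [h1, h2, Real.Gamma_add_one (by positivity), Real.rpow_add (by norm_num), Real.rpow_one]
  ring

/-- The sixth root of unity `e^{iπ/3}`. -/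
noncomputable def ξc : ℂ := 1 / 2 + (√3 / 2 : ℝ) * Complex.I

/-- The sixth root of unity `e^{-iπ/3}`. -/
noncomputable def ξbar : ℂ := 1 / 2 - (√3 / 2 : ℝ) * Complex.I

lemma sqrt_three_sq_complex : ((√3 : ℝ) : ℂ) ^ 2 = 3 := by
  rw [← Complex.ofReal_pow, Real.sq_sqrt (by norm_num)]; norm_num

lemma ξc_cube : ξc ^ 3 = -1 := by
  have h := sqrt_three_sq_complex
  have hI := Complex.I_sq
  unfold ξc
  push_cast
  linear_combination (((√3 : ℝ) : ℂ) ^ 3 * Complex.I / 8 + 3 * ((√3 : ℝ) : ℂ) ^ 2 / 8) * hI +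
    (-3 / 8 - ((√3 : ℝ) : ℂ) * Complex.I / 8) * h

lemma ξbar_cube : ξbar ^ 3 = -1 := by
  have h := sqrt_three_sq_complex
  have hI := Complex.I_sq
  unfold ξbar
  push_cast
  linear_combination (-((√3 : ℝ) : ℂ) ^ 3 * Complex.I / 8 + 3 * ((√3 : ℝ) : ℂ) ^ 2 / 8) * hI +
    (-3 / 8 + ((√3 : ℝ) : ℂ) * Complex.I / 8) * h

lemma Gamma_third_mul : Real.Gamma (1 / 3) * Real.Gamma (2 / 3) = 2 * π / √3 := by
  have h := Real.Gamma_mul_Gamma_one_sub (1 / 3)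
  rw [show (1 : ℝ) - 1 / 3 = 2 / 3 by norm_num, show π * (1 / 3) = π / 3 by ring,
    Real.sin_pi_div_three] at h
  rw [h]; field_simp

lemma airyCoeff_zero : airyCoeff 0 = ((√3 / (2 * π) * cubicMoment 0 : ℝ) : ℂ) := by
  have hg := Gamma_third_mul
  have h2 : Real.Gamma (2 / 3) ≠ 0 := (Real.Gamma_pos_of_pos (by norm_num)).ne'
  have h3 : (√3 : ℝ) ≠ 0 := by positivity
  have hpi := Real.pi_ne_zero
  rw [cubicMoment_eq]
  rw [airyCoeff, show (2 / 3 : ℂ) = ((2 / 3 : ℝ) : ℂ) by norm_num, Complex.Gamma_ofReal,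
    show (-(2 : ℂ) / 3) = ((-2 / 3 : ℝ) : ℂ) by norm_num,
    show (3 : ℂ) = ((3 : ℝ) : ℂ) by norm_num, ← Complex.ofReal_cpow (by norm_num),
    ← Complex.ofReal_div]
  congr 1
  rw [show (((0 : ℕ) : ℝ) - 2) / 3 = -2 / 3 by norm_num,
    show (((0 : ℕ) : ℝ) + 1) / 3 = 1 / 3 by norm_num]
  rw [eq_div_of_mul_eq h2 hg]
  field_simp

lemma airyCoeff_one : airyCoeff 1 = ((-(√3 / (2 * π) * cubicMoment 1) : ℝ) : ℂ) := by
  have hg := Gamma_third_mul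
  rw [mul_comm] at hg
  have h2 : Real.Gamma (1 / 3) ≠ 0 := (Real.Gamma_pos_of_pos (by norm_num)).ne'
  have h3 : (√3 : ℝ) ≠ 0 := by positivity
  have hpi := Real.pi_ne_zero
  rw [cubicMoment_eq]
  rw [airyCoeff, show (1 / 3 : ℂ) = ((1 / 3 : ℝ) : ℂ) by norm_num, Complex.Gamma_ofReal,
    show (-(1 : ℂ) / 3) = ((-1 / 3 : ℝ) : ℂ) by norm_num,
    show (3 : ℂ) = ((3 : ℝ) : ℂ) by norm_num, ← Complex.ofReal_cpow (by norm_num),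
    ← Complex.ofReal_div, ← Complex.ofReal_neg]
  congr 2
  rw [show (((1 : ℕ) : ℝ) - 2) / 3 = -1 / 3 by norm_num,
    show (((1 : ℕ) : ℝ) + 1) / 3 = 2 / 3 by norm_num]
  rw [eq_div_of_mul_eq h2 hg]
  field_simp

lemma airyCoeff_eq (n : ℕ) :
    airyCoeff n = 1 / (2 * π * Complex.I) *
      ((ξc ^ (n + 1) - ξbar ^ (n + 1)) * (-1) ^ n / (n.factorial : ℂ)) * (cubicMoment n : ℂ) := by
  have hpi : (π : ℂ) ≠ 0 := by exact_mod_cast Real.pi_ne_zero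
  have hI := Complex.I_sq
  induction n using Nat.strong_induction_on with
  | _ n ih =>
    match n with
    | 0 =>
      rw [airyCoeff_zero]
      have := Complex.I_ne_zero
      simp only [ξc, ξbar]
      push_cast
      field_simp
      simp
      ring
    | 1 =>
      rw [airyCoeff_one]
      have := Complex.I_ne_zero
      simp only [ξc, ξbar]
      push_cast
      field_simp
      simp
      ring
    | 2 => simp [airyCoeff, ξc_cube, ξbar_cube]
    | (k + 3) =>
      rw [airyCoeff, ih k (by omega), cubicMoment_add_three]
      have e1 : ξc ^ (k + 3 + 1) = -ξc ^ (k + 1) := by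
        rw [show k + 3 + 1 = (k + 1) + 3 by ring, pow_add, ξc_cube]; ring
      have e2 : ξbar ^ (k + 3 + 1) = -ξbar ^ (k + 1) := by
        rw [show k + 3 + 1 = (k + 1) + 3 by ring, pow_add, ξbar_cube]; ring
      have e3 : ((-1 : ℂ)) ^ (k + 3) = -(-1) ^ k := by rw [pow_add]; norm_num
      have hf : ((k + 3).factorial : ℂ) = (k + 3) * ((k + 2) * ((k + 1) * (k.factorial : ℂ))) := by
        simp [Nat.factorial_succ]; ring
      rw [e1, e2, e3, hf]
      have h0 : (k.factorial : ℂ) ≠ 0 := by exact_mod_cast k.factorial_ne_zero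
      have h1 : (k : ℂ) + 1 ≠ 0 := by exact_mod_cast k.succ_ne_zero
      have h2 : (k : ℂ) + 2 ≠ 0 := by exact_mod_cast (k + 1).succ_ne_zero
      have h3 : (k : ℂ) + 3 ≠ 0 := by exact_mod_cast (k + 2).succ_ne_zero
      have := Complex.I_ne_zero
      push_cast
      field_simp
      ring

lemma hasSum_congr_terms {f g : ℕ → ℂ} {s : ℂ} (h : ∀ n, f n = g n) : HasSum f s ↔ HasSum g s := by
  rw [funext h]

lemma mul_sub_cube_le {b t : ℝ} (hb : 0 ≤ b) (ht : 0 ≤ t) :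
    b * t - t ^ 3 / 3 ≤ b * (1 + 3 * b) := by
  by_cases h : 3 * b ≤ t ^ 2
  · have : b * t ≤ t ^ 3 / 3 := by nlinarith
    nlinarith [mul_nonneg hb hb]
  · push Not at h
    have h1 : t ≤ 1 + 3 * b := by nlinarith [sq_nonneg (t - 1)]
    have : 0 ≤ t ^ 3 := by positivity
    nlinarith [mul_le_mul_of_nonneg_left h1 hb]

lemma integrableOn_exp_mul_sub_cube (c : ℝ) :
    MeasureTheory.IntegrableOn (fun t : ℝ => Real.exp (c * t - t ^ 3 / 3)) (Set.Ioi 0) := by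
  have h := (exp_neg_integrableOn_Ioi 0 (b := 1) one_pos).const_mul
    (Real.exp ((|c| + 1) * (1 + 3 * (|c| + 1))))
  refine MeasureTheory.Integrable.mono' h (by fun_prop) ?_
  refine (MeasureTheory.ae_restrict_iff' measurableSet_Ioi).2 (.of_forall fun t ht => ?_)
  have ht' : 0 < t := ht
  rw [Real.norm_of_nonneg (Real.exp_pos _).le, ← Real.exp_add]
  refine Real.exp_le_exp.2 ?_
  have := mul_sub_cube_le (b := |c| + 1) (by positivity) ht'.le
  nlinarith [le_abs_self c]

lemma norm_ξc : ‖ξc‖ = 1 := by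
  have h : ‖ξc‖ ^ 3 = 1 := by rw [← norm_pow, ξc_cube]; simp
  exact (pow_eq_one_iff_of_nonneg (norm_nonneg _) (by norm_num)).1 h

lemma norm_ξbar : ‖ξbar‖ = 1 := by
  have h : ‖ξbar‖ ^ 3 = 1 := by rw [← norm_pow, ξbar_cube]; simp
  exact (pow_eq_one_iff_of_nonneg (norm_nonneg _) (by norm_num)).1 h

lemma integrableOn_ray {c : ℂ} (hc : ‖c‖ = 1) (y : ℂ) :
    MeasureTheory.IntegrableOn
      (fun t : ℝ => c * Complex.exp (-(c * t * y)) * Complex.exp (-(t : ℂ) ^ 3 / 3))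
      (Set.Ioi 0) := by
  refine MeasureTheory.Integrable.mono' (integrableOn_exp_mul_sub_cube ‖y‖)
    (by fun_prop) ?_
  refine (MeasureTheory.ae_restrict_iff' measurableSet_Ioi).2 (.of_forall fun t ht => ?_)
  have ht' : 0 < t := ht
  rw [norm_mul, norm_mul, hc, one_mul, Complex.norm_exp, Complex.norm_exp, ← Real.exp_add]
  refine Real.exp_le_exp.2 ?_
  have h1 : (-(c * t * y)).re ≤ ‖y‖ * t := by
    refine (Complex.re_le_norm _).trans ?_
    rw [norm_neg, norm_mul, norm_mul, hc, Complex.norm_real, Real.norm_of_nonneg ht'.le]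
    linarith [mul_comm t ‖y‖]
  have h2 : (-(t : ℂ) ^ 3 / 3).re = -t ^ 3 / 3 := by
    rw [show (-(t : ℂ) ^ 3 / 3) = ((-t ^ 3 / 3 : ℝ) : ℂ) by push_cast; ring, Complex.ofReal_re]
  rw [h2]
  linarith

lemma hasSum_ray {c : ℂ} (hc : ‖c‖ = 1) (y : ℂ) :
    HasSum (fun n : ℕ => c ^ (n + 1) * (-1) ^ n / (n.factorial : ℂ) * (cubicMoment n : ℂ) * y ^ n)
      (∫ t in Set.Ioi (0 : ℝ),
        c * Complex.exp (-(c * t * y)) * Complex.exp (-(t : ℂ) ^ 3 / 3)) := by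
  have key := MeasureTheory.hasSum_integral_of_dominated_convergence
    (μ := MeasureTheory.volume.restrict (Set.Ioi (0 : ℝ)))
    (F := fun (n : ℕ) (t : ℝ) => c * ((-(c * t * y)) ^ n / (n.factorial : ℂ)) *
      Complex.exp (-(t : ℂ) ^ 3 / 3))
    (f := fun t => c * Complex.exp (-(c * t * y)) * Complex.exp (-(t : ℂ) ^ 3 / 3))
    (fun n t => (‖y‖ * t) ^ n / (n.factorial : ℝ) * Real.exp (-t ^ 3 / 3))
    (fun n => by fun_prop) ?_ ?_ ?_ ?_
  · refine (hasSum_congr_terms fun n => ?_).1 key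
    symm
    have : (cubicMoment n : ℂ)
        = ∫ t in Set.Ioi (0 : ℝ), (t : ℂ) ^ n * Complex.exp (-(t : ℂ) ^ 3 / 3) := by
      unfold cubicMoment
      rw [← integral_complex_ofReal]
      push_cast
      rfl
    rw [this, mul_assoc, mul_comm _ (y ^ n), ← mul_assoc, ← MeasureTheory.integral_const_mul]
    refine MeasureTheory.integral_congr_ae (.of_forall fun t => ?_)
    simp only
    rw [show -(c * t * y) = c * (-1) * t * y by ring, mul_pow, mul_pow, mul_pow]
    ring
  · intro n
    refine (MeasureTheory.ae_restrict_iff' measurableSet_Ioi).2 (.of_forall fun t ht => ?_)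
    have ht' : 0 < t := ht
    have h2 : (-(t : ℂ) ^ 3 / 3).re = -t ^ 3 / 3 := by
      rw [show (-(t : ℂ) ^ 3 / 3) = ((-t ^ 3 / 3 : ℝ) : ℂ) by push_cast; ring, Complex.ofReal_re]
    rw [norm_mul, norm_mul, norm_div, norm_pow, norm_neg, norm_mul, norm_mul, hc, one_mul, one_mul,
      Complex.norm_real, Real.norm_of_nonneg ht'.le, Complex.norm_exp, h2, mul_comm t]
    simp
  · refine .of_forall fun t => ?_
    exact (Real.summable_pow_div_factorial _).mul_right _
  · refine (integrableOn_exp_mul_sub_cube ‖y‖).congr (.of_forall fun t => ?_)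
    simp only
    rw [tsum_mul_right, sub_eq_add_neg, Real.exp_add, Real.exp_eq_exp_ℝ,
      NormedSpace.exp_eq_tsum_div]
    congr 2
    ring
  · refine .of_forall fun t => ?_
    refine HasSum.mul_right _ (HasSum.mul_left _ ?_)
    rw [Complex.exp_eq_exp_ℂ]
    exact NormedSpace.expSeries_div_hasSum_exp _

lemma hasSum_Ai (y : ℂ) :
    HasSum (fun n : ℕ => airyCoeff n * y ^ n)
      (1 / (2 * π * Complex.I) *
        ((∫ t in Set.Ioi (0 : ℝ),
          ξc * Complex.exp (-(ξc * t * y)) * Complex.exp (-(t : ℂ) ^ 3 / 3)) -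
        ∫ t in Set.Ioi (0 : ℝ),
          ξbar * Complex.exp (-(ξbar * t * y)) * Complex.exp (-(t : ℂ) ^ 3 / 3))) := by
  have h := ((hasSum_ray norm_ξc y).sub (hasSum_ray norm_ξbar y)).mul_left (1 / (2 * π * Complex.I))
  refine (hasSum_congr_terms fun n => ?_).1 h
  rw [airyCoeff_eq]
  ring

lemma Ai_eq_rays (y : ℂ) :
    Ai y = 1 / (2 * π * Complex.I) *
        ((∫ t in Set.Ioi (0 : ℝ),
          ξc * Complex.exp (-(ξc * t * y)) * Complex.exp (-(t : ℂ) ^ 3 / 3)) -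
        ∫ t in Set.Ioi (0 : ℝ),
          ξbar * Complex.exp (-(ξbar * t * y)) * Complex.exp (-(t : ℂ) ^ 3 / 3)) :=
  (hasSum_Ai y).tsum_eq

lemma hasSum_Ai' (y : ℂ) : HasSum (fun n : ℕ => airyCoeff n * y ^ n) (Ai y) :=
  (hasSum_Ai y).summable.hasSum


lemma differentiable_Ai : Differentiable ℂ Ai := by
  have h : DifferentiableOn ℂ Ai Set.univ := by
    intro z _
    have hb : Summable fun n : ℕ => ‖airyCoeff n * ((‖z‖ + 1 : ℝ) : ℂ) ^ n‖ :=
      (hasSum_Ai' _).summable.norm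
    have hd : DifferentiableOn ℂ Ai (Metric.ball 0 (‖z‖ + 1)) := by
      refine Complex.differentiableOn_tsum_of_summable_norm hb (fun n => by fun_prop)
        Metric.isOpen_ball fun n w hw => ?_
      have hw' : ‖w‖ < ‖z‖ + 1 := by simpa using hw
      rw [norm_mul, norm_mul, norm_pow, norm_pow, Complex.norm_real,
        Real.norm_of_nonneg (by positivity)]
      gcongr
    exact (hd.differentiableAt (Metric.isOpen_ball.mem_nhds (by simp))).differentiableWithinAt
  exact differentiableOn_univ.1 h

lemma ωc_eq : ωc = -1 / 2 + (√3 / 2 : ℝ) * Complex.I := by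
  rw [ωc, show 2 * (π : ℂ) * Complex.I / 3 = ((2 * π / 3 : ℝ) : ℂ) * Complex.I by push_cast; ring,
    Complex.exp_mul_I, ← Complex.ofReal_cos, ← Complex.ofReal_sin,
    show 2 * π / 3 = π - π / 3 by ring, Real.cos_pi_sub, Real.sin_pi_sub, Real.cos_pi_div_three,
    Real.sin_pi_div_three]
  push_cast
  ring

lemma ωc_sq_add : ωc ^ 2 + ωc + 1 = 0 := by
  have h := sqrt_three_sq_complex
  have hI := Complex.I_sq
  rw [ωc_eq]
  push_cast
  linear_combination (((√3 : ℝ) : ℂ) ^ 2 / 4) * hI - 1 / 4 * h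

lemma ωc_cube : ωc ^ 3 = 1 := by
  linear_combination (ωc - 1) * ωc_sq_add

lemma norm_ωc : ‖ωc‖ = 1 := by
  have h : ‖ωc‖ ^ 3 = 1 := by rw [← norm_pow, ωc_cube]; simp
  exact (pow_eq_one_iff_of_nonneg (norm_nonneg _) (by norm_num)).1 h

lemma airyCoeff_three_mul_add_two (k : ℕ) : airyCoeff (3 * k + 2) = 0 := by
  induction k with
  | zero => simp [airyCoeff]
  | succ k ih => rw [show 3 * (k + 1) + 2 = (3 * k + 2) + 3 by ring, airyCoeff, ih, zero_div]

/-- The connection formula between the three rotated Airy functions. -/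
lemma Ai_rotation (y : ℂ) : Ai y + ωc * Ai (ωc * y) + ωc ^ 2 * Ai (ωc ^ 2 * y) = 0 := by
  have h := ((hasSum_Ai' y).add ((hasSum_Ai' (ωc * y)).mul_left ωc)).add
    ((hasSum_Ai' (ωc ^ 2 * y)).mul_left (ωc ^ 2))
  refine h.unique ((hasSum_congr_terms fun n => ?_).2 hasSum_zero)
  have h3 := ωc_cube
  have h2 := ωc_sq_add
  have hk : ∀ k : ℕ, ωc ^ (3 * k) = 1 := fun k => by rw [pow_mul, h3, one_pow]
  rw [mul_pow, mul_pow, ← pow_mul]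
  obtain ⟨k, hn | hn | hn⟩ : ∃ k, n = 3 * k ∨ n = 3 * k + 1 ∨ n = 3 * k + 2 :=
    ⟨n / 3, by omega⟩
  · have e2 : ωc ^ (2 * n) = 1 := by rw [hn, show 2 * (3 * k) = 3 * (2 * k) by ring, hk]
    have e1 : ωc ^ n = 1 := by rw [hn, hk]
    rw [e1, e2]
    linear_combination airyCoeff n * y ^ n * h2
  · have e2 : ωc ^ (2 * n) = ωc ^ 2 := by
      rw [hn, show 2 * (3 * k + 1) = 3 * (2 * k) + 2 by ring, pow_add, hk, one_mul]
    have e1 : ωc ^ n = ωc := by rw [hn, pow_add, hk, one_mul, pow_one]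
    rw [e1, e2]
    linear_combination airyCoeff n * y ^ n * (h2 + ωc * h3)
  · rw [hn, airyCoeff_three_mul_add_two]
    simp

lemma conj_airyCoeff (n : ℕ) : (starRingEnd ℂ) (airyCoeff n) = airyCoeff n := by
  induction n using Nat.strong_induction_on with
  | _ n ih =>
    match n with
    | 0 => rw [airyCoeff_zero, Complex.conj_ofReal]
    | 1 => rw [airyCoeff_one, Complex.conj_ofReal]
    | 2 => simp [airyCoeff]
    | (k + 3) =>
      rw [airyCoeff, map_div₀, ih k (by omega)]
      simp [Complex.conj_ofNat]

lemma conj_Ai (y : ℂ) : (starRingEnd ℂ) (Ai y) = Ai ((starRingEnd ℂ) y) := by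
  have h := (hasSum_Ai' y).map (starRingEnd ℂ) Complex.continuous_conj
  refine h.unique ((hasSum_congr_terms fun n => ?_).2 (hasSum_Ai' ((starRingEnd ℂ) y)))
  simp [conj_airyCoeff]

open Filter Topology MeasureTheory in
lemma tendsto_primitive_ray {P : ℂ → ℂ} {y c : ℂ} (hc : ‖c‖ = 1) (hc3 : c ^ 3 = -1)
    (hP : ∀ s, HasDerivAt P (Complex.exp (s ^ 3 / 3 - y * s)) s) :
    Tendsto (fun T : ℝ => P (c * T)) atTop
      (𝓝 (P 0 + ∫ t in Set.Ioi (0 : ℝ),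
        c * Complex.exp (-(c * t * y)) * Complex.exp (-(t : ℂ) ^ 3 / 3))) := by
  have h1 := intervalIntegral_tendsto_integral_Ioi 0 (integrableOn_ray hc y) tendsto_id
  refine (h1.const_add (P 0)).congr fun T => ?_
  have h2 : ∀ t : ℝ, HasDerivAt (fun t : ℝ => P (c * t))
      (c * Complex.exp (-(c * t * y)) * Complex.exp (-(t : ℂ) ^ 3 / 3)) t := by
    intro t
    have hd : HasDerivAt (fun t : ℝ => c * (t : ℂ)) c t := by
      simpa using (Complex.ofRealCLM.hasDerivAt (x := t)).const_mul c
    have := (hP (c * t)).comp t hd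
    refine this.congr_deriv ?_
    symm
    rw [mul_assoc, ← Complex.exp_add, mul_comm]
    congr 2
    rw [mul_pow, hc3]; ring
  have h3 := intervalIntegral.integral_eq_sub_of_hasDerivAt (a := 0) (b := T)
    (fun t _ => h2 t) (by apply Continuous.intervalIntegrable; fun_prop)
  simp only [id]
  rw [h3]
  simp

lemma norm_primitive_sub_le {P : ℂ → ℂ} {y : ℂ} {b Y : ℝ} (hb : 0 ≤ b) (hY : √3 * b ≤ |Y|)
    (hP : ∀ s, HasDerivAt P (Complex.exp (s ^ 3 / 3 - y * s)) s) :
    ‖P ((|Y| / √3 : ℝ) + Y * Complex.I) - P (b + Y * Complex.I)‖ ≤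
      Real.exp (-(8 / 9) * b * Y ^ 2 + 2 * ‖y‖ * |Y|) * |Y| := by
  have h3 : (0 : ℝ) < √3 := by positivity
  have h31 : (1 : ℝ) ≤ √3 := by rw [Real.one_le_sqrt]; norm_num
  have hbY : b ≤ |Y| / √3 := by rw [le_div_iff₀ h3]; linarith
  have hd : ∀ x : ℝ, HasDerivAt (fun x : ℝ => P (x + Y * Complex.I))
      (Complex.exp (((x : ℂ) + Y * Complex.I) ^ 3 / 3 - y * (x + Y * Complex.I))) x := by
    intro x
    have hd : HasDerivAt (fun t : ℝ => (t : ℂ) + Y * Complex.I) 1 x := by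
      simpa using (Complex.ofRealCLM.hasDerivAt (x := x)).add_const (Y * Complex.I)
    have := (hP (x + Y * Complex.I)).comp x hd
    exact this.congr_deriv (mul_one _)
  have key := norm_image_sub_le_of_norm_deriv_le_segment' (a := b) (b := |Y| / √3)
    (C := Real.exp (-(8 / 9) * b * Y ^ 2 + 2 * ‖y‖ * |Y|))
    (fun x _ => (hd x).hasDerivWithinAt) ?_ (|Y| / √3) ⟨hbY, le_rfl⟩
  · refine key.trans ?_
    gcongr
    have : |Y| / √3 ≤ |Y| := div_le_self (abs_nonneg _) h31
    linarith
  · intro x hx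
    have hx1 : b ≤ x := hx.1
    have hx2 : x ≤ |Y| := hx.2.le.trans (div_le_self (abs_nonneg _) h31)
    have hx3 : 3 * x ^ 2 ≤ Y ^ 2 := by
      have h := hx.2.le
      rw [le_div_iff₀ h3] at h
      have := pow_le_pow_left₀ (by nlinarith) h 2
      rw [mul_pow, Real.sq_sqrt (by norm_num), sq_abs] at this
      linarith
    rw [Complex.norm_exp]
    refine Real.exp_le_exp.2 ?_
    have e1 : (((x : ℂ) + Y * Complex.I) ^ 3 / 3).re = x ^ 3 / 3 - x * Y ^ 2 := by
      rw [show ((x : ℂ) + Y * Complex.I) ^ 3 / 3 = ((x ^ 3 / 3 - x * Y ^ 2 : ℝ) : ℂ) +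
        ((x ^ 2 * Y - Y ^ 3 / 3 : ℝ) : ℂ) * Complex.I by
          have hI := Complex.I_sq
          push_cast
          linear_combination ((x : ℂ) * Y ^ 2 + Y ^ 3 / 3 * Complex.I) * hI]
      rw [Complex.add_re, Complex.re_ofReal_mul, Complex.ofReal_re, Complex.I_re, mul_zero,
        add_zero]
    have e2 : -(y * (x + Y * Complex.I)).re ≤ 2 * ‖y‖ * |Y| := by
      have := Complex.abs_re_le_norm (y * (x + Y * Complex.I))
      have h4 : ‖(x : ℂ) + Y * Complex.I‖ ≤ 2 * |Y| := by
        refine (norm_add_le _ _).trans ?_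
        simp only [norm_mul, Complex.norm_real, Complex.norm_I, mul_one, Real.norm_eq_abs]
        rw [abs_of_nonneg (hb.trans hx1)]; linarith
      rw [norm_mul] at this
      have h5 := mul_le_mul_of_nonneg_left h4 (norm_nonneg y)
      have := neg_abs_le (y * (x + Y * Complex.I)).re
      linarith
    rw [Complex.sub_re, e1]
    have : x ^ 3 / 3 - x * Y ^ 2 ≤ -(8 / 9) * b * Y ^ 2 := by
      nlinarith [mul_le_mul_of_nonneg_right hx1 (sq_nonneg Y),
        mul_le_mul_of_nonneg_left hx3 (hb.trans hx1)]
    linarith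

open Filter Topology in
lemma tendsto_exp_neg_sq_mul {b B : ℝ} (hb : 0 < b) :
    Tendsto (fun Y : ℝ => Real.exp (-(8 / 9) * b * Y ^ 2 + 2 * B * |Y|) * |Y|) atTop (𝓝 0) := by
  have h0 : Tendsto (fun Y : ℝ => Y ^ 1 * Real.exp (-Y)) atTop (𝓝 0) :=
    Real.tendsto_pow_mul_exp_neg_atTop_nhds_zero 1
  refine squeeze_zero' (.of_forall fun Y => by positivity) ?_ h0
  filter_upwards [eventually_ge_atTop 1, eventually_ge_atTop ((2 * B + 1) / ((8 / 9) * b))]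
    with Y h1 h2
  rw [abs_of_nonneg (by linarith), mul_comm, pow_one]
  rw [div_le_iff₀ (by positivity)] at h2
  gcongr
  nlinarith

open Filter Topology MeasureTheory in
lemma Ai_sq_eq_integral {q : ℂ} (hq : 0 < q.re) :
    Ai (q ^ 2) = 1 / (2 * π) * ∫ t : ℝ,
      Complex.exp (-2 * q ^ 3 / 3) * Complex.exp (-q * t ^ 2 - Complex.I * t ^ 3 / 3) := by
  have hgd : Differentiable ℂ fun s : ℂ => Complex.exp (s ^ 3 / 3 - q ^ 2 * s) := by fun_prop
  obtain ⟨P, hP⟩ := hgd.isExactOn_univ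
  replace hP : ∀ s, HasDerivAt P (Complex.exp (s ^ 3 / 3 - q ^ 2 * s)) s := fun s => hP s trivial
  have h3 : (0 : ℝ) < √3 := by positivity
  have hs3 : ((√3 : ℝ) : ℂ) ≠ 0 := by exact_mod_cast h3.ne'
  have hmul : (√3 : ℝ) * √3 = 3 := Real.mul_self_sqrt (by norm_num)
  -- the vertical line
  have hintg : Integrable (fun t : ℝ => Complex.exp (-2 * q ^ 3 / 3) *
      Complex.exp (-q * t ^ 2 - Complex.I * t ^ 3 / 3)) := by
    refine Integrable.const_mul ?_ _
    refine (integrable_cexp_neg_mul_sq hq).norm.mono' (by fun_prop) (.of_forall fun t => ?_)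
    rw [Complex.norm_exp, Complex.norm_exp]
    refine le_of_eq ?_
    congr 1
    rw [show Complex.I * (t : ℂ) ^ 3 / 3 = Complex.I * ((t ^ 3 / 3 : ℝ) : ℂ) by push_cast; ring]
    simp only [Complex.sub_re, Complex.mul_re, Complex.I_re, Complex.I_im, Complex.ofReal_im,
      Complex.ofReal_re]
    ring
  have hvert : ∀ t : ℝ, HasDerivAt (fun t : ℝ => P (q + t * Complex.I))
      (Complex.I * (Complex.exp (-2 * q ^ 3 / 3) *
        Complex.exp (-q * t ^ 2 - Complex.I * t ^ 3 / 3))) t := by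
    intro t
    have hd : HasDerivAt (fun t : ℝ => q + (t : ℂ) * Complex.I) Complex.I t := by
      simpa using ((Complex.ofRealCLM.hasDerivAt (x := t)).mul_const Complex.I).const_add q
    have := (hP (q + t * Complex.I)).comp t hd
    refine this.congr_deriv ?_
    symm
    rw [mul_comm, ← Complex.exp_add]
    congr 2
    have hI := Complex.I_sq
    linear_combination (-q * t ^ 2 - t ^ 3 / 3 * Complex.I) * hI
  have hF : Tendsto (fun T : ℝ => P (q + T * Complex.I) - P (q + ((-T : ℝ) : ℂ) * Complex.I)) atTop
      (𝓝 (Complex.I * ∫ t : ℝ, Complex.exp (-2 * q ^ 3 / 3) *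
        Complex.exp (-q * t ^ 2 - Complex.I * t ^ 3 / 3))) := by
    have h := (intervalIntegral_tendsto_integral hintg tendsto_neg_atTop_atBot tendsto_id).const_mul
      Complex.I
    refine h.congr fun T => ?_
    rw [← intervalIntegral.integral_const_mul,
      intervalIntegral.integral_eq_sub_of_hasDerivAt (fun t _ => hvert t)
        (by apply Continuous.intervalIntegrable; fun_prop)]
    rfl
  have hup : Tendsto (fun T : ℝ => T + q.im) atTop atTop :=
    tendsto_atTop_add_const_right _ _ tendsto_id
  have hdn : Tendsto (fun T : ℝ => T - q.im) atTop atTop :=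
    tendsto_atTop_add_const_right _ _ tendsto_id
  have hG := ((tendsto_primitive_ray norm_ξc ξc_cube hP).comp
    (hup.const_mul_atTop (show 0 < 2 / √3 by positivity))).sub
    ((tendsto_primitive_ray norm_ξbar ξbar_cube hP).comp
    (hdn.const_mul_atTop (show 0 < 2 / √3 by positivity)))
  have hq' : q = q.re + q.im * Complex.I := (Complex.re_add_im q).symm
  have hdiff1 : Tendsto (fun T : ℝ => P (ξc * ((2 / √3 * (T + q.im) : ℝ) : ℂ)) -
      P (q + T * Complex.I)) atTop (𝓝 0) := by
    rw [tendsto_zero_iff_norm_tendsto_zero]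
    refine squeeze_zero' (.of_forall fun T => norm_nonneg _) ?_
      ((tendsto_exp_neg_sq_mul (B := ‖q ^ 2‖) hq).comp hup)
    filter_upwards [hup.eventually_ge_atTop (√3 * q.re)] with T hT
    have hpos : 0 ≤ T + q.im := le_trans (by positivity) hT
    have := norm_primitive_sub_le hq.le (Y := T + q.im) (by rwa [abs_of_nonneg hpos]) hP
    refine le_of_eq_of_le ?_ this
    congr 3
    · rw [abs_of_nonneg hpos, ξc]
      push_cast
      field_simp
    · conv_lhs => rw [hq']
      push_cast; ring
  have hdiff2 : Tendsto (fun T : ℝ => P (ξbar * ((2 / √3 * (T - q.im) : ℝ) : ℂ)) -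
      P (q + ((-T : ℝ) : ℂ) * Complex.I)) atTop (𝓝 0) := by
    rw [tendsto_zero_iff_norm_tendsto_zero]
    refine squeeze_zero' (.of_forall fun T => norm_nonneg _) ?_
      ((tendsto_exp_neg_sq_mul (B := ‖q ^ 2‖) hq).comp hdn)
    filter_upwards [hdn.eventually_ge_atTop (√3 * q.re)] with T hT
    have hpos : 0 ≤ T - q.im := le_trans (by positivity) hT
    have := norm_primitive_sub_le hq.le (Y := -(T - q.im)) (by rwa [abs_neg, abs_of_nonneg hpos]) hP
    rw [abs_neg, neg_sq] at this
    refine le_of_eq_of_le ?_ this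
    congr 3
    · rw [abs_of_nonneg hpos, ξbar]
      push_cast
      field_simp
      ring
    · conv_lhs => rw [hq']
      push_cast; ring
  have hlim := hG.sub (hdiff1.sub hdiff2)
  have huniq := tendsto_nhds_unique (hlim.congr fun T => by simp only [Function.comp]; ring) hF
  rw [Ai_eq_rays]
  have hpi : (π : ℂ) ≠ 0 := by exact_mod_cast Real.pi_ne_zero
  have hI := Complex.I_ne_zero
  rw [add_sub_add_left_eq_sub, sub_zero, sub_zero] at huniq
  rw [huniq]
  field_simp

lemma norm_exp_I_sub_one_sub_le (x : ℝ) :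
    ‖Complex.exp (-Complex.I * x) - 1 + Complex.I * x‖ ≤ 3 * x ^ 2 := by
  have hn : ‖-Complex.I * (x : ℂ)‖ = |x| := by simp
  by_cases h : |x| ≤ 1
  · have := Complex.norm_exp_sub_one_sub_id_le (x := -Complex.I * x) (by rw [hn]; exact h)
    rw [hn, sq_abs] at this
    rw [show Complex.exp (-Complex.I * x) - 1 + Complex.I * x
      = Complex.exp (-Complex.I * x) - 1 - -Complex.I * x by ring]
    nlinarith [sq_nonneg x]
  · push Not at h
    have h1 : ‖Complex.exp (-Complex.I * x)‖ = 1 := by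
      rw [Complex.norm_exp]; simp
    have h2 : ‖Complex.exp (-Complex.I * x) - 1 + Complex.I * x‖ ≤ 1 + 1 + |x| := by
      refine (norm_add_le _ _).trans (add_le_add ((norm_sub_le _ _).trans ?_) ?_)
      · rw [h1]; simp
      · simp
    nlinarith [sq_abs x]

lemma integrable_pow_six_mul_exp {b : ℝ} (hb : 0 < b) :
    MeasureTheory.Integrable fun t : ℝ => t ^ 6 * Real.exp (-b * t ^ 2) := by
  have := integrable_rpow_mul_exp_neg_mul_sq hb (s := 6) (by norm_num)
  refine this.congr (.of_forall fun t => ?_)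
  simp only
  rw [← Real.rpow_natCast t 6]; norm_num

lemma integrable_pow_three_mul_exp {b : ℝ} (hb : 0 < b) :
    MeasureTheory.Integrable fun t : ℝ => t ^ 3 * Real.exp (-b * t ^ 2) := by
  have := integrable_rpow_mul_exp_neg_mul_sq hb (s := 3) (by norm_num)
  refine this.congr (.of_forall fun t => ?_)
  simp only
  rw [← Real.rpow_natCast t 3]; norm_num

lemma integral_pow_six_mul_exp {a : ℝ} (ha : 0 < a) :
    ∫ t : ℝ, t ^ 6 * Real.exp (-a ^ 2 * t ^ 2) =
      (∫ t : ℝ, t ^ 6 * Real.exp (-t ^ 2)) / a ^ 7 := by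
  have h := MeasureTheory.Measure.integral_comp_mul_left
    (fun t : ℝ => t ^ 6 * Real.exp (-t ^ 2)) a
  rw [abs_of_pos (inv_pos.2 ha), smul_eq_mul] at h
  rw [show (∫ t : ℝ, t ^ 6 * Real.exp (-t ^ 2)) =
    a * ∫ t : ℝ, (a * t) ^ 6 * Real.exp (-(a * t) ^ 2) by rw [h]; field_simp,
    ← MeasureTheory.integral_const_mul, ← MeasureTheory.integral_div]
  refine MeasureTheory.integral_congr_ae (.of_forall fun t => ?_)
  simp only
  rw [show -(a * t) ^ 2 = -a ^ 2 * t ^ 2 by ring]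
  field_simp

lemma integral_gaussian_sq {σ : ℂ} (hσ : 0 < σ.re) (hq : 0 < (σ ^ 2).re) :
    ∫ t : ℝ, Complex.exp (-σ ^ 2 * t ^ 2) = (√π : ℝ) / σ := by
  have h0 : σ ≠ 0 := by rintro rfl; simp at hσ
  rw [integral_gaussian_complex hq]
  have h : 0 < ((√π : ℝ) / σ : ℂ).re := by
    rw [div_eq_mul_inv, Complex.re_ofReal_mul, Complex.inv_re]
    have : 0 < Complex.normSq σ := Complex.normSq_pos.2 h0
    positivity
  have h2 := Complex.sq_cpow_two_inv h
  rw [← h2]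
  congr 1
  · rw [div_pow,
      ← Complex.ofReal_pow, Real.sq_sqrt pi_pos.le]
  · norm_num

/-- The leading asymptotics of the Airy function, in terms of a fourth root of the argument. -/
lemma exists_Ai_asymptotic : ∃ C : ℝ, 0 < C ∧ ∀ σ : ℂ, 0 < σ.re → ‖σ‖ ^ 2 / 4 ≤ (σ ^ 2).re →
    ‖Ai (σ ^ 4) * (2 * (√π : ℝ) * σ * Complex.exp (2 * σ ^ 6 / 3)) - 1‖ ≤ C / ‖σ‖ ^ 6 := by
  set M : ℝ := ∫ t : ℝ, t ^ 6 * Real.exp (-t ^ 2) with hM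
  have hM0 : 0 ≤ M := MeasureTheory.integral_nonneg fun t => by positivity
  refine ⟨128 * (M + 1), by positivity, fun σ hσ hq => ?_⟩
  have h0 : σ ≠ 0 := by rintro rfl; simp at hσ
  have hn : 0 < ‖σ‖ := norm_pos_iff.2 h0
  have hq0 : 0 < (σ ^ 2).re := lt_of_lt_of_le (by positivity) hq
  have hsp : ((√π : ℝ) : ℂ) ≠ 0 := by
    exact_mod_cast (Real.sqrt_pos.2 pi_pos).ne'
  have hsp2 : ((√π : ℝ) : ℂ) ^ 2 = π := by
    rw [← Complex.ofReal_pow, Real.sq_sqrt pi_pos.le]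
  have hnorm : ∀ t : ℝ, ‖Complex.exp (-σ ^ 2 * t ^ 2)‖ = Real.exp (-(σ ^ 2).re * t ^ 2) := by
    intro t
    rw [← norm_cexp_neg_mul_sq]
  have hi1 : MeasureTheory.Integrable fun t : ℝ => Complex.exp (-σ ^ 2 * t ^ 2) :=
    integrable_cexp_neg_mul_sq hq0
  have hi3 : MeasureTheory.Integrable
      fun t : ℝ => Complex.I * t ^ 3 / 3 * Complex.exp (-σ ^ 2 * t ^ 2) := by
    refine (integrable_pow_three_mul_exp hq0).norm.mono' (by fun_prop) (.of_forall fun t => ?_)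
    rw [norm_mul, hnorm, norm_mul, Real.norm_of_nonneg (Real.exp_pos _).le]
    gcongr
    rw [norm_div, norm_mul, Complex.norm_I, one_mul, ← Complex.ofReal_pow, Complex.norm_real]
    norm_num
    exact div_le_self (by positivity) (by norm_num)
  have hodd : ∫ t : ℝ, Complex.I * t ^ 3 / 3 * Complex.exp (-σ ^ 2 * t ^ 2) = 0 := by
    have h := MeasureTheory.integral_neg_eq_self
      (fun t : ℝ => Complex.I * t ^ 3 / 3 * Complex.exp (-σ ^ 2 * t ^ 2)) MeasureTheory.volume
    have h' : ∫ t : ℝ, Complex.I * ((-t : ℝ) : ℂ) ^ 3 / 3 * Complex.exp (-σ ^ 2 * ((-t : ℝ) : ℂ) ^ 2)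
        = -∫ t : ℝ, Complex.I * t ^ 3 / 3 * Complex.exp (-σ ^ 2 * t ^ 2) := by
      rw [← MeasureTheory.integral_neg]
      refine MeasureTheory.integral_congr_ae (.of_forall fun t => ?_)
      simp only
      push_cast
      rw [neg_sq]
      ring
    rw [h'] at h
    exact self_eq_neg.1 h.symm
  have hi4 : MeasureTheory.Integrable
      fun t : ℝ => Complex.exp (-σ ^ 2 * t ^ 2 - Complex.I * t ^ 3 / 3) := by
    refine hi1.norm.mono' (by fun_prop) (.of_forall fun t => le_of_eq ?_)
    rw [sub_eq_add_neg, Complex.exp_add, norm_mul]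
    rw [show -(Complex.I * (t : ℂ) ^ 3 / 3) = ((-t ^ 3 / 3 : ℝ) : ℂ) * Complex.I by push_cast; ring,
      Complex.norm_exp_ofReal_mul_I, mul_one]
  have hsplit : (∫ t : ℝ, Complex.exp (-σ ^ 2 * t ^ 2 - Complex.I * t ^ 3 / 3)) - (√π : ℝ) / σ =
      ∫ t : ℝ, Complex.exp (-σ ^ 2 * t ^ 2) *
        (Complex.exp (-Complex.I * ((t ^ 3 / 3 : ℝ) : ℂ)) - 1 +
          Complex.I * ((t ^ 3 / 3 : ℝ) : ℂ)) := by
    rw [← integral_gaussian_sq hσ hq0, ← MeasureTheory.integral_sub hi4 hi1, ← add_zero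
      (∫ t : ℝ, _), ← hodd, ← MeasureTheory.integral_add (f := fun t : ℝ =>
        Complex.exp (-σ ^ 2 * t ^ 2 - Complex.I * t ^ 3 / 3) - Complex.exp (-σ ^ 2 * t ^ 2))
        (hi4.sub hi1) hi3]
    refine MeasureTheory.integral_congr_ae (.of_forall fun t => ?_)
    simp only
    rw [sub_eq_add_neg (-σ ^ 2 * (t : ℂ) ^ 2), Complex.exp_add,
      show -Complex.I * ((t ^ 3 / 3 : ℝ) : ℂ) = -(Complex.I * t ^ 3 / 3) by push_cast; ring]
    push_cast
    ring
  have hbound : ‖(∫ t : ℝ, Complex.exp (-σ ^ 2 * t ^ 2 - Complex.I * t ^ 3 / 3)) - (√π : ℝ) / σ‖ ≤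
      M / (‖σ‖ / 2) ^ 7 := by
    rw [hsplit, hM, ← integral_pow_six_mul_exp (by positivity)]
    refine MeasureTheory.norm_integral_le_of_norm_le
      (integrable_pow_six_mul_exp (by positivity)) (.of_forall fun t => ?_)
    rw [norm_mul, hnorm, mul_comm]
    have h1 := norm_exp_I_sub_one_sub_le (t ^ 3 / 3)
    gcongr
    · refine h1.trans ?_
      nlinarith [sq_nonneg (t ^ 3)]
    · linarith [show (‖σ‖ / 2) ^ 2 = ‖σ‖ ^ 2 / 4 by ring]
  have hAi : Ai (σ ^ 4) * (2 * (√π : ℝ) * σ * Complex.exp (2 * σ ^ 6 / 3)) - 1 =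
      σ / (√π : ℝ) * ((∫ t : ℝ, Complex.exp (-σ ^ 2 * t ^ 2 - Complex.I * t ^ 3 / 3)) -
        (√π : ℝ) / σ) := by
    rw [show σ ^ 4 = (σ ^ 2) ^ 2 by ring, Ai_sq_eq_integral hq0, MeasureTheory.integral_const_mul]
    have he : Complex.exp (-(2 * σ ^ 6 / 3)) * Complex.exp (2 * σ ^ 6 / 3) = 1 := by
      rw [← Complex.exp_add, ← Complex.exp_zero]; congr 1; ring
    have hpi : (π : ℂ) ≠ 0 := by exact_mod_cast Real.pi_ne_zero
    rw [show -2 * (σ ^ 2) ^ 3 / 3 = -(2 * σ ^ 6 / 3) by ring]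
    set J := ∫ t : ℝ, Complex.exp (-σ ^ 2 * t ^ 2 - Complex.I * t ^ 3 / 3)
    rw [← hsp2]
    field_simp
    linear_combination (J * σ) * he
  have hsp1 : 1 ≤ √π := by rw [Real.one_le_sqrt]; linarith [Real.pi_gt_three]
  rw [hAi, norm_mul, norm_div, Complex.norm_real, Real.norm_of_nonneg (Real.sqrt_nonneg _)]
  calc ‖σ‖ / √π * _ ≤ ‖σ‖ * (M / (‖σ‖ / 2) ^ 7) := by
        gcongr
        exact div_le_self hn.le hsp1
    _ = 128 * M / ‖σ‖ ^ 6 := by field_simp; ring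
    _ ≤ 128 * (M + 1) / ‖σ‖ ^ 6 := by gcongr; linarith

lemma I_mul_ωc_sq : Complex.I * ωc ^ 2 = Complex.exp (-(π : ℂ) * Complex.I / 6) := by
  rw [ωc, ← Complex.exp_nat_mul]
  nth_rw 1 [← Complex.exp_pi_div_two_mul_I]
  rw [← Complex.exp_add, ← Complex.exp_periodic (-(π : ℂ) * Complex.I / 6)]
  congr 1
  push_cast
  ring

lemma Wf_eq (f : ℝ) : Wf f = ((f ^ ((1 : ℝ) / 3) : ℝ) : ℂ) * (Complex.I * ωc ^ 2) / (2 * π) := by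
  rw [Wf, I_mul_ωc_sq]

/-- The unit `e^{-iπ/12}`. -/
noncomputable def twelfthRoot : ℂ := Complex.exp (-(π : ℂ) * Complex.I / 12)

lemma twelfthRoot_sq : twelfthRoot ^ 2 = Complex.I * ωc ^ 2 := by
  rw [I_mul_ωc_sq, twelfthRoot, ← Complex.exp_nat_mul]
  congr 1
  push_cast
  ring

lemma twelfthRoot_eq :
    twelfthRoot = (Real.cos (π / 12) : ℂ) - (Real.sin (π / 12) : ℂ) * Complex.I := by
  rw [twelfthRoot, show -(π : ℂ) * Complex.I / 12 = ((-(π / 12) : ℝ) : ℂ) * Complex.I by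
    push_cast; ring, Complex.exp_mul_I, ← Complex.ofReal_cos, ← Complex.ofReal_sin, Real.cos_neg,
    Real.sin_neg]
  push_cast
  ring

lemma norm_twelfthRoot : ‖twelfthRoot‖ = 1 := by
  rw [twelfthRoot, show -(π : ℂ) * Complex.I / 12 = ((-(π / 12) : ℝ) : ℂ) * Complex.I by
    push_cast; ring, Complex.norm_exp_ofReal_mul_I]

lemma twelfthRoot_ne_zero : twelfthRoot ≠ 0 := Complex.exp_ne_zero _

lemma exists_sqrt_quadrant {w : ℂ} (hw : 0 ≤ w.im) : ∃ s : ℂ, s ^ 2 = w ∧ 0 ≤ s.re ∧ 0 ≤ s.im := by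
  obtain ⟨s, hs⟩ := Complex.isSquare w
  have him : w.im = 2 * (s.re * s.im) := by rw [hs, Complex.mul_im]; ring
  have hp : 0 ≤ s.re * s.im := by linarith
  rcases mul_nonneg_iff.1 hp with h | h
  · exact ⟨s, by rw [hs]; ring, h.1, h.2⟩
  · exact ⟨-s, by rw [hs]; ring, by simpa using h.1, by simpa using h.2⟩

/-- The square root in the first octant of a point of the first quadrant. -/
lemma exists_sqrt_octant {k : ℂ} (hr : 0 ≤ k.re) (hi : 0 ≤ k.im) :
    ∃ l : ℂ, l ^ 2 = k ∧ 0 ≤ l.re ∧ 0 ≤ l.im ∧ l.im ≤ l.re := by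
  obtain ⟨l, hl, h1, h2⟩ := exists_sqrt_quadrant hi
  refine ⟨l, hl, h1, h2, ?_⟩
  have : k.re = l.re ^ 2 - l.im ^ 2 := by rw [← hl, sq, Complex.mul_re]; ring
  exact abs_le_of_sq_le_sq' (by linarith) h1 |>.2

lemma cos_twelfth_gt_sin : Real.sin (π / 12) < Real.cos (π / 12) := by
  rw [← Real.cos_pi_div_two_sub]
  exact Real.cos_lt_cos_of_nonneg_of_le_pi (by positivity) (by linarith [pi_pos])
    (by linarith [pi_pos])

lemma norm_one_add_mul_sub_one_le {x y : ℂ} {B ε : ℝ} (hε1 : ε ≤ 1) (hB : 0 ≤ B)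
    (hx : ‖x - 1‖ ≤ B * ε) (hy : ‖y - 1‖ ≤ B * ε) : ‖x * y - 1‖ ≤ (B ^ 2 + 2 * B) * ε := by
  have hBε : 0 ≤ B * ε := (norm_nonneg _).trans hx
  rw [show x * y - 1 = (x - 1) * (y - 1) + (x - 1) + (y - 1) by ring]
  have h1 : ‖(x - 1) * (y - 1)‖ ≤ B * ε * (B * ε) := by
    rw [norm_mul]; gcongr
  have h2 : B * ε * (B * ε) ≤ B ^ 2 * ε := by
    have := mul_le_mul_of_nonneg_left (mul_le_mul_of_nonneg_left hε1 hB) hBε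
    nlinarith
  have := norm_add₃_le (a := (x - 1) * (y - 1)) (b := x - 1) (c := y - 1)
  nlinarith

lemma rpow_sixth_pow {f : ℝ} (hf : 0 < f) :
    (f ^ (-(1 : ℝ) / 6)) ^ 4 = f ^ (-(2 : ℝ) / 3) ∧ (f ^ (-(1 : ℝ) / 6)) ^ 6 = f⁻¹ ∧
      f ^ ((1 : ℝ) / 3) * (f ^ (-(1 : ℝ) / 6)) ^ 2 = 1 := by
  refine ⟨?_, ?_, ?_⟩
  · rw [← Real.rpow_natCast, ← Real.rpow_mul hf.le]; norm_num
  · rw [← Real.rpow_natCast, ← Real.rpow_mul hf.le, ← Real.rpow_neg_one]; norm_num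
  · rw [← Real.rpow_natCast, ← Real.rpow_mul hf.le, ← Real.rpow_add hf]; norm_num

/-- The phase `e^{4ik³/(3f)}`. -/
noncomputable def airyPhase (f : ℝ) (k : ℂ) : ℂ := Complex.exp (4 * Complex.I * k ^ 3 / (3 * f))

/-- The Airy factor `Ai(-ζf^{-2/3})`. -/
noncomputable def airyU (f : ℝ) (ζ : ℂ) : ℂ := Ai (-ζ * ((f ^ (-(2 : ℝ) / 3) : ℝ) : ℂ))

/-- The Airy factor `Ai(-ωζf^{-2/3})`. -/
noncomputable def airyV (f : ℝ) (ζ : ℂ) : ℂ := Ai (-ωc * ζ * ((f ^ (-(2 : ℝ) / 3) : ℝ) : ℂ))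

lemma re_add_im_ge_norm {k : ℂ} (hr : 0 ≤ k.re) (hi : 0 ≤ k.im) : ‖k‖ ≤ k.re + k.im := by
  have := Complex.norm_le_abs_re_add_abs_im k
  rwa [abs_of_nonneg hr, abs_of_nonneg hi] at this

set_option maxHeartbeats 1000000 in
/-- Asymptotics of the products of the Airy factors, for `k` in the first quadrant. The quantity
`μ` measures the contribution of the Stokes phenomenon near the positive real axis. -/
lemma exists_airy_products : ∃ B : ℝ, 1 ≤ B ∧ ∀ (f : ℝ) (k : ℂ), 0 < f → 0 ≤ k.re → 0 ≤ k.im →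
    f ≤ ‖k‖ ^ 3 → ∃ μ : ℝ, 0 ≤ μ ∧ μ ≤ ‖airyPhase f k‖ ∧ (‖k‖ / 4 ≤ k.im → μ = 0) ∧
      ‖airyU f (k ^ 2) * airyV f (k ^ 2) / Wf f * (2 * k) - Complex.I‖ ≤ B * (f / ‖k‖ ^ 3 + μ) ∧
      ‖airyU f (k ^ 2) ^ 2 / Wf f * (2 * k) * airyPhase f k - ωc‖ ≤
        B * (f / ‖k‖ ^ 3 + μ * (1 + μ)) ∧
      ‖airyV f (k ^ 2) ^ 2 / Wf f * (2 * k) + ωc ^ 2 * airyPhase f k‖ ≤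
        B * (f / ‖k‖ ^ 3) * ‖airyPhase f k‖ := by
  obtain ⟨C, hC, hasymp⟩ := exists_Ai_asymptotic
  refine ⟨8 * (C ^ 2 + 2 * C + 1), by nlinarith, fun f k hf hr hi hfk => ?_⟩
  have hk0 : 0 < ‖k‖ := by
    by_contra h
    have : ‖k‖ = 0 := le_antisymm (not_lt.1 h) (norm_nonneg _)
    rw [this] at hfk; norm_num at hfk; linarith
  have hkne : k ≠ 0 := norm_pos_iff.1 hk0
  obtain ⟨l, hl, hlr, hli, hlo⟩ := exists_sqrt_octant hr hi
  have hl0 : l ≠ 0 := by rintro rfl; apply hkne; rw [← hl]; simp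
  have hlr0 : 0 < l.re := by
    rcases hlr.lt_or_eq with h | h
    · exact h
    · exact absurd (Complex.ext h.symm (le_antisymm (by simpa [← h] using hlo) hli)) hl0
  obtain ⟨hs4, hs6, hs2⟩ := rpow_sixth_pow hf
  set s : ℝ := f ^ (-(1 : ℝ) / 6) with hs
  set pw : ℝ := f ^ ((1 : ℝ) / 3) with hpw
  have hs0 : 0 < s := Real.rpow_pos_of_pos hf _
  have hpw0 : 0 < pw := Real.rpow_pos_of_pos hf _
  have hsC : (s : ℂ) ≠ 0 := by exact_mod_cast hs0.ne'
  have hpwC : (pw : ℂ) ≠ 0 := by exact_mod_cast hpw0.ne'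
  have hfC : (f : ℂ) ≠ 0 := by exact_mod_cast hf.ne'
  have hs4C : ((f ^ (-(2 : ℝ) / 3) : ℝ) : ℂ) = (s : ℂ) ^ 4 := by rw [← hs4]; push_cast; ring
  have hs6C : (s : ℂ) ^ 6 = 1 / f := by rw [← Complex.ofReal_pow, hs6]; push_cast; simp
  have hs2C : (pw : ℂ) * (s : ℂ) ^ 2 = 1 := by exact_mod_cast hs2
  have hI := Complex.I_sq
  have hω3 := ωc_cube
  have hω2 := ωc_sq_add
  have hωne : ωc ≠ 0 := by intro h; rw [h] at hω3; norm_num at hω3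
  set t := twelfthRoot with ht
  have ht2 : t ^ 2 = Complex.I * ωc ^ 2 := twelfthRoot_sq
  have htn : ‖t‖ = 1 := norm_twelfthRoot
  have htne : t ≠ 0 := twelfthRoot_ne_zero
  have hnl : ‖l‖ ^ 2 = ‖k‖ := by rw [← norm_pow, hl]
  have hpi : (π : ℂ) ≠ 0 := by exact_mod_cast Real.pi_ne_zero
  have hsp2 : ((√π : ℝ) : ℂ) ^ 2 = π := by
    rw [← Complex.ofReal_pow, Real.sq_sqrt pi_pos.le]
  have h3 : (√3 : ℝ) ^ 2 = 3 := Real.sq_sqrt (by norm_num)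
  have h3' : (1.7 : ℝ) ≤ √3 := Real.le_sqrt_of_sq_le (by norm_num)
  have hcos : 0 < Real.cos (π / 12) :=
    Real.cos_pos_of_mem_Ioo ⟨by linarith [pi_pos], by linarith [pi_pos]⟩
  have hsin : 0 < Real.sin (π / 12) :=
    Real.sin_pos_of_pos_of_lt_pi (by positivity) (by linarith [pi_pos])
  have hcs := cos_twelfth_gt_sin
  set ε := f / ‖k‖ ^ 3 with hε
  have hε0 : 0 ≤ ε := by positivity
  have hε1 : ε ≤ 1 := by rw [hε, div_le_one (by positivity)]; exact hfk
  -- general form of the asymptotics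
  have hgen : ∀ c : ℂ, ‖c‖ = 1 → 0 < (c * l).re → ‖k‖ / 4 ≤ (c ^ 2 * k).re →
      ‖Ai ((c ^ 2) ^ 2 * k ^ 2 * s ^ 4) *
        (2 * (√π : ℝ) * (c * l * s) * Complex.exp (2 * ((c ^ 2) ^ 3 * k ^ 3 / f) / 3)) - 1‖ ≤
        C * ε := by
    intro c hc h1 h2
    have hσn : ‖c * l * s‖ ^ 2 = ‖k‖ * s ^ 2 := by
      rw [norm_mul, norm_mul, hc, one_mul, mul_pow, hnl, Complex.norm_real,
        Real.norm_of_nonneg hs0.le]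
    have h := hasymp (c * l * s) (by
      rw [mul_comm, Complex.re_ofReal_mul]; positivity) (by
      rw [hσn, show (c * l * s) ^ 2 = ((s ^ 2 : ℝ) : ℂ) * (c ^ 2 * k) by rw [← hl]; push_cast; ring,
        Complex.re_ofReal_mul]
      nlinarith [sq_nonneg s])
    rw [show ‖c * l * s‖ ^ 6 = (‖c * l * s‖ ^ 2) ^ 3 by ring, hσn,
      show (‖k‖ * s ^ 2) ^ 3 = ‖k‖ ^ 3 * s ^ 6 by ring, hs6] at h
    rw [show (c * l * s) ^ 4 = (c ^ 2) ^ 2 * k ^ 2 * s ^ 4 by rw [← hl]; ring,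
      show (c * l * s : ℂ) ^ 6 = (c ^ 2) ^ 3 * k ^ 3 / f by
        rw [mul_pow, mul_pow, hs6C, ← hl]; ring] at h
    refine h.trans (le_of_eq ?_)
    rw [hε]; field_simp
  set e := Complex.exp (2 * (Complex.I * k ^ 3 / f) / 3) with he
  have hΓ : airyPhase f k = e ^ 2 := by
    rw [airyPhase, he, ← Complex.exp_nat_mul]
    congr 1
    push_cast
    field_simp
    norm_num
  have hene : e ≠ 0 := Complex.exp_ne_zero _
  have heinv : Complex.exp (2 * (-Complex.I * k ^ 3 / f) / 3) = e⁻¹ := by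
    rw [he, ← Complex.exp_neg]; congr 1; ring
  rw [hΓ]
  have hWne : Wf f ≠ 0 := by
    rw [Wf_eq]
    exact div_ne_zero (mul_ne_zero hpwC (mul_ne_zero Complex.I_ne_zero (pow_ne_zero 2 hωne)))
      (mul_ne_zero two_ne_zero hpi)
  have hdivW : ∀ y : ℂ, y / Wf f * (2 * k) = y * (4 * π * k * s ^ 2) * (-Complex.I * ωc) := by
    intro y
    rw [div_mul_eq_mul_div, div_eq_iff hWne, Wf_eq, ← hpw]
    field_simp
    linear_combination y * (4 * (pw * s ^ 2 * ωc ^ 3)) * hI - (y * 4 * pw * s ^ 2) * hω3 -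
      y * 4 * hs2C
  have hprod : ∀ ya yb ca cb ea eb : ℂ,
      ya * (2 * (√π : ℝ) * (ca * l * s) * ea) * (yb * (2 * (√π : ℝ) * (cb * l * s) * eb)) =
        ya * yb * (4 * π * k * s ^ 2) * (ca * cb) * (ea * eb) := by
    intro ya yb ca cb ea eb
    rw [← hl, ← hsp2]; ring
  have hti : (t⁻¹) ^ 2 = -Complex.I * ωc := by
    rw [inv_pow, ht2]
    refine inv_eq_of_mul_eq_one_left ?_
    linear_combination (-ωc ^ 3) * hI + hω3
  have htic : t⁻¹ = (Real.cos (π / 12) : ℂ) + (Real.sin (π / 12) : ℂ) * Complex.I := by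
    refine inv_eq_of_mul_eq_one_left ?_
    rw [ht, twelfthRoot_eq]
    have : (Real.cos (π / 12) : ℂ) ^ 2 + (Real.sin (π / 12) : ℂ) ^ 2 = 1 := by
      exact_mod_cast Real.cos_sq_add_sin_sq (π / 12)
    linear_combination this - (Real.sin (π / 12) : ℂ) ^ 2 * hI
  have htin : ‖t⁻¹‖ = 1 := by rw [norm_inv, htn, inv_one]
  have hm_re : 0 < (t⁻¹ * l).re := by
    rw [htic]
    simp only [Complex.add_re, Complex.re_ofReal_mul, mul_assoc, Complex.I_mul_re,
      add_mul]
    nlinarith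
  have hm_im : 0 ≤ (t⁻¹ * l).im := by
    rw [htic]
    simp only [add_mul, Complex.add_im, Complex.im_ofReal_mul, mul_assoc, Complex.I_mul_im]
    positivity
  -- the factor `v`
  have hv := hgen t htn (by
      rw [ht, twelfthRoot_eq, sub_mul, Complex.sub_re, Complex.re_ofReal_mul, mul_assoc,
        Complex.re_ofReal_mul, Complex.I_mul_re]
      nlinarith) (by
      have : (t ^ 2 * k).re = √3 / 2 * k.re + k.im / 2 := by
        rw [ht2, show ωc ^ 2 = -1 - ωc by linear_combination hω2, ωc_eq]
        simp
        ring
      rw [this]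
      have := re_add_im_ge_norm hr hi
      nlinarith)
  rw [ht2, show (Complex.I * ωc ^ 2) ^ 2 = -ωc by
      linear_combination (ωc ^ 4) * hI - ωc * hω3,
    show (Complex.I * ωc ^ 2) ^ 3 = -Complex.I by
      linear_combination (Complex.I * ωc ^ 6) * hI - (Complex.I * (ωc ^ 3 + 1)) * hω3, heinv,
    ← hs4C, ← airyV] at hv
  set v := airyV f (k ^ 2) with hvd
  set xv := v * (2 * (√π : ℝ) * (t * l * s) * e⁻¹) with hxv
  set D := C ^ 2 + 2 * C with hD
  have hD0 : 0 < D := by positivity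
  have hvv := norm_one_add_mul_sub_one_le hε1 hC.le hv hv
  have hee : e⁻¹ * e = 1 := inv_mul_cancel₀ hene
  have hV : v ^ 2 / Wf f * (2 * k) = -ωc ^ 2 * (xv * xv) * e ^ 2 := by
    rw [hdivW, hxv, hprod, ← sq t, ht2]
    linear_combination (v ^ 2 * (4 * π * k * s ^ 2) * Complex.I) *
      (ωc ^ 4 * (e⁻¹ * e + 1) * hee + ωc * hω3)
  have hVle : ‖v ^ 2 / Wf f * (2 * k) + ωc ^ 2 * e ^ 2‖ ≤ D * ε * ‖e ^ 2‖ := by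
    rw [hV, show -ωc ^ 2 * (xv * xv) * e ^ 2 + ωc ^ 2 * e ^ 2 = -ωc ^ 2 * e ^ 2 * (xv * xv - 1) by
      ring, norm_mul, norm_mul, norm_neg, norm_pow ωc, norm_ωc]
    rw [one_pow, one_mul, mul_comm]
    gcongr
  have hVle' : ‖v ^ 2 / Wf f * (2 * k)‖ ≤ (D + 1) * ‖e ^ 2‖ := by
    have h1 := norm_sub_le (v ^ 2 / Wf f * (2 * k) + ωc ^ 2 * e ^ 2) (ωc ^ 2 * e ^ 2)
    rw [add_sub_cancel_right] at h1
    have h2 : ‖ωc ^ 2 * e ^ 2‖ = ‖e ^ 2‖ := by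
      rw [norm_mul, norm_pow ωc, norm_ωc, one_pow, one_mul]
    have h3 : D * ε * ‖e ^ 2‖ ≤ D * ‖e ^ 2‖ := by
      gcongr
      exact mul_le_of_le_one_right hD0.le hε1
    linarith
  have hVfin : ‖v ^ 2 / Wf f * (2 * k) + ωc ^ 2 * e ^ 2‖ ≤ 8 * (D + 1) * ε * ‖e ^ 2‖ := by
    refine hVle.trans ?_
    gcongr
    linarith
  set u := airyU f (k ^ 2) with hud
  by_cases hcase : ‖k‖ / 4 ≤ k.im
  · have hc2 : (-ωc * t⁻¹) ^ 2 = -Complex.I := by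
      rw [mul_pow, hti]; linear_combination -Complex.I * hω3
    have hu := hgen (-ωc * t⁻¹) (by rw [norm_mul, norm_neg, norm_ωc, htin, one_mul]) (by
        rw [mul_assoc, ωc_eq]
        simp only [neg_add_rev, add_mul, Complex.add_re, neg_mul, Complex.neg_re, mul_assoc,
          Complex.re_ofReal_mul, Complex.I_mul_re]
        have : (-1 / 2 * (t⁻¹ * l) : ℂ) = ((-1 / 2 : ℝ) : ℂ) * (t⁻¹ * l) := by push_cast; ring
        rw [this, Complex.re_ofReal_mul]
        have : 0 ≤ √3 / 2 * (t⁻¹ * l).im := by positivity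
        nlinarith) (by
        rw [hc2, neg_mul, Complex.neg_re, Complex.I_mul_re, neg_neg]; exact hcase)
    rw [hc2, show (-Complex.I) ^ 2 = -1 by linear_combination hI,
      show (-Complex.I) ^ 3 = Complex.I by linear_combination -Complex.I * hI, neg_one_mul,
      ← hs4C, ← airyU] at hu
    refine ⟨0, le_rfl, norm_nonneg _, fun _ => rfl, ?_, ?_, hVfin⟩
    · have huv := norm_one_add_mul_sub_one_le hε1 hC.le hu hv
      rw [← hD, hxv, hprod] at huv
      rw [hdivW]
      rw [show u * v * (4 * π * k * s ^ 2) * (-Complex.I * ωc) - Complex.I = Complex.I *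
        (u * v * (4 * π * k * s ^ 2) * (-ωc * t⁻¹ * t) * (e * e⁻¹) - 1) by
          field_simp]
      rw [norm_mul, Complex.norm_I, one_mul]
      refine huv.trans ?_
      nlinarith
    · have huu := norm_one_add_mul_sub_one_le hε1 hC.le hu hu
      rw [← hD, hprod, ← sq (-ωc * t⁻¹), hc2] at huu
      rw [hdivW]
      rw [show u ^ 2 * (4 * π * k * s ^ 2) * (-Complex.I * ωc) * e ^ 2 - ωc = ωc *
        (u * u * (4 * π * k * s ^ 2) * (-Complex.I) * (e * e) - 1) by
          ring]
      rw [norm_mul, norm_ωc, one_mul]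
      refine huu.trans ?_
      nlinarith
  · push Not at hcase
    have hw := hgen t⁻¹ htin hm_re (by
      have : (t⁻¹ ^ 2 * k).re = √3 / 2 * k.re - k.im / 2 := by
        rw [hti, ωc_eq]
        simp
        ring
      rw [this]
      have := re_add_im_ge_norm hr hi
      nlinarith)
    rw [hti, show (-Complex.I * ωc) ^ 2 = -ωc ^ 2 by linear_combination (ωc ^ 2) * hI,
      show (-Complex.I * ωc) ^ 3 = Complex.I by
        linear_combination (-Complex.I * ωc ^ 3) * hI + Complex.I * hω3] at hw
    set w := Ai (-ωc ^ 2 * k ^ 2 * s ^ 4) with hwd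
    have huvw : u = -ωc ^ 2 * w - ωc * v := by
      have := Ai_rotation (-k ^ 2 * s ^ 4)
      rw [hud, hwd, hvd, airyU, airyV, hs4C]
      rw [show ωc * (-k ^ 2 * (s : ℂ) ^ 4) = -ωc * k ^ 2 * s ^ 4 by ring,
        show ωc ^ 2 * (-k ^ 2 * (s : ℂ) ^ 4) = -ωc ^ 2 * k ^ 2 * s ^ 4 by ring] at this
      linear_combination this
    set xw := w * (2 * (√π : ℝ) * (t⁻¹ * l * s) * e) with hxw
    have hwv := norm_one_add_mul_sub_one_le hε1 hC.le hw hv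
    have hww := norm_one_add_mul_sub_one_le hε1 hC.le hw hw
    rw [← hD] at hwv hww
    have ewv : -ωc ^ 2 * (w * v) / Wf f * (2 * k) = Complex.I * (xw * xv) := by
      rw [hdivW, hxw, hxv, hprod, inv_mul_cancel₀ htne, mul_comm e, hee]
      linear_combination (w * v * (4 * π * k * s ^ 2) * Complex.I) * hω3
    refine ⟨‖e ^ 2‖, norm_nonneg _, le_rfl, fun h => absurd h (not_le.2 hcase), ?_, ?_, hVfin⟩
    · rw [show u * v / Wf f * (2 * k) - Complex.I = Complex.I * (xw * xv - 1) -
        ωc * (v ^ 2 / Wf f * (2 * k)) by rw [mul_sub, ← ewv, huvw]; ring]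
      refine (norm_sub_le _ _).trans ?_
      rw [norm_mul, norm_mul, Complex.norm_I, norm_ωc, one_mul, one_mul]
      nlinarith [norm_nonneg (e ^ 2)]
    · have eww : (-ωc ^ 2 * w) ^ 2 / Wf f * (2 * k) * e ^ 2 = ωc * (xw * xw) := by
        rw [hdivW, hxw, hprod, ← sq t⁻¹, hti]
        linear_combination (-w ^ 2 * (4 * π * k * s ^ 2) * Complex.I * ωc ^ 2 * e ^ 2) * hω3
      rw [show u ^ 2 / Wf f * (2 * k) * e ^ 2 - ωc = ωc * (xw * xw - 1) -
        2 * ωc * e ^ 2 * (Complex.I * (xw * xv)) +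
        ωc ^ 2 * e ^ 2 * (v ^ 2 / Wf f * (2 * k)) by rw [mul_sub ωc, ← ewv, ← eww, huvw]; ring]
      have hn1 : ‖xw * xv‖ ≤ D + 1 := by
        have := norm_add_le (xw * xv - 1) 1
        rw [sub_add_cancel, norm_one] at this
        have : D * ε ≤ D := mul_le_of_le_one_right hD0.le hε1
        linarith
      refine (norm_add_le _ _).trans (add_le_add (norm_sub_le _ _) le_rfl |>.trans ?_)
      simp only [norm_mul, norm_pow ωc, norm_ωc, Complex.norm_I, one_mul, one_pow,
        Complex.norm_ofNat, mul_one]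
      rw [← norm_mul]
      have hE := norm_nonneg (e ^ 2)
      have h1 : 2 * ‖e ^ 2‖ * ‖xw * xv‖ ≤ 2 * ‖e ^ 2‖ * (D + 1) := by gcongr
      have h2 : ‖e ^ 2‖ * (‖v ^ 2 / Wf f‖ * (2 * ‖k‖)) ≤ ‖e ^ 2‖ * ((D + 1) * ‖e ^ 2‖) := by
        refine mul_le_mul_of_nonneg_left ?_ hE
        simpa only [norm_mul, Complex.norm_ofNat] using hVle'
      nlinarith [mul_nonneg hE hE]

lemma norm_le_norm_add_of_quadrant {p k : ℂ} (hpr : 0 ≤ p.re) (hpi : 0 ≤ p.im) (hkr : 0 ≤ k.re)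
    (hki : 0 ≤ k.im) : ‖k‖ ≤ ‖p + k‖ := by
  rw [← sq_le_sq₀ (norm_nonneg _) (norm_nonneg _), ← Complex.normSq_eq_norm_sq,
    ← Complex.normSq_eq_norm_sq, Complex.normSq_apply, Complex.normSq_apply, Complex.add_re,
    Complex.add_im]
  nlinarith [mul_nonneg hpr hkr, mul_nonneg hpi hki]

/-- Perturbation of square roots in the first quadrant. -/
lemma sqrt_perturbation {p k τ : ℂ} (hpr : 0 ≤ p.re) (hpi : 0 ≤ p.im) (hkr : 0 ≤ k.re)
    (hki : 0 ≤ k.im) (hk : k ≠ 0) (hp : p ^ 2 = k ^ 2 + τ) (hτ : ‖τ‖ ≤ ‖k‖ ^ 2 / 4) :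
    ‖p - k‖ ≤ ‖τ‖ / ‖k‖ ∧ ‖p ^ 3 - k ^ 3 - 3 / 2 * τ * k‖ ≤ 2 * ‖τ‖ ^ 2 / ‖k‖ := by
  have hk0 : 0 < ‖k‖ := norm_pos_iff.2 hk
  have hs := norm_le_norm_add_of_quadrant hpr hpi hkr hki
  have hs0 : 0 < ‖p + k‖ := hk0.trans_le hs
  have hsne : p + k ≠ 0 := norm_pos_iff.1 hs0
  have h1 : ‖p - k‖ ≤ ‖τ‖ / ‖k‖ := by
    rw [le_div_iff₀ hk0]
    calc ‖p - k‖ * ‖k‖ ≤ ‖p - k‖ * ‖p + k‖ := by gcongr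
      _ = ‖τ‖ := by rw [← norm_mul]; congr 1; linear_combination hp
  refine ⟨h1, ?_⟩
  have hsmall : ‖p - k‖ ≤ ‖k‖ / 4 := h1.trans (by rw [div_le_iff₀ hk0]; linarith)
  have h2 : (p ^ 3 - k ^ 3 - 3 / 2 * τ * k) * (p + k) = τ * ((p - k) * (p + k / 2)) := by
    rw [show τ = p ^ 2 - k ^ 2 by rw [hp]; ring]; ring
  have h3 : ‖p + k / 2‖ ≤ 2 * ‖k‖ := by
    calc ‖p + k / 2‖ = ‖(p - k) + 3 / 2 * k‖ := by ring_nf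
      _ ≤ ‖p - k‖ + ‖(3 / 2 : ℂ) * k‖ := norm_add_le _ _
      _ ≤ 2 * ‖k‖ := by rw [norm_mul]; norm_num; linarith
  have h4 := congrArg norm h2
  rw [norm_mul, norm_mul, norm_mul] at h4
  have h5 : ‖p ^ 3 - k ^ 3 - 3 / 2 * τ * k‖ * ‖k‖ ≤ ‖τ‖ * (‖τ‖ / ‖k‖ * (2 * ‖k‖)) := by
    calc _ ≤ ‖p ^ 3 - k ^ 3 - 3 / 2 * τ * k‖ * ‖p + k‖ := by gcongr
      _ = _ := h4
      _ ≤ _ := by gcongr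
  rw [le_div_iff₀ hk0]
  refine h5.trans (le_of_eq ?_)
  field_simp

/-- The size of the relative error in the Airy asymptotics. -/
noncomputable def airyEps (f x : ℝ) : ℝ := f / x ^ 3 + f / x

lemma le_airyEps {f x : ℝ} (hf : 0 ≤ f) (hx : 0 < x) :
    f / x ^ 3 ≤ airyEps f x ∧ f / x ^ 2 ≤ airyEps f x ∧ f / x ≤ airyEps f x := by
  unfold airyEps
  have h1 : 0 ≤ f / x ^ 3 := by positivity
  have h3 : 0 ≤ f / x := by positivity
  refine ⟨by linarith, ?_, by linarith⟩
  rw [show f / x ^ 3 + f / x = (f * (1 + x ^ 2)) / x ^ 3 by field_simp,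
    show f / x ^ 2 = f * x / x ^ 3 by field_simp]
  gcongr
  nlinarith

lemma airyPhase_perturbation {f t : ℝ} {p k : ℂ} (hf : 0 < f) (hpr : 0 ≤ p.re) (hpi : 0 ≤ p.im)
    (hkr : 0 ≤ k.re) (hki : 0 ≤ k.im) (hk : k ≠ 0) (hp : p ^ 2 = k ^ 2 + t * f)
    (h1 : |t| * f ≤ ‖k‖ ^ 2 / 4) (h2 : 3 * t ^ 2 * (f / ‖k‖) ≤ 1) :
    ∃ γ : ℂ, airyPhase f p = airyPhase f k * Complex.exp (2 * Complex.I * t * k) * (1 + γ) ∧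
      ‖γ‖ ≤ 6 * t ^ 2 * (f / ‖k‖) := by
  have hτ : ‖(t * f : ℂ)‖ = |t| * f := by
    rw [norm_mul, Complex.norm_real, Complex.norm_real, Real.norm_eq_abs,
      Real.norm_of_nonneg hf.le]
  obtain ⟨-, h4⟩ := sqrt_perturbation hpr hpi hkr hki hk hp (by rwa [hτ])
  rw [hτ] at h4
  have hfC : (f : ℂ) ≠ 0 := by exact_mod_cast hf.ne'
  set w := 4 * Complex.I / (3 * f) * (p ^ 3 - k ^ 3 - 3 / 2 * (t * f) * k) with hw
  have hk0 : 0 < ‖k‖ := norm_pos_iff.2 hk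
  have hwn : ‖w‖ ≤ 3 * t ^ 2 * (f / ‖k‖) := by
    rw [hw, norm_mul, norm_div, norm_mul, norm_mul, Complex.norm_I, Complex.norm_real,
      Real.norm_of_nonneg hf.le]
    norm_num
    calc 4 / (3 * f) * ‖p ^ 3 - k ^ 3 - 3 / 2 * (t * f) * k‖
        ≤ 4 / (3 * f) * (2 * (|t| * f) ^ 2 / ‖k‖) := by gcongr
      _ = 8 / 3 * t ^ 2 * (f / ‖k‖) := by rw [mul_pow, sq_abs]; field_simp; ring
      _ ≤ _ := by gcongr; norm_num
  refine ⟨Complex.exp w - 1, ?_, ?_⟩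
  · rw [airyPhase, airyPhase, add_sub_cancel, ← Complex.exp_add, ← Complex.exp_add, hw]
    congr 1
    field_simp
    ring
  · refine (Complex.norm_exp_sub_one_le (hwn.trans h2)).trans ?_
    linarith

lemma norm_mul_sub_le {X x g : ℂ} {δ ρ : ℝ} (hx : ‖x‖ = 1) (hX : ‖X - x‖ ≤ δ) (hg : ‖g - 1‖ ≤ ρ)
    (hρ : ρ ≤ 1) : ‖X * g - x‖ ≤ 2 * δ + ρ := by
  have hg2 : ‖g‖ ≤ 2 := by
    have := norm_add_le (g - 1) 1
    rw [sub_add_cancel, norm_one] at this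
    linarith
  rw [show X * g - x = (X - x) * g + x * (g - 1) by ring]
  refine (norm_add_le _ _).trans ?_
  rw [norm_mul, norm_mul, hx, one_mul]
  have : ‖X - x‖ * ‖g‖ ≤ δ * 2 := by
    gcongr
    exact (norm_nonneg _).trans hX
  linarith

set_option maxHeartbeats 1000000 in
/-- The Airy products at the shifted energy `k² + tf`, in terms of `k`. -/
lemma exists_airy_products_shift (κ : ℝ) (hκ : 0 < κ) : ∃ B : ℝ, 1 ≤ B ∧ ∀ (f t : ℝ) (k : ℂ),
    0 < f → |t| = κ → 0 ≤ k.re → 0 ≤ k.im → k ≠ 0 → B * airyEps f ‖k‖ ≤ 1 →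
    ∃ μ : ℝ, 0 ≤ μ ∧ μ ≤ 2 * ‖airyPhase f k‖ * ‖Complex.exp (2 * Complex.I * t * k)‖ ∧
      (‖k‖ / 2 ≤ k.im → μ = 0) ∧
      ‖airyU f (k ^ 2 + t * f) * airyV f (k ^ 2 + t * f) / Wf f * (2 * k) - Complex.I‖ ≤
        B * (airyEps f ‖k‖ + μ) ∧
      ‖airyU f (k ^ 2 + t * f) ^ 2 / Wf f * (2 * k) *
        (airyPhase f k * Complex.exp (2 * Complex.I * t * k)) - ωc‖ ≤
        B * (airyEps f ‖k‖ + μ * (1 + μ)) ∧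
      ‖airyV f (k ^ 2 + t * f) ^ 2 / Wf f * (2 * k) /
        (airyPhase f k * Complex.exp (2 * Complex.I * t * k)) + ωc ^ 2‖ ≤
        B * airyEps f ‖k‖ := by
  obtain ⟨B, hB, hprod⟩ := exists_airy_products
  refine ⟨100 * B * (1 + κ) ^ 2, by nlinarith, fun f t k hf ht hkr hki hk hε => ?_⟩
  have hk0 : 0 < ‖k‖ := norm_pos_iff.2 hk
  obtain ⟨he3, he2, he1⟩ := le_airyEps hf.le hk0
  set ε := airyEps f ‖k‖ with hεd
  have ht2 : t ^ 2 = κ ^ 2 := by rw [← sq_abs, ht]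
  have hε0 : 0 ≤ ε := le_trans (by positivity) he1
  have hB2 : 100 * (1 + κ) ^ 2 * ε ≤ 1 := by
    refine le_trans ?_ hε
    nlinarith [mul_nonneg (sq_nonneg (1 + κ)) hε0]
  have hb0 : 100 * ε ≤ 1 := by
    nlinarith [mul_nonneg hκ.le hε0, mul_nonneg (sq_nonneg κ) hε0]
  have hb1 : 100 * κ * ε ≤ 1 := by
    nlinarith [mul_nonneg hκ.le hε0, mul_nonneg (sq_nonneg κ) hε0]
  have hb2 : 100 * κ ^ 2 * ε ≤ 1 := by
    nlinarith [mul_nonneg hκ.le hε0, mul_nonneg (sq_nonneg κ) hε0]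
  obtain ⟨p, hp, hpr, hpi⟩ : ∃ p : ℂ, p ^ 2 = k ^ 2 + t * f ∧ 0 ≤ p.re ∧ 0 ≤ p.im := by
    apply exists_sqrt_quadrant
    have : ((t * f : ℂ)).im = 0 := by rw [← Complex.ofReal_mul]; exact Complex.ofReal_im _
    rw [Complex.add_im, this, sq, Complex.mul_im]
    positivity
  have hfk2 : κ * f ≤ ‖k‖ ^ 2 / 100 := by
    have : κ * (f / ‖k‖ ^ 2) ≤ κ * ε := by gcongr
    have h : κ * (f / ‖k‖ ^ 2) ≤ 1 / 100 := by linarith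
    rw [← mul_div_assoc, div_le_iff₀ (by positivity)] at h
    linarith
  have hτ : ‖(t * f : ℂ)‖ = κ * f := by
    rw [norm_mul, Complex.norm_real, Complex.norm_real, Real.norm_eq_abs, ht,
      Real.norm_of_nonneg hf.le]
  obtain ⟨hpk, -⟩ := sqrt_perturbation hpr hpi hkr hki hk hp (by rw [hτ]; nlinarith)
  rw [hτ] at hpk
  have hpk2 : ‖p - k‖ ≤ ‖k‖ / 100 := hpk.trans (by rw [div_le_iff₀ hk0]; nlinarith)
  have hplow : ‖k‖ * (99 / 100) ≤ ‖p‖ := by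
    have := norm_sub_norm_le k p
    rw [norm_sub_rev] at this
    linarith
  have hphigh : ‖p‖ ≤ ‖k‖ * (101 / 100) := by
    have := norm_sub_norm_le p k
    linarith
  have hp0 : 0 < ‖p‖ := by nlinarith
  have hpne : p ≠ 0 := norm_pos_iff.1 hp0
  have hp3 : ‖k‖ ^ 3 / 2 ≤ ‖p‖ ^ 3 := by
    have : (‖k‖ * (99 / 100)) ^ 3 ≤ ‖p‖ ^ 3 := by gcongr
    nlinarith [pow_pos hk0 3]
  have hεp : f / ‖p‖ ^ 3 ≤ 2 * ε := by
    calc f / ‖p‖ ^ 3 ≤ f / (‖k‖ ^ 3 / 2) := by gcongr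
      _ = 2 * (f / ‖k‖ ^ 3) := by field_simp
      _ ≤ 2 * ε := by gcongr
  have hfp : f ≤ ‖p‖ ^ 3 := by
    have : f / ‖p‖ ^ 3 ≤ 1 := by linarith
    rwa [div_le_one (by positivity)] at this
  have hγb : t ^ 2 * (f / ‖k‖) ≤ κ ^ 2 * ε := by rw [ht2]; gcongr
  obtain ⟨γ, hγ, hγn⟩ := airyPhase_perturbation hf hpr hpi hkr hki hk hp
    (by rw [ht]; nlinarith) (by linarith)
  have hγn' : ‖γ‖ ≤ 6 * κ ^ 2 * ε := by linarith
  have hγs : ‖γ‖ ≤ 1 / 2 := by linarith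
  obtain ⟨μ, hμ0, hμΓ, hμi, hA, hU, hV⟩ := hprod f p hf hpr hpi hfp
  rw [hp] at hA hU hV
  set G := airyPhase f k * Complex.exp (2 * Complex.I * t * k) with hG
  have hGne : G ≠ 0 := mul_ne_zero (Complex.exp_ne_zero _) (Complex.exp_ne_zero _)
  have h1γ : 1 + γ ≠ 0 := by
    intro h
    have : γ = -1 := by linear_combination h
    rw [this] at hγs; norm_num at hγs
  -- the ratio `k / p`
  have hρ : ‖k / p - 1‖ ≤ 2 * κ * ε := by
    rw [show k / p - 1 = (k - p) / p by field_simp, norm_div, norm_sub_rev,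
      div_le_iff₀ hp0]
    calc ‖p - k‖ ≤ κ * f / ‖k‖ := hpk
      _ = κ * (f / ‖k‖ ^ 2) * ‖k‖ := by field_simp
      _ ≤ κ * ε * (2 * ‖p‖) := by gcongr; linarith
      _ = _ := by ring
  have hρ1 : 2 * κ * ε ≤ 1 := by linarith
  have hγ1 : ‖(1 + γ) - 1‖ ≤ 6 * κ ^ 2 * ε := by rwa [add_sub_cancel_left]
  have hnω2 : ‖-ωc ^ 2‖ = 1 := by rw [norm_neg, norm_pow, norm_ωc, one_pow]
  have hinv : ‖(1 + γ)⁻¹ - 1‖ ≤ 12 * κ ^ 2 * ε := by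
    rw [show (1 + γ)⁻¹ - 1 = -γ / (1 + γ) by field_simp; ring, norm_div, norm_neg]
    have : 1 / 2 ≤ ‖1 + γ‖ := by
      have := norm_sub_le (1 + γ) γ
      rw [add_sub_cancel_right, norm_one] at this
      linarith
    rw [div_le_iff₀ (by linarith)]
    have : 6 * κ ^ 2 * ε ≤ 12 * κ ^ 2 * ε * ‖1 + γ‖ := by
      have h0 : 0 ≤ 12 * κ ^ 2 * ε := by positivity
      have := mul_le_mul_of_nonneg_left this h0
      linarith
    linarith
  have hκε : 0 ≤ κ * ε := by positivity
  have hκ2ε : 0 ≤ κ ^ 2 * ε := by positivity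
  have hBε : B * (f / ‖p‖ ^ 3) ≤ 2 * (B * ε) := by nlinarith
  have hBε0 : 0 ≤ B * ε := by positivity
  have hBκ : κ * ε ≤ B * (κ * ε) := le_mul_of_one_le_left hκε hB
  have hBκ2 : κ ^ 2 * ε ≤ B * (κ ^ 2 * ε) := le_mul_of_one_le_left hκ2ε hB
  have hfinal : ∀ y : ℝ, 0 ≤ y → ∀ X : ℝ, X ≤ 4 * B * (f / ‖p‖ ^ 3 + y) + 12 * κ ^ 2 * ε +
      4 * κ * ε → X ≤ 100 * B * (1 + κ) ^ 2 * (ε + y) := by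
    intro y hy X hX
    have hBy : 0 ≤ B * y := by positivity
    have h1 : 0 ≤ κ * (B * y) := by positivity
    have h2 : 0 ≤ κ ^ 2 * (B * y) := by positivity
    have h3 : 100 * B * (1 + κ) ^ 2 * (ε + y) = 100 * (B * ε) + 200 * (B * (κ * ε)) +
      100 * (B * (κ ^ 2 * ε)) + 100 * (B * y) + 200 * (κ * (B * y)) + 100 * (κ ^ 2 * (B * y)) := by
      ring
    linarith
  refine ⟨μ, hμ0, ?_, ?_, ?_, ?_, ?_⟩
  · refine hμΓ.trans ?_
    rw [hγ, norm_mul, hG, norm_mul]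
    have : ‖1 + γ‖ ≤ 2 := by
      have := norm_add_le 1 γ
      rw [norm_one] at this
      linarith
    have h0 : 0 ≤ ‖airyPhase f k‖ * ‖Complex.exp (2 * Complex.I * t * k)‖ := by positivity
    nlinarith
  · intro h
    apply hμi
    have := Complex.abs_im_le_norm (p - k)
    rw [Complex.sub_im] at this
    have := (abs_le.1 this).1
    linarith
  · have h := norm_mul_sub_le Complex.norm_I hA hρ hρ1
    rw [show airyU f (k ^ 2 + t * f) * airyV f (k ^ 2 + t * f) / Wf f * (2 * p) * (k / p) =
      airyU f (k ^ 2 + t * f) * airyV f (k ^ 2 + t * f) / Wf f * (2 * k) by field_simp] at h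
    refine hfinal μ hμ0 _ (h.trans ?_)
    have : 0 ≤ B * (f / ‖p‖ ^ 3) := by positivity
    have := mul_nonneg (zero_le_one.trans hB) hμ0
    linarith
  · have h := norm_mul_sub_le norm_ωc (norm_mul_sub_le norm_ωc hU hρ hρ1) hinv (by linarith)
    rw [hγ, show airyU f (k ^ 2 + t * f) ^ 2 / Wf f * (2 * p) * (G * (1 + γ)) * (k / p) *
      (1 + γ)⁻¹ = airyU f (k ^ 2 + t * f) ^ 2 / Wf f * (2 * k) * G by field_simp] at h
    refine hfinal _ (by positivity) _ (h.trans ?_)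
    linarith
  · have hΓn : ‖airyPhase f p‖ ≠ 0 := norm_ne_zero_iff.2 (Complex.exp_ne_zero _)
    have hV' : ‖airyV f (k ^ 2 + t * f) ^ 2 / Wf f * (2 * p) / airyPhase f p - -ωc ^ 2‖ ≤
        B * (f / ‖p‖ ^ 3) := by
      rw [show airyV f (k ^ 2 + t * f) ^ 2 / Wf f * (2 * p) / airyPhase f p - -ωc ^ 2 =
        (airyV f (k ^ 2 + t * f) ^ 2 / Wf f * (2 * p) + ωc ^ 2 * airyPhase f p) /
          airyPhase f p by
          have : airyPhase f p ≠ 0 := Complex.exp_ne_zero _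
          field_simp; ring, norm_div, div_le_iff₀ (by positivity)]
      exact hV
    have h := norm_mul_sub_le hnω2 (norm_mul_sub_le hnω2 hV' hρ hρ1) hγ1 (by linarith)
    rw [hγ, show airyV f (k ^ 2 + t * f) ^ 2 / Wf f * (2 * p) / (G * (1 + γ)) * (k / p) *
      (1 + γ) - -ωc ^ 2 = airyV f (k ^ 2 + t * f) ^ 2 / Wf f * (2 * k) / G + ωc ^ 2 by
        field_simp; ring] at h
    have := hfinal 0 le_rfl _ (h.trans (by linarith))
    rwa [add_zero] at this

/-- `u²/W` at energy `ζ`. -/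
noncomputable def resU (f : ℝ) (ζ : ℂ) : ℂ := airyU f ζ ^ 2 / Wf f

/-- `uv/W` at energy `ζ`. -/
noncomputable def resA (f : ℝ) (ζ : ℂ) : ℂ := airyU f ζ * airyV f ζ / Wf f

/-- `v²/W` at energy `ζ`. -/
noncomputable def resV (f : ℝ) (ζ : ℂ) : ℂ := airyV f ζ ^ 2 / Wf f

lemma ωc_ne_zero : ωc ≠ 0 := Complex.exp_ne_zero _

lemma Wf_ne_zero {f : ℝ} (hf : 0 < f) : Wf f ≠ 0 := by
  have hpi : (π : ℂ) ≠ 0 := by exact_mod_cast Real.pi_ne_zero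
  have : ((f ^ ((1 : ℝ) / 3) : ℝ) : ℂ) ≠ 0 := by
    exact_mod_cast (Real.rpow_pos_of_pos hf _).ne'
  exact div_ne_zero (mul_ne_zero this (Complex.exp_ne_zero _)) (mul_ne_zero two_ne_zero hpi)

lemma Df_eq (κ η f : ℝ) (z : ℂ) : Df κ η f z =
    (1 + resA f (z - κ * f) / η) * (1 + resA f (z + κ * f) / η) -
      resU f (z - κ * f) * resV f (z + κ * f) / η ^ 2 := by
  simp only [Df, alphaP, alphaM, betaP, betaM, resA, resU, resV, airyU, airyV]
  ring

lemma conj_ωc : starRingEnd ℂ ωc = ωc ^ 2 := by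
  rw [show ωc ^ 2 = -1 - ωc by linear_combination ωc_sq_add, ωc_eq]
  simp only [map_add, map_mul, map_div₀, map_neg, map_one, Complex.conj_ofReal, Complex.conj_I,
    Complex.conj_ofNat]
  ring

lemma conj_airyU (f : ℝ) (ζ : ℂ) : starRingEnd ℂ (airyU f (starRingEnd ℂ ζ)) = airyU f ζ := by
  simp [airyU, conj_Ai]

lemma conj_airyV (f : ℝ) (ζ : ℂ) : starRingEnd ℂ (airyV f (starRingEnd ℂ ζ)) =
    -ωc * airyU f ζ - ωc ^ 2 * airyV f ζ := by
  have h := Ai_rotation (-ζ * ((f ^ (-(2 : ℝ) / 3) : ℝ) : ℂ))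
  rw [show ωc * (-ζ * ((f ^ (-(2 : ℝ) / 3) : ℝ) : ℂ)) =
    -ωc * ζ * ((f ^ (-(2 : ℝ) / 3) : ℝ) : ℂ) by ring] at h
  have hc : starRingEnd ℂ (airyV f (starRingEnd ℂ ζ)) =
      Ai (ωc ^ 2 * (-ζ * ((f ^ (-(2 : ℝ) / 3) : ℝ) : ℂ))) := by
    rw [airyV, conj_Ai]
    congr 1
    simp only [map_mul, map_neg, conj_ωc, Complex.conj_conj, Complex.conj_ofReal]
    ring
  rw [hc, airyU, airyV]
  linear_combination ωc * h - Ai (ωc ^ 2 * (-ζ * ((f ^ (-(2 : ℝ) / 3) : ℝ) : ℂ))) * ωc_cube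

lemma conj_Wf (f : ℝ) : starRingEnd ℂ (Wf f) = -ωc ^ 2 * Wf f := by
  rw [Wf_eq]
  simp only [map_mul, map_div₀, map_pow, conj_ωc, Complex.conj_ofReal, Complex.conj_I,
    Complex.conj_ofNat]
  ring

/-- The values of the determinant at complex conjugate points. -/
lemma conj_Df_conj {κ η f : ℝ} (hf : 0 < f) (z : ℂ) :
    starRingEnd ℂ (Df κ η f (starRingEnd ℂ z)) = Df κ η f z +
      ωc ^ 2 / η * (resU f (z - κ * f) * (1 - resA f (z + κ * f) / η) +
        resU f (z + κ * f) * (1 + resA f (z - κ * f) / η)) := by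
  have hW := Wf_ne_zero hf
  have hm : starRingEnd ℂ z - κ * f = starRingEnd ℂ (z - κ * f) := by simp
  have hp : starRingEnd ℂ z + κ * f = starRingEnd ℂ (z + κ * f) := by simp
  have hu := conj_airyU f (z - κ * f)
  have hv := conj_airyV f (z - κ * f)
  have hu' := conj_airyU f (z + κ * f)
  have hv' := conj_airyV f (z + κ * f)
  rw [← hm] at hu hv
  rw [← hp] at hu' hv'
  rw [Df_eq, Df_eq]
  simp only [resA, resU, resV, map_mul, map_add, map_sub, map_div₀, map_pow, map_one, hu, hv, hu',
    hv', conj_Wf, Complex.conj_ofReal]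
  have hinv : ∀ y : ℂ, y / (-ωc ^ 2 * Wf f) = -ωc * (y / Wf f) := by
    intro y
    rw [div_eq_iff (mul_ne_zero (neg_ne_zero.2 (pow_ne_zero 2 ωc_ne_zero)) hW)]
    field_simp
    linear_combination -y * ωc_cube
  simp only [hinv, div_eq_mul_inv, ← inv_pow]
  have h := ωc_sq_add
  clear hu hv hu' hv' hinv hm hp hW
  generalize (Wf f)⁻¹ = x
  generalize (η : ℂ)⁻¹ = y
  generalize ωc = o at *
  generalize airyU f (z - κ * f) = u
  generalize airyV f (z - κ * f) = v
  generalize airyU f (z + κ * f) = u'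
  generalize airyV f (z + κ * f) = v'
  grind

lemma norm_exp_I_mul_le_one {κ : ℝ} (hκ : 0 ≤ κ) {k : ℂ} (hk : 0 ≤ k.im) :
    ‖Complex.exp (2 * Complex.I * κ * k)‖ ≤ 1 := by
  rw [Complex.norm_exp, Real.exp_le_one_iff]
  have : (2 * Complex.I * κ * k).re = -(2 * κ * k.im) := by
    simp [Complex.mul_re, Complex.mul_im]
  rw [this]
  have : 0 ≤ 2 * κ * k.im := by positivity
  linarith

set_option maxHeartbeats 1000000 in
/-- The determinant at `k²` and at its conjugate, expressed through small quantities. -/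
lemma exists_resonance_expansion (κ : ℝ) (hκ : 0 < κ) : ∃ B : ℝ, 1 ≤ B ∧
    ∀ (η f : ℝ) (k e G q : ℂ), 0 < η → 0 < f → 0 ≤ k.re → 0 ≤ k.im → k ≠ 0 →
    B * airyEps f ‖k‖ ≤ 1 → e = Complex.exp (2 * Complex.I * κ * k) → G = airyPhase f k →
    q = 1 / (2 * η * k) →
    ∃ (ν : ℝ) (a a' b b' c : ℂ), 0 ≤ ν ∧ ‖a‖ ≤ B * ν ∧ ‖a'‖ ≤ B * ν ∧ ‖b‖ ≤ B * ν ∧ ‖b'‖ ≤ B * ν ∧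
      ‖c‖ ≤ B * ν ∧ (‖k‖ / 2 ≤ k.im → ν = airyEps f ‖k‖) ∧
      ν ≤ airyEps f ‖k‖ +
        2 * ‖G‖ * rexp (2 * κ * ‖k‖) * (1 + 2 * ‖G‖ * rexp (2 * κ * ‖k‖)) ∧
      Df κ η f (k ^ 2) = (1 + q * (Complex.I + a)) * (1 + q * (Complex.I + a')) -
        q ^ 2 * (ωc * e + b) * e * (-ωc ^ 2 + c) ∧
      starRingEnd ℂ (Df κ η f (starRingEnd ℂ (k ^ 2))) = Df κ η f (k ^ 2) +
        ωc ^ 2 * q / (G * e) * ((ωc * e + b) * e * (1 - q * (Complex.I + a')) +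
          (ωc + b') * (1 + q * (Complex.I + a))) := by
  obtain ⟨B, hB, h⟩ := exists_airy_products_shift κ hκ
  refine ⟨B, hB, fun η f k e G q hη hf hkr hki hk hε he hG hq => ?_⟩
  obtain ⟨μ, hμ0, hμG, hμi, hA, hU, -⟩ := h f (-κ) k hf (by rw [abs_neg, abs_of_pos hκ]) hkr hki
    hk hε
  obtain ⟨μ', hμ0', hμG', hμi', hA', hU', hV'⟩ := h f κ k hf (abs_of_pos hκ) hkr hki hk hε
  have hen : ‖e‖ ≤ 1 := he ▸ norm_exp_I_mul_le_one hκ.le hki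
  have hene : e ≠ 0 := he ▸ Complex.exp_ne_zero _
  have hGne : G ≠ 0 := hG ▸ Complex.exp_ne_zero _
  have heinv : Complex.exp (2 * Complex.I * ((-κ : ℝ) : ℂ) * k) = e⁻¹ := by
    rw [he, ← Complex.exp_neg]; congr 1; push_cast; ring
  have hζ : k ^ 2 + ((-κ : ℝ) : ℂ) * f = k ^ 2 - κ * f := by push_cast; ring
  have hexp : ∀ t : ℝ, |t| ≤ κ → ‖Complex.exp (2 * Complex.I * t * k)‖ ≤ rexp (2 * κ * ‖k‖) := by
    intro t ht
    refine (Complex.norm_exp_le_exp_norm _).trans (Real.exp_le_exp.2 ?_)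
    rw [norm_mul, norm_mul, norm_mul, Complex.norm_I, Complex.norm_real, Real.norm_eq_abs]
    norm_num
    gcongr
  have hx := hexp (-κ) (by rw [abs_neg, abs_of_pos hκ])
  have hx' := hexp κ (abs_of_pos hκ).le
  rw [hζ, heinv, ← hG] at hU
  rw [hζ] at hA
  rw [← he, ← hG] at hU' hV'
  rw [← hG] at hμG hμG'
  have hηC : (η : ℂ) ≠ 0 := by exact_mod_cast hη.ne'
  set ε := airyEps f ‖k‖ with hεd
  have hε0 : 0 ≤ ε := le_trans (by positivity) (le_airyEps hf.le (norm_pos_iff.2 hk)).1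
  set M := 2 * ‖G‖ * rexp (2 * κ * ‖k‖) with hM
  set m := max μ μ' with hm
  have hm0 : 0 ≤ m := hμ0.trans (le_max_left _ _)
  have hmM : m ≤ M := by
    refine max_le (hμG.trans ?_) (hμG'.trans ?_)
    · rw [hM]; gcongr
    · rw [hM]; gcongr
  have hB0 : 0 ≤ B := zero_le_one.trans hB
  have h1 : ∀ y, 0 ≤ y → y ≤ m → B * (ε + y) ≤ B * (ε + m * (1 + m)) := by
    intro y hy hym; gcongr; nlinarith
  have h2 : ∀ y, 0 ≤ y → y ≤ m → B * (ε + y * (1 + y)) ≤ B * (ε + m * (1 + m)) := by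
    intro y hy hym; gcongr
  have hμm : μ ≤ m := le_max_left _ _
  have hμm' : μ' ≤ m := le_max_right _ _
  have hAe : ∀ y, y / η = q * (y * (2 * k)) := by intro y; rw [hq]; field_simp
  have hDeq : Df κ η f (k ^ 2) = (1 + q * (Complex.I + (resA f (k ^ 2 - κ * f) * (2 * k) -
      Complex.I))) * (1 + q * (Complex.I + (resA f (k ^ 2 + κ * f) * (2 * k) - Complex.I))) -
        q ^ 2 * (ωc * e + (resU f (k ^ 2 - κ * f) * (2 * k) * (G * e⁻¹) - ωc) * e) * e *
        (-ωc ^ 2 + (resV f (k ^ 2 + κ * f) * (2 * k) / (G * e) + ωc ^ 2)) := by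
    rw [Df_eq, hq]
    field_simp
    ring
  refine ⟨ε + m * (1 + m), resA f (k ^ 2 - κ * f) * (2 * k) - Complex.I,
    resA f (k ^ 2 + κ * f) * (2 * k) - Complex.I,
    (resU f (k ^ 2 - κ * f) * (2 * k) * (G * e⁻¹) - ωc) * e,
    resU f (k ^ 2 + κ * f) * (2 * k) * (G * e) - ωc,
    resV f (k ^ 2 + κ * f) * (2 * k) / (G * e) + ωc ^ 2, by positivity,
    hA.trans (h1 _ hμ0 hμm), hA'.trans (h1 _ hμ0' hμm'), ?_, hU'.trans (h2 _ hμ0' hμm'), ?_, ?_, ?_,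
    hDeq, ?_⟩
  · rw [norm_mul]
    refine (mul_le_of_le_one_right (norm_nonneg _) hen).trans (hU.trans (h2 _ hμ0 hμm))
  · refine hV'.trans ?_
    gcongr
    nlinarith
  · intro hi
    have : m = 0 := by rw [hm, hμi hi, hμi' hi, max_self]
    rw [this]; ring
  · gcongr
  · rw [conj_Df_conj hf, hq]
    field_simp
    ring

lemma exists_pos_le_norm_of_upperHalf {F : ℂ → ℂ} (hF : Continuous F)
    (hne : ∀ k : ℂ, 0 ≤ k.im → F k ≠ 0) {R c : ℝ} (hc : 0 < c)
    (hlarge : ∀ k : ℂ, 0 ≤ k.im → R ≤ ‖k‖ → c ≤ ‖F k‖) :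
    ∃ c' : ℝ, 0 < c' ∧ ∀ k : ℂ, 0 ≤ k.im → c' ≤ ‖F k‖ := by
  have hK : IsCompact (Metric.closedBall (0 : ℂ) |R| ∩ {k : ℂ | 0 ≤ k.im}) :=
    (isCompact_closedBall _ _).inter_right (isClosed_le continuous_const Complex.continuous_im)
  obtain ⟨k₀, ⟨-, hk₀⟩, hmin⟩ := hK.exists_isMinOn ⟨0, by simp⟩ hF.norm.continuousOn
  refine ⟨min c ‖F k₀‖, lt_min hc (norm_pos_iff.2 (hne _ hk₀)), fun k hk => ?_⟩
  rcases le_total R ‖k‖ with h | h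
  · exact (min_le_left _ _).trans (hlarge k hk h)
  · exact (min_le_right _ _).trans (hmin ⟨by simpa using h.trans (le_abs_self R), hk⟩)

lemma hasDerivAt_exp_I (t : ℝ) : HasDerivAt (fun k : ℂ => Complex.exp (2 * Complex.I * t * k))
    (2 * Complex.I * t) 0 := by
  have := ((hasDerivAt_id (0 : ℂ)).const_mul (2 * Complex.I * (t : ℂ))).cexp
  exact this.congr_deriv (by simp)

lemma continuous_dslope_exp_I (t : ℝ) :
    Continuous (dslope (fun k : ℂ => Complex.exp (2 * Complex.I * t * k)) 0) := by
  rw [← continuousOn_univ, continuousOn_dslope Filter.univ_mem]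
  exact ⟨by fun_prop, (hasDerivAt_exp_I t).differentiableAt⟩

lemma dslope_exp_I_zero (t : ℝ) :
    dslope (fun k : ℂ => Complex.exp (2 * Complex.I * t * k)) 0 0 = 2 * Complex.I * t := by
  rw [dslope_same, (hasDerivAt_exp_I t).deriv]

lemma dslope_exp_I_of_ne (t : ℝ) {k : ℂ} (hk : k ≠ 0) :
    dslope (fun k : ℂ => Complex.exp (2 * Complex.I * t * k)) 0 k =
      (Complex.exp (2 * Complex.I * t * k) - 1) / k := by
  rw [dslope_of_ne _ hk, slope_def_field]; simp

lemma eq_one_of_norm_le_one_of_re {e : ℂ} (h : ‖e‖ ≤ 1) (hr : 1 ≤ e.re) : e = 1 := by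
  have h1 : e.re ^ 2 + e.im ^ 2 ≤ 1 := by
    have := Complex.sq_norm_sub_sq_re e
    nlinarith [norm_nonneg e]
  have h2 : e.re = 1 := le_antisymm ((Complex.re_le_norm e).trans h) hr
  have h3 : e.im = 0 := by
    rw [h2] at h1
    nlinarith [sq_nonneg e.im]
  exact Complex.ext h2 h3

/-- Lower bound for the principal part of the determinant in the upper half plane. -/
lemma exists_lower_bound_principal (κ η : ℝ) (hκ : 0 < κ) (hη : 0 < η) : ∃ c : ℝ, 0 < c ∧
    ∀ k e q : ℂ, 0 ≤ k.im → k ≠ 0 → e = Complex.exp (2 * Complex.I * κ * k) →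
    q = 1 / (2 * η * k) → c * (1 + 1 / ‖k‖) ≤ ‖(1 + q * Complex.I) ^ 2 + q ^ 2 * e ^ 2‖ := by
  have hηC : (η : ℂ) ≠ 0 := by exact_mod_cast hη.ne'
  have hI := Complex.I_sq
  -- the two factors
  have hcoef : Complex.I / (2 * η : ℂ) = ((1 / (2 * η) : ℝ) : ℂ) * Complex.I := by push_cast; ring
  have hcn : ‖Complex.I / (2 * η : ℂ)‖ = 1 / (2 * η) := by
    rw [hcoef, norm_mul, Complex.norm_I, Complex.norm_real, mul_one,
      Real.norm_of_nonneg (by positivity)]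
  have hη2 : (0 : ℝ) < 1 / (2 * η) := by positivity
  have hbig : ∀ k : ℂ, 0 ≤ k.im → ∀ s : ℂ, ‖s‖ = 1 →
      ‖Complex.I / (2 * η) * (1 + s * Complex.exp (2 * Complex.I * κ * k))‖ ≤ 1 / η := by
    intro k hk s hs
    have h1 := norm_exp_I_mul_le_one hκ.le hk
    rw [norm_mul, hcn]
    have : ‖1 + s * Complex.exp (2 * Complex.I * κ * k)‖ ≤ 2 := by
      refine (norm_add_le _ _).trans ?_
      rw [norm_one, norm_mul, hs, one_mul]; linarith
    calc 1 / (2 * η) * ‖1 + s * Complex.exp (2 * Complex.I * κ * k)‖ ≤ 1 / (2 * η) * 2 := by gcongr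
      _ = 1 / η := by field_simp
  obtain ⟨c₁, hc₁, h₁⟩ := exists_pos_le_norm_of_upperHalf
    (F := fun k => k + Complex.I / (2 * η) * (1 + 1 * Complex.exp (2 * Complex.I * κ * k)))
    (by fun_prop) (R := 1 / η + 1) (c := 1) (by
      intro k hk h0
      have hn := norm_exp_I_mul_le_one hκ.le hk
      have him := congrArg Complex.im h0
      rw [hcoef, mul_assoc, Complex.add_im, Complex.im_ofReal_mul, Complex.I_mul_im, one_mul,
        Complex.add_re, Complex.one_re, Complex.zero_im] at him
      have hre := (abs_le.1 ((Complex.abs_re_le_norm _).trans hn)).1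
      have hre' : (Complex.exp (2 * Complex.I * κ * k)).re ≤ -1 := by
        by_contra hlt
        push Not at hlt
        nlinarith [mul_pos hη2 (show 0 < 1 + (Complex.exp (2 * Complex.I * κ * k)).re by linarith)]
      have he : Complex.exp (2 * Complex.I * κ * k) = -1 := by
        have := eq_one_of_norm_le_one_of_re (e := -Complex.exp (2 * Complex.I * κ * k))
          (by rwa [norm_neg]) (by rw [Complex.neg_re]; linarith)
        linear_combination -this
      rw [he] at h0
      have hk0 : k = 0 := by linear_combination h0
      rw [hk0] at he
      simp at he
      norm_num [Complex.ext_iff] at he) one_pos (by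
      intro k hk hR
      have := norm_sub_le (k + Complex.I / (2 * η) *
        (1 + 1 * Complex.exp (2 * Complex.I * κ * k))) (Complex.I / (2 * η) *
        (1 + 1 * Complex.exp (2 * Complex.I * κ * k)))
      rw [add_sub_cancel_right] at this
      have := hbig k hk 1 norm_one
      linarith)
  set g := dslope (fun k : ℂ => Complex.exp (2 * Complex.I * κ * k)) 0 with hg
  have hgc : Continuous g := continuous_dslope_exp_I κ
  have hF₂ : ∀ k : ℂ, k ≠ 0 → 1 - Complex.I / (2 * η) * g k =
      (k + Complex.I / (2 * η) * (1 + (-1) * Complex.exp (2 * Complex.I * κ * k))) / k := by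
    intro k hk
    rw [hg, dslope_exp_I_of_ne κ hk]; field_simp; ring
  obtain ⟨c₂, hc₂, h₂⟩ := exists_pos_le_norm_of_upperHalf
    (F := fun k => 1 - Complex.I / (2 * η) * g k)
    (by fun_prop) (R := 2 / η) (c := 1 / 2) (by
      intro k hk h0
      by_cases hk0 : k = 0
      · rw [hk0, hg, dslope_exp_I_zero] at h0
        have : (1 : ℂ) + ((κ / η : ℝ) : ℂ) = 0 := by
          rw [← h0]; push_cast; field_simp; linear_combination κ * hI
        have h1 : (1 : ℝ) + κ / η = 0 := by exact_mod_cast this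
        have : 0 < κ / η := by positivity
        linarith
      · rw [hF₂ k hk0, div_eq_zero_iff, or_iff_left hk0] at h0
        have hn := norm_exp_I_mul_le_one hκ.le hk
        have him := congrArg Complex.im h0
        rw [hcoef, mul_assoc, Complex.add_im, Complex.im_ofReal_mul, Complex.I_mul_im, neg_one_mul,
          Complex.add_re, Complex.neg_re, Complex.one_re, Complex.zero_im] at him
        have hre := (abs_le.1 ((Complex.abs_re_le_norm _).trans hn)).2
        have hre' : 1 ≤ (Complex.exp (2 * Complex.I * κ * k)).re := by
          by_contra hlt
          push Not at hlt
          nlinarith [mul_pos hη2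
            (show 0 < 1 - (Complex.exp (2 * Complex.I * κ * k)).re by linarith)]
        rw [eq_one_of_norm_le_one_of_re hn hre'] at h0
        exact hk0 (by linear_combination h0)) (by norm_num) (by
      intro k hk hR
      have hk0 : 0 < ‖k‖ := lt_of_lt_of_le (by positivity) hR
      rw [hF₂ k (norm_pos_iff.1 hk0), norm_div, le_div_iff₀ hk0]
      have := norm_sub_le (k + Complex.I / (2 * η) *
        (1 + (-1) * Complex.exp (2 * Complex.I * κ * k))) (Complex.I / (2 * η) *
        (1 + (-1) * Complex.exp (2 * Complex.I * κ * k)))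
      rw [add_sub_cancel_right] at this
      have := hbig k hk (-1) (by simp)
      have : 2 / η = 2 * (1 / η) := by ring
      linarith)
  -- linear lower bound for the first factor
  have h₁' : ∀ k : ℂ, 0 ≤ k.im → c₁ / (c₁ + 1 / η + 1) * (1 + ‖k‖) ≤ ‖k + Complex.I / (2 * η) *
      (1 + 1 * Complex.exp (2 * Complex.I * κ * k))‖ := by
    intro k hk
    have ha := h₁ k hk
    have hb := norm_sub_le (k + Complex.I / (2 * η) *
        (1 + 1 * Complex.exp (2 * Complex.I * κ * k))) (Complex.I / (2 * η) *
        (1 + 1 * Complex.exp (2 * Complex.I * κ * k)))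
    rw [add_sub_cancel_right] at hb
    have hc := hbig k hk 1 norm_one
    have hη1 : 0 < 1 / η := by positivity
    rw [div_mul_eq_mul_div, div_le_iff₀ (by positivity)]
    set X := ‖k + Complex.I / (2 * η) * (1 + 1 * Complex.exp (2 * Complex.I * κ * k))‖
    nlinarith
  refine ⟨c₁ / (c₁ + 1 / η + 1) * c₂, by positivity, fun k e q hk hk0 he hq => ?_⟩
  have hkn : 0 < ‖k‖ := norm_pos_iff.2 hk0
  have hfac : (1 + q * Complex.I) ^ 2 + q ^ 2 * e ^ 2 =
      (k + Complex.I / (2 * η) * (1 + 1 * Complex.exp (2 * Complex.I * κ * k))) *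
        (1 - Complex.I / (2 * η) * g k) / k := by
    rw [hF₂ k hk0, hq, ← he]
    field_simp
    linear_combination (e ^ 2) * hI
  rw [hfac, norm_div, norm_mul, le_div_iff₀ hkn]
  calc c₁ / (c₁ + 1 / η + 1) * c₂ * (1 + 1 / ‖k‖) * ‖k‖
      = (c₁ / (c₁ + 1 / η + 1) * (1 + ‖k‖)) * c₂ := by field_simp; ring
    _ ≤ _ := mul_le_mul (h₁' k hk) (h₂ k hk) hc₂.le (norm_nonneg _)

/-- Lower bound near `0` for the principal part of the coefficient of the growing exponential. -/
lemma exists_lower_bound_growing_small (κ η : ℝ) (hκ : 0 < κ) (hη : 0 < η) : ∃ k₀ : ℝ, 0 < k₀ ∧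
    ∀ k e q : ℂ, k ≠ 0 → ‖k‖ ≤ k₀ → e = Complex.exp (2 * Complex.I * κ * k) →
    q = 1 / (2 * η * k) → 1 ≤ ‖(1 + q * Complex.I) + e ^ 2 * (1 - q * Complex.I)‖ := by
  have hηC : (η : ℂ) ≠ 0 := by exact_mod_cast hη.ne'
  have hI := Complex.I_sq
  set g := dslope (fun k : ℂ => Complex.exp (2 * Complex.I * (2 * κ : ℝ) * k)) 0 with hg
  have hgc : Continuous g := continuous_dslope_exp_I (2 * κ)
  have hc : Continuous (fun k : ℂ => ‖1 + Complex.exp (2 * Complex.I * (2 * κ : ℝ) * k) -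
      Complex.I / (2 * η) * g k‖) := by fun_prop
  have h0 : 1 < ‖1 + Complex.exp (2 * Complex.I * (2 * κ : ℝ) * 0) -
      Complex.I / (2 * η) * g 0‖ := by
    rw [hg, dslope_exp_I_zero]
    rw [show 1 + Complex.exp (2 * Complex.I * (2 * κ : ℝ) * 0) - Complex.I / (2 * η) *
      (2 * Complex.I * (2 * κ : ℝ)) = ((2 + 2 * κ / η : ℝ) : ℂ) by
        push_cast
        rw [mul_zero, Complex.exp_zero]
        field_simp
        linear_combination (-2 * κ) * hI, Complex.norm_real, Real.norm_of_nonneg (by positivity)]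
    have : 0 < 2 * κ / η := by positivity
    linarith
  obtain ⟨δ, hδ, hball⟩ := Metric.eventually_nhds_iff.1 (hc.continuousAt.eventually_const_lt h0)
  refine ⟨δ / 2, by positivity, fun k e q hk hkδ he hq => ?_⟩
  have h := hball (y := k) (by rw [dist_zero_right]; linarith)
  refine h.le.trans (le_of_eq ?_)
  congr 1
  have he2 : Complex.exp (2 * Complex.I * (2 * κ : ℝ) * k) = e ^ 2 := by
    rw [he, ← Complex.exp_nat_mul]; congr 1; push_cast; ring
  rw [hg, dslope_exp_I_of_ne _ hk, he2, hq]
  field_simp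
  ring

/-- Lower bound for the principal part of the coefficient of the growing exponential. -/
lemma lower_bound_growing {κ η : ℝ} (hκ : 0 < κ) (hη : 0 < η) {k e q : ℂ} (hk : 0 ≤ k.im)
    (he : e = Complex.exp (2 * Complex.I * κ * k)) (hq : q = 1 / (2 * η * k)) :
    min (1 / 2) (2 * κ * k.im) ≤ ‖(1 + q * Complex.I) + e ^ 2 * (1 - q * Complex.I)‖ := by
  have hqre : 0 ≤ (q * Complex.I).re := by
    rw [hq, show (1 / (2 * η * k) * Complex.I : ℂ) = ((1 / (2 * η) : ℝ) : ℂ) * (Complex.I * k⁻¹) by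
      push_cast; ring, Complex.re_ofReal_mul, Complex.I_mul_re, Complex.inv_im]
    have : 0 ≤ k.im / Complex.normSq k := div_nonneg hk (Complex.normSq_nonneg _)
    have h2 : -(-k.im / Complex.normSq k) = k.im / Complex.normSq k := by ring
    rw [h2]
    positivity
  have h1 : 1 ≤ ‖1 + q * Complex.I‖ := by
    refine le_trans ?_ (Complex.re_le_norm _)
    rw [Complex.add_re, Complex.one_re]
    linarith
  have h2 : ‖1 - q * Complex.I‖ ≤ ‖1 + q * Complex.I‖ := by
    rw [← sq_le_sq₀ (norm_nonneg _) (norm_nonneg _), ← Complex.normSq_eq_norm_sq,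
      ← Complex.normSq_eq_norm_sq, Complex.normSq_apply, Complex.normSq_apply, Complex.add_re,
      Complex.add_im, Complex.sub_re, Complex.sub_im, Complex.one_re, Complex.one_im]
    nlinarith
  have hen : ‖e ^ 2‖ = rexp (-(4 * κ * k.im)) := by
    rw [norm_pow, he, Complex.norm_exp, ← Real.exp_nat_mul]
    congr 1
    simp [Complex.mul_re, Complex.mul_im]
    ring
  have h3 := norm_sub_norm_le (1 + q * Complex.I) (-(e ^ 2 * (1 - q * Complex.I)))
  rw [sub_neg_eq_add, norm_neg, norm_mul] at h3
  have hx : 0 ≤ 4 * κ * k.im := by positivity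
  set x := 4 * κ * k.im with hxd
  have hexp : rexp (-x) ≤ 1 / (1 + x) := by
    rw [Real.exp_neg, ← one_div]
    exact one_div_le_one_div_of_le (by linarith) (by linarith [Real.add_one_le_exp x])
  have hexp1 : rexp (-x) ≤ 1 := Real.exp_le_one_iff.2 (by linarith)
  have h4 : 1 - rexp (-x) ≤ ‖(1 + q * Complex.I) + e ^ 2 * (1 - q * Complex.I)‖ := by
    have : ‖e ^ 2‖ * ‖1 - q * Complex.I‖ ≤ rexp (-x) * ‖1 + q * Complex.I‖ := by
      rw [hen]; gcongr
    nlinarith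
  refine le_trans ?_ h4
  rcases le_total x 1 with hx1 | hx1
  · refine (min_le_right _ _).trans ?_
    have : 1 / (1 + x) ≤ 1 - x / 2 := by
      rw [div_le_iff₀ (by linarith)]; nlinarith
    linarith
  · refine (min_le_left _ _).trans ?_
    have : 1 / (1 + x) ≤ 1 / 2 := one_div_le_one_div_of_le (by norm_num) (by linarith)
    linarith

/-- The admissible size `(1 + x) log(1/f + x²)` of errors at `|k| = x`. -/
noncomputable def resE (f x : ℝ) : ℝ := (1 + x) * Real.log (f⁻¹ + x ^ 2)

/-- The exponent `(4/(3f)) Im k³`. -/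
noncomputable def resS (f : ℝ) (k : ℂ) : ℝ := 4 / (3 * f) * (k ^ 3).im

/-- The set of parameters for which the Airy asymptotics are effective. -/
structure AiryRegime (τ f : ℝ) (k : ℂ) : Prop where
  pos : 0 < f
  small : f ≤ τ
  large : f ≤ τ * ‖k‖ ^ 4
  re_nonneg : 0 ≤ k.re
  im_nonneg : 0 ≤ k.im
  ne_zero : k ≠ 0

lemma AiryRegime.mono {τ τ' f : ℝ} {k : ℂ} (h : AiryRegime τ f k) (hτ : τ ≤ τ') :
    AiryRegime τ' f k :=
  ⟨h.pos, h.small.trans hτ, h.large.trans (by gcongr), h.re_nonneg, h.im_nonneg, h.ne_zero⟩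

lemma AiryRegime.div_pow_le {τ f : ℝ} {k : ℂ} (h : AiryRegime τ f k) {j : ℕ} (hj : j ≤ 4) :
    f / ‖k‖ ^ j ≤ τ := by
  have hx : 0 < ‖k‖ := norm_pos_iff.2 h.ne_zero
  have hf := h.pos
  rcases le_total 1 ‖k‖ with h1 | h1
  · exact (div_le_self hf.le (one_le_pow₀ h1)).trans h.small
  · have : ‖k‖ ^ 4 ≤ ‖k‖ ^ j := pow_le_pow_of_le_one hx.le h1 hj
    calc f / ‖k‖ ^ j ≤ f / ‖k‖ ^ 4 := by gcongr
      _ ≤ τ := by rw [div_le_iff₀ (by positivity)]; exact h.large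

lemma AiryRegime.airyEps_le {τ f : ℝ} {k : ℂ} (h : AiryRegime τ f k) :
    0 ≤ airyEps f ‖k‖ ∧ airyEps f ‖k‖ ≤ 2 * τ ∧ 1 / ‖k‖ * airyEps f ‖k‖ ≤ 2 * τ := by
  have hx : 0 < ‖k‖ := norm_pos_iff.2 h.ne_zero
  have hf := h.pos
  have h1 := h.div_pow_le (j := 1) (by norm_num)
  have h2 := h.div_pow_le (j := 2) (by norm_num)
  have h3 := h.div_pow_le (j := 3) (by norm_num)
  have h4 := h.div_pow_le (j := 4) (by norm_num)
  rw [pow_one] at h1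
  refine ⟨by unfold airyEps; positivity, by unfold airyEps; linarith, ?_⟩
  rw [airyEps, show 1 / ‖k‖ * (f / ‖k‖ ^ 3 + f / ‖k‖) = f / ‖k‖ ^ 4 + f / ‖k‖ ^ 2 by field_simp]
  linarith

lemma AiryRegime.scales {τ f : ℝ} {k : ℂ} (h : AiryRegime τ f k) (hτ : τ ≤ 1 / 4) :
    1 ≤ Real.log (f⁻¹ + ‖k‖ ^ 2) ∧ f⁻¹ ≤ rexp (Real.log (f⁻¹ + ‖k‖ ^ 2)) ∧
      ‖k‖ ≤ rexp (Real.log (f⁻¹ + ‖k‖ ^ 2)) ∧ 1 / ‖k‖ ≤ rexp (Real.log (f⁻¹ + ‖k‖ ^ 2)) ∧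
      Real.log (f⁻¹ + ‖k‖ ^ 2) ≤ resE f ‖k‖ ∧ ‖k‖ ≤ resE f ‖k‖ ∧ 1 ≤ resE f ‖k‖ ∧
      ‖k‖ * Real.log (f⁻¹ + ‖k‖ ^ 2) ≤ resE f ‖k‖ := by
  have hx : 0 < ‖k‖ := norm_pos_iff.2 h.ne_zero
  have hf := h.pos
  have hf4 : 4 ≤ f⁻¹ := by
    rw [le_inv_comm₀ (by norm_num) hf]; have := h.small; norm_num; linarith
  have hexp : rexp (Real.log (f⁻¹ + ‖k‖ ^ 2)) = f⁻¹ + ‖k‖ ^ 2 :=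
    Real.exp_log (by positivity)
  have hL : 1 ≤ Real.log (f⁻¹ + ‖k‖ ^ 2) := by
    rw [Real.le_log_iff_exp_le (by positivity)]
    have := Real.exp_one_lt_d9
    nlinarith [sq_nonneg ‖k‖]
  have hinvk : 1 / ‖k‖ ≤ f⁻¹ := by
    have := h.div_pow_le (j := 1) (by norm_num)
    rw [pow_one, div_le_iff₀ hx] at this
    rw [div_le_iff₀ hx, ← div_le_iff₀' (by positivity), div_inv_eq_mul, one_mul]
    nlinarith
  unfold resE
  set L := Real.log (f⁻¹ + ‖k‖ ^ 2)
  rw [hexp]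
  refine ⟨hL, by nlinarith [sq_nonneg ‖k‖], by nlinarith [sq_nonneg (‖k‖ - 1)],
    by nlinarith [sq_nonneg ‖k‖], by nlinarith, by nlinarith, by nlinarith, by nlinarith⟩

lemma norm_airyPhase (f : ℝ) (k : ℂ) : ‖airyPhase f k‖ = rexp (-resS f k) := by
  rw [airyPhase, Complex.norm_exp, resS]
  congr 1
  rw [show 4 * Complex.I * k ^ 3 / (3 * f) = ((4 / (3 * f) : ℝ) : ℂ) * (Complex.I * k ^ 3) by
    push_cast; ring, Complex.re_ofReal_mul, Complex.I_mul_re]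
  ring

lemma cube_im (k : ℂ) : (k ^ 3).im = k.im * (3 * k.re ^ 2 - k.im ^ 2) := by
  rw [pow_succ, sq, Complex.mul_im, Complex.mul_im, Complex.mul_re]; ring

lemma resS_nonneg_of_im_lt {f : ℝ} {k : ℂ} (hf : 0 < f) (hi : 0 ≤ k.im) (h : k.im < ‖k‖ / 2) :
    0 ≤ resS f k := by
  have hn := Complex.sq_norm_sub_sq_re k
  rw [resS, cube_im]
  have : 0 ≤ 3 * k.re ^ 2 - k.im ^ 2 := by nlinarith
  positivity

lemma resS_le {f : ℝ} {k : ℂ} (hf : 0 < f) (hi : 0 ≤ k.im) :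
    resS f k ≤ 4 * ‖k‖ ^ 2 * k.im / f := by
  have hn := Complex.sq_norm_sub_sq_re k
  rw [resS, cube_im]
  rw [show 4 / (3 * f) * (k.im * (3 * k.re ^ 2 - k.im ^ 2)) =
    4 * (k.re ^ 2 - k.im ^ 2 / 3) * k.im / f by field_simp]
  gcongr
  nlinarith

section Perturbation

variable {a a' b b' c e q : ℂ} {δ : ℝ}

lemma norm_det_sub_principal_le (he : ‖e‖ ≤ 1) (ha : ‖a‖ ≤ δ) (ha' : ‖a'‖ ≤ δ) (hb : ‖b‖ ≤ δ)
    (hc : ‖c‖ ≤ δ) :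
    ‖(1 + q * (Complex.I + a)) * (1 + q * (Complex.I + a')) -
        q ^ 2 * (ωc * e + b) * e * (-ωc ^ 2 + c) - ((1 + q * Complex.I) ^ 2 + q ^ 2 * e ^ 2)‖ ≤
      (1 + ‖q‖) * ‖q‖ * (4 * δ + 2 * δ ^ 2) := by
  have hδ : 0 ≤ δ := (norm_nonneg _).trans ha
  have hω := ωc_cube
  rw [show (1 + q * (Complex.I + a)) * (1 + q * (Complex.I + a')) -
        q ^ 2 * (ωc * e + b) * e * (-ωc ^ 2 + c) - ((1 + q * Complex.I) ^ 2 + q ^ 2 * e ^ 2) =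
      (1 + q * Complex.I) * q * (a + a') + q ^ 2 * (a * a' - e * (ωc * e * c - ωc ^ 2 * b + b * c))
      by linear_combination (q ^ 2 * e ^ 2) * hω]
  have h1 : ‖1 + q * Complex.I‖ ≤ 1 + ‖q‖ := by
    refine (norm_add_le _ _).trans ?_
    rw [norm_one, norm_mul, Complex.norm_I, mul_one]
  have h2 : ‖a + a'‖ ≤ 2 * δ := (norm_add_le _ _).trans (by linarith)
  have h3 : ‖ωc * e * c - ωc ^ 2 * b + b * c‖ ≤ 2 * δ + δ ^ 2 := by
    refine (norm_add_le _ _).trans ((add_le_add (norm_sub_le _ _) le_rfl).trans ?_)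
    rw [norm_mul, norm_mul, norm_mul, norm_mul, norm_pow, norm_ωc, one_mul, one_pow, one_mul]
    have : ‖e‖ * ‖c‖ ≤ 1 * δ := by gcongr
    have : ‖b‖ * ‖c‖ ≤ δ * δ := by gcongr
    nlinarith
  have h4 : ‖a * a' - e * (ωc * e * c - ωc ^ 2 * b + b * c)‖ ≤ 2 * δ + 2 * δ ^ 2 := by
    refine (norm_sub_le _ _).trans ?_
    rw [norm_mul, norm_mul]
    have : ‖a‖ * ‖a'‖ ≤ δ * δ := by gcongr
    have : ‖e‖ * ‖ωc * e * c - ωc ^ 2 * b + b * c‖ ≤ 1 * (2 * δ + δ ^ 2) := by gcongr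
    nlinarith
  refine (norm_add_le _ _).trans ?_
  rw [norm_mul, norm_mul, norm_mul, norm_pow]
  calc ‖1 + q * Complex.I‖ * ‖q‖ * ‖a + a'‖ +
        ‖q‖ ^ 2 * ‖a * a' - e * (ωc * e * c - ωc ^ 2 * b + b * c)‖
      ≤ (1 + ‖q‖) * ‖q‖ * (2 * δ) + ‖q‖ ^ 2 * (2 * δ + 2 * δ ^ 2) := by gcongr
    _ ≤ _ := by nlinarith [norm_nonneg q, mul_nonneg (norm_nonneg q) hδ,
        mul_nonneg (norm_nonneg q) (sq_nonneg δ)]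

lemma norm_one_add_mul_le (s : ℂ) (hs : ‖s‖ = 1) (ha : ‖a‖ ≤ δ) :
    ‖1 + s * q * (Complex.I + a)‖ ≤ (1 + ‖q‖) * (1 + δ) := by
  have hδ : 0 ≤ δ := (norm_nonneg _).trans ha
  refine (norm_add_le _ _).trans ?_
  rw [norm_one, norm_mul, norm_mul, hs, one_mul]
  have : ‖Complex.I + a‖ ≤ 1 + δ := by
    refine (norm_add_le _ _).trans ?_
    rw [Complex.norm_I]; linarith
  nlinarith [norm_nonneg q]

lemma norm_det_le (he : ‖e‖ ≤ 1) (ha : ‖a‖ ≤ δ) (ha' : ‖a'‖ ≤ δ) (hb : ‖b‖ ≤ δ)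
    (hc : ‖c‖ ≤ δ) :
    ‖(1 + q * (Complex.I + a)) * (1 + q * (Complex.I + a')) -
        q ^ 2 * (ωc * e + b) * e * (-ωc ^ 2 + c)‖ ≤ 2 * (1 + ‖q‖) ^ 2 * (1 + δ) ^ 2 := by
  have hδ : 0 ≤ δ := (norm_nonneg _).trans ha
  have h1 := norm_one_add_mul_le (q := q) 1 norm_one ha
  have h2 := norm_one_add_mul_le (q := q) 1 norm_one ha'
  rw [one_mul] at h1 h2
  have h3 : ‖ωc * e + b‖ ≤ 1 + δ := by
    refine (norm_add_le _ _).trans ?_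
    rw [norm_mul, norm_ωc, one_mul]; linarith
  have h4 : ‖-ωc ^ 2 + c‖ ≤ 1 + δ := by
    refine (norm_add_le _ _).trans ?_
    rw [norm_neg, norm_pow, norm_ωc, one_pow]; linarith
  refine (norm_sub_le _ _).trans ?_
  rw [norm_mul, norm_mul, norm_mul, norm_mul, norm_pow]
  calc _ ≤ ((1 + ‖q‖) * (1 + δ)) * ((1 + ‖q‖) * (1 + δ)) +
        ‖q‖ ^ 2 * (1 + δ) * 1 * (1 + δ) := by gcongr
    _ ≤ _ := by nlinarith [norm_nonneg q, sq_nonneg (1 + δ),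
        mul_nonneg (norm_nonneg q) (sq_nonneg (1 + δ))]

lemma norm_growing_le (he : ‖e‖ ≤ 1) (ha : ‖a‖ ≤ δ) (ha' : ‖a'‖ ≤ δ) (hb : ‖b‖ ≤ δ)
    (hb' : ‖b'‖ ≤ δ) :
    ‖(ωc * e + b) * e * (1 - q * (Complex.I + a')) + (ωc + b') * (1 + q * (Complex.I + a))‖ ≤
      2 * (1 + ‖q‖) * (1 + δ) ^ 2 := by
  have hδ : 0 ≤ δ := (norm_nonneg _).trans ha
  have h1 := norm_one_add_mul_le (q := q) 1 norm_one ha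
  have h2 := norm_one_add_mul_le (q := q) (-1) (by simp) ha'
  rw [one_mul] at h1
  rw [neg_one_mul, neg_mul, ← sub_eq_add_neg] at h2
  have h3 : ‖ωc * e + b‖ ≤ 1 + δ := by
    refine (norm_add_le _ _).trans ?_
    rw [norm_mul, norm_ωc, one_mul]; linarith
  have h4 : ‖ωc + b'‖ ≤ 1 + δ := by
    refine (norm_add_le _ _).trans ?_
    rw [norm_ωc]; linarith
  refine (norm_add_le _ _).trans ?_
  rw [norm_mul, norm_mul, norm_mul]
  calc _ ≤ (1 + δ) * 1 * ((1 + ‖q‖) * (1 + δ)) + (1 + δ) * ((1 + ‖q‖) * (1 + δ)) := by gcongr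
    _ = _ := by ring

lemma norm_growing_sub_principal_le (he : ‖e‖ ≤ 1) (ha : ‖a‖ ≤ δ) (ha' : ‖a'‖ ≤ δ)
    (hb : ‖b‖ ≤ δ) (hb' : ‖b'‖ ≤ δ) :
    ‖(ωc * e + b) * e * (1 - q * (Complex.I + a')) + (ωc + b') * (1 + q * (Complex.I + a)) -
      ωc * ((1 + q * Complex.I) + e ^ 2 * (1 - q * Complex.I))‖ ≤
      (1 + ‖q‖) * (4 * δ + 2 * δ ^ 2) := by
  have hδ : 0 ≤ δ := (norm_nonneg _).trans ha
  have h1 := norm_one_add_mul_le (q := q) 1 norm_one ha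
  have h2 := norm_one_add_mul_le (q := q) (-1) (by simp) ha'
  rw [one_mul] at h1
  rw [neg_one_mul, neg_mul, ← sub_eq_add_neg] at h2
  rw [show (ωc * e + b) * e * (1 - q * (Complex.I + a')) + (ωc + b') * (1 + q * (Complex.I + a)) -
      ωc * ((1 + q * Complex.I) + e ^ 2 * (1 - q * Complex.I)) =
      (ωc * q * a - ωc * q * a' * e ^ 2) + (b * e * (1 - q * (Complex.I + a')) +
        b' * (1 + q * (Complex.I + a))) by ring]
  refine (norm_add_le _ _).trans ((add_le_add (norm_sub_le _ _) (norm_add_le _ _)).trans ?_)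
  simp only [norm_mul, norm_ωc, one_mul, norm_pow]
  have he2 : ‖e‖ ^ 2 ≤ 1 := pow_le_one₀ (norm_nonneg _) he
  calc _ ≤ (‖q‖ * δ + ‖q‖ * δ * 1) + (δ * 1 * ((1 + ‖q‖) * (1 + δ)) +
        δ * ((1 + ‖q‖) * (1 + δ))) := by gcongr
    _ ≤ _ := by nlinarith [norm_nonneg q]

end Perturbation

lemma le_exp_self (x : ℝ) : x ≤ rexp x := by linarith [Real.add_one_le_exp x]

lemma le_exp_mul {M E : ℝ} (hM : 0 ≤ M) (hE : 1 ≤ E) : M ≤ rexp (M * E) :=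
  (le_exp_self M).trans (Real.exp_le_exp.2 (le_mul_of_one_le_right hM hE))

lemma exp_neg_mul_le {M E : ℝ} (hM : 0 < M) (hE : 1 ≤ E) : rexp (-(M * E)) ≤ 1 / M := by
  rw [Real.exp_neg, ← one_div]
  exact one_div_le_one_div_of_le hM (le_exp_mul hM.le hE)

lemma norm_exp_I_mul_ge (κ : ℝ) (hκ : 0 ≤ κ) (k : ℂ) :
    rexp (-(2 * κ * ‖k‖)) ≤ ‖Complex.exp (2 * Complex.I * κ * k)‖ := by
  rw [Complex.norm_exp]
  refine Real.exp_le_exp.2 ?_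
  have : (2 * Complex.I * κ * k).re = -(2 * κ * k.im) := by
    simp [Complex.mul_re, Complex.mul_im]
  rw [this]
  have := Complex.im_le_norm k
  have : 2 * κ * k.im ≤ 2 * κ * ‖k‖ := by gcongr
  linarith

lemma norm_reciprocal {η : ℝ} (hη : 0 < η) {k q : ℂ} (hq : q = 1 / (2 * η * k)) :
    ‖q‖ = 1 / (2 * η) * (1 / ‖k‖) := by
  rw [hq, norm_div, norm_mul, norm_mul, Complex.norm_real, Real.norm_of_nonneg hη.le, norm_one]
  norm_num
  ring

/-- In the region of exponential decay the Stokes contribution is negligible. -/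
lemma AiryRegime.stokes_le {τ f κ : ℝ} {k : ℂ} (h : AiryRegime τ f k) (hτ : τ ≤ 1 / 4)
    (hκ : 0 < κ) (hS : (2 * κ + 2) * resE f ‖k‖ ≤ resS f k) :
    2 * ‖airyPhase f k‖ * rexp (2 * κ * ‖k‖) *
      (1 + 2 * ‖airyPhase f k‖ * rexp (2 * κ * ‖k‖)) ≤ 6 * airyEps f ‖k‖ := by
  obtain ⟨hL, hfL, hxL, -, hLE, hxE, hE, -⟩ := h.scales hτ
  have hx : 0 < ‖k‖ := norm_pos_iff.2 h.ne_zero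
  have hf := h.pos
  set L := Real.log (f⁻¹ + ‖k‖ ^ 2)
  set E := resE f ‖k‖
  rw [norm_airyPhase]
  have hy : rexp (-resS f k) * rexp (2 * κ * ‖k‖) ≤ rexp (-L) * rexp (-L) := by
    rw [← Real.exp_add, ← Real.exp_add]
    refine Real.exp_le_exp.2 ?_
    nlinarith
  have h1 : rexp (-L) ≤ f := by
    rw [Real.exp_neg]; exact inv_le_of_inv_le₀ hf hfL
  have h2 : rexp (-L) ≤ 1 / ‖k‖ := by
    rw [Real.exp_neg, ← one_div]; exact one_div_le_one_div_of_le hx hxL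
  have h3 : rexp (-L) ≤ 1 := Real.exp_le_one_iff.2 (by linarith)
  have h4 : rexp (-L) * rexp (-L) ≤ f / ‖k‖ := by
    calc rexp (-L) * rexp (-L) ≤ f * (1 / ‖k‖) := by gcongr
      _ = f / ‖k‖ := by ring
  have h5 : rexp (-L) * rexp (-L) ≤ 1 := mul_le_one₀ h3 (Real.exp_pos _).le h3
  have h6 := (le_airyEps hf.le hx).2.2
  set y := rexp (-resS f k) * rexp (2 * κ * ‖k‖) with hyd
  have hy0 : 0 ≤ y := by positivity
  rw [show 2 * rexp (-resS f k) * rexp (2 * κ * ‖k‖) = 2 * y by rw [hyd]; ring]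
  have : y ≤ airyEps f ‖k‖ := by linarith
  nlinarith

lemma AiryRegime.stokes_le_exp {τ f κ : ℝ} {k : ℂ} (h : AiryRegime τ f k) (hτ : τ ≤ 1 / 4)
    (hκ : 0 < κ) (hi : k.im < ‖k‖ / 2) :
    2 * ‖airyPhase f k‖ * rexp (2 * κ * ‖k‖) *
      (1 + 2 * ‖airyPhase f k‖ * rexp (2 * κ * ‖k‖)) ≤ 6 * rexp (4 * κ * resE f ‖k‖) := by
  obtain ⟨hL, hfL, hxL, -, hLE, hxE, hE, -⟩ := h.scales hτ
  have hS := resS_nonneg_of_im_lt h.pos h.im_nonneg hi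
  set E := resE f ‖k‖
  rw [norm_airyPhase]
  set y := rexp (-resS f k) * rexp (2 * κ * ‖k‖) with hyd
  have hy0 : 0 ≤ y := by positivity
  have hy : y ≤ rexp (2 * κ * E) := by
    rw [hyd, ← Real.exp_add]
    refine Real.exp_le_exp.2 ?_
    nlinarith
  have h1 : 1 ≤ rexp (2 * κ * E) := Real.one_le_exp (by positivity)
  rw [show 2 * rexp (-resS f k) * rexp (2 * κ * ‖k‖) = 2 * y by rw [hyd]; ring,
    show 4 * κ * E = 2 * κ * E + 2 * κ * E by ring, Real.exp_add]
  nlinarith [mul_le_mul hy hy hy0 (by positivity), mul_le_mul h1 hy hy0 (by positivity)]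

lemma norm_Df_conj (κ η f : ℝ) (z : ℂ) :
    ‖Df κ η f (starRingEnd ℂ z)‖ = ‖starRingEnd ℂ (Df κ η f (starRingEnd ℂ z))‖ :=
  (RCLike.norm_conj _).symm

set_option maxHeartbeats 1000000 in
/-- Upper bounds for the determinant. -/
lemma exists_upper_bound_Df (κ η : ℝ) (hκ : 0 < κ) (hη : 0 < η) : ∃ τ C : ℝ, 0 < τ ∧ τ ≤ 1 / 4 ∧
    0 < C ∧ ∀ (f : ℝ) (k : ℂ), AiryRegime τ f k →
      ‖Df κ η f (k ^ 2)‖ ≤ rexp (C * resE f ‖k‖) ∧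
      ‖Df κ η f (starRingEnd ℂ (k ^ 2))‖ ≤ rexp (max (resS f k) 0 + C * resE f ‖k‖) := by
  obtain ⟨B, hB, hexp⟩ := exists_resonance_expansion κ hκ
  set h := 1 / (2 * η) with hh
  have hh0 : 0 < h := by positivity
  set M := 128 * (1 + h) ^ 2 * B ^ 2 with hM
  have hM0 : 0 < M := by positivity
  have hM1 : 0 < 2 * M := by positivity
  refine ⟨1 / (4 * B), 2 * M + 2 + 10 * κ, by positivity, ?_, by positivity,
    fun f k hr => ?_⟩
  · rw [div_le_div_iff₀ (by positivity) (by norm_num)]; linarith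
  have hτ4 : 1 / (4 * B) ≤ 1 / 4 := by
    rw [div_le_div_iff₀ (by positivity) (by norm_num)]; linarith
  obtain ⟨hL, hfL, hxL, hxiL, hLE, hxE, hE, -⟩ := hr.scales hτ4
  obtain ⟨hε0, hε1, -⟩ := hr.airyEps_le
  have hBε : B * airyEps f ‖k‖ ≤ 1 := by
    calc B * airyEps f ‖k‖ ≤ B * (2 * (1 / (4 * B))) := by gcongr
      _ = 1 / 2 := by field_simp; norm_num
      _ ≤ 1 := by norm_num
  have hε2 : airyEps f ‖k‖ ≤ 1 := by linarith
  obtain ⟨ν, a, a', b, b', c, hν0, ha, ha', hb, hb', hc, hνi, hν, hD, hDc⟩ :=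
    hexp η f k _ _ _ hη hr.pos hr.re_nonneg hr.im_nonneg hr.ne_zero hBε rfl rfl rfl
  set e := Complex.exp (2 * Complex.I * κ * k) with he
  have hen : ‖e‖ ≤ 1 := norm_exp_I_mul_le_one hκ.le hr.im_nonneg
  have hen' := norm_exp_I_mul_ge κ hκ.le k
  rw [← he] at hen'
  set q : ℂ := 1 / (2 * η * k) with hq
  have hqn := norm_reciprocal hη hq
  rw [← hh] at hqn
  set E := resE f ‖k‖
  set L := Real.log (f⁻¹ + ‖k‖ ^ 2)
  have hE0 : 0 < E := by linarith
  have h1E : 1 ≤ rexp E := Real.one_le_exp hE0.le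
  have hLEe : rexp L ≤ rexp E := Real.exp_le_exp.2 hLE
  have hqE : ‖q‖ ≤ h * rexp E := by rw [hqn]; gcongr; linarith
  have hqE' : 1 + ‖q‖ ≤ (1 + h) * rexp E := by linarith
  have hexpκ : 1 ≤ rexp (4 * κ * E) := Real.one_le_exp (by positivity)
  have hνE : ν ≤ 7 * rexp (4 * κ * E) := by
    by_cases hi : ‖k‖ / 2 ≤ k.im
    · rw [hνi hi]; linarith
    · have := hr.stokes_le_exp hτ4 hκ (not_le.1 hi)
      linarith
  have hδE : 1 + B * ν ≤ 8 * B * rexp (4 * κ * E) := by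
    nlinarith [mul_le_mul hB hexpκ zero_le_one (by linarith)]
  have hBν : 0 ≤ B * ν := by positivity
  have hDb : ‖Df κ η f (k ^ 2)‖ ≤ M * rexp ((2 + 8 * κ) * E) := by
    rw [hD]
    refine (norm_det_le hen ha ha' hb hc).trans ?_
    calc 2 * (1 + ‖q‖) ^ 2 * (1 + B * ν) ^ 2
        ≤ 2 * ((1 + h) * rexp E) ^ 2 * (8 * B * rexp (4 * κ * E)) ^ 2 := by gcongr
      _ = M * (rexp E * rexp E * (rexp (4 * κ * E) * rexp (4 * κ * E))) := by rw [hM]; ring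
      _ = M * rexp ((2 + 8 * κ) * E) := by
        rw [← Real.exp_add, ← Real.exp_add, ← Real.exp_add]; ring_nf
  have hMexp : 2 * M ≤ rexp (2 * M * E) := le_exp_mul (by positivity) hE
  have hfin : 2 * M * rexp ((2 + 10 * κ) * E) ≤ rexp ((2 * M + 2 + 10 * κ) * E) := by
    rw [show (2 * M + 2 + 10 * κ) * E = 2 * M * E + (2 + 10 * κ) * E by ring, Real.exp_add]
    gcongr
  have hmono : rexp ((2 + 8 * κ) * E) ≤ rexp ((2 + 10 * κ) * E) := by
    refine Real.exp_le_exp.2 ?_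
    have : 0 ≤ κ * E := by positivity
    nlinarith
  have hDb' : ‖Df κ η f (k ^ 2)‖ ≤ M * rexp ((2 + 10 * κ) * E) := hDb.trans (by gcongr)
  refine ⟨?_, ?_⟩
  · have : 0 ≤ M * rexp ((2 + 10 * κ) * E) := by positivity
    linarith
  · rw [norm_Df_conj, hDc]
    refine (norm_add_le _ _).trans ?_
    have hcoef : ‖ωc ^ 2 * q / (airyPhase f k * e)‖ ≤
        h * rexp E * (rexp (resS f k) * rexp (2 * κ * E)) := by
      rw [norm_div, norm_mul, norm_pow, norm_ωc, one_pow, one_mul, norm_mul, norm_airyPhase,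
        div_eq_mul_inv, mul_inv, ← Real.exp_neg, neg_neg]
      have : ‖e‖⁻¹ ≤ rexp (2 * κ * E) := by
        rw [inv_le_comm₀ (norm_pos_iff.2 (Complex.exp_ne_zero _)) (Real.exp_pos _), ← Real.exp_neg]
        refine le_trans (Real.exp_le_exp.2 ?_) hen'
        have : 2 * κ * ‖k‖ ≤ 2 * κ * E := by gcongr
        linarith
      gcongr
    have hprod : ‖ωc ^ 2 * q / (airyPhase f k * e) *
        ((ωc * e + b) * e * (1 - q * (Complex.I + a')) + (ωc + b') * (1 + q * (Complex.I + a)))‖ ≤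
        M * rexp ((2 + 10 * κ) * E) * rexp (resS f k) := by
      rw [norm_mul]
      calc _ ≤ h * rexp E * (rexp (resS f k) * rexp (2 * κ * E)) *
            (2 * (1 + ‖q‖) * (1 + B * ν) ^ 2) := by
              gcongr
              exact norm_growing_le hen ha ha' hb hb'
        _ ≤ (1 + h) * rexp E * (rexp (resS f k) * rexp (2 * κ * E)) *
            (2 * ((1 + h) * rexp E) * (8 * B * rexp (4 * κ * E)) ^ 2) := by
              gcongr; linarith
        _ = M * (rexp E * rexp E * rexp (2 * κ * E) * (rexp (4 * κ * E) * rexp (4 * κ * E))) *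
            rexp (resS f k) := by rw [hM]; ring
        _ = _ := by
          rw [← Real.exp_add, ← Real.exp_add, ← Real.exp_add, ← Real.exp_add]; ring_nf
    rw [Real.exp_add]
    have h0 : 1 ≤ rexp (max (resS f k) 0) := Real.one_le_exp (le_max_right _ _)
    have h1 : rexp (resS f k) ≤ rexp (max (resS f k) 0) := Real.exp_le_exp.2 (le_max_left _ _)
    have hP : 0 ≤ M * rexp ((2 + 10 * κ) * E) := by positivity
    calc _ ≤ M * rexp ((2 + 10 * κ) * E) + M * rexp ((2 + 10 * κ) * E) * rexp (resS f k) :=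
          add_le_add hDb' hprod
      _ ≤ M * rexp ((2 + 10 * κ) * E) * rexp (max (resS f k) 0) +
          M * rexp ((2 + 10 * κ) * E) * rexp (max (resS f k) 0) :=
            add_le_add (le_mul_of_one_le_right hP h0) (mul_le_mul_of_nonneg_left h1 hP)
      _ = rexp (max (resS f k) 0) * (2 * M * rexp ((2 + 10 * κ) * E)) := by ring
      _ ≤ _ := by gcongr

/-- Away from the transition region the relative error is of the size of the Airy parameter. -/
lemma AiryRegime.error_le {τ f κ : ℝ} {k : ℂ} (h : AiryRegime τ f k) (hτ : τ ≤ 1 / 4)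
    (hκ : 0 < κ) {ν : ℝ} (hνi : ‖k‖ / 2 ≤ k.im → ν = airyEps f ‖k‖)
    (hν : ν ≤ airyEps f ‖k‖ + 2 * ‖airyPhase f k‖ * rexp (2 * κ * ‖k‖) *
      (1 + 2 * ‖airyPhase f k‖ * rexp (2 * κ * ‖k‖)))
    (hgood : ‖k‖ / 2 ≤ k.im ∨ (2 * κ + 2) * resE f ‖k‖ ≤ resS f k) :
    ν ≤ 7 * airyEps f ‖k‖ := by
  rcases hgood with hi | hS
  · rw [hνi hi]; linarith [h.airyEps_le.1]
  · linarith [h.stokes_le hτ hκ hS]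

/-- Outside the transition region the determinant is bounded below on the upper half plane. -/
lemma exists_lower_bound_Df (κ η : ℝ) (hκ : 0 < κ) (hη : 0 < η) : ∃ τ c₀ : ℝ, 0 < τ ∧ τ ≤ 1 / 4 ∧
    0 < c₀ ∧ ∀ (f : ℝ) (k : ℂ), AiryRegime τ f k →
      (‖k‖ / 2 ≤ k.im ∨ (2 * κ + 2) * resE f ‖k‖ ≤ resS f k) → c₀ ≤ ‖Df κ η f (k ^ 2)‖ := by
  obtain ⟨B, hB, hexp⟩ := exists_resonance_expansion κ hκ
  obtain ⟨c, hc0, hprin⟩ := exists_lower_bound_principal κ η hκ hη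
  set h := 1 / (2 * η) with hh
  have hh0 : 0 < h := by positivity
  set τ := min (1 / (14 * B)) (c / (168 * B * h * (1 + h))) with hτd
  have hτ1 : τ ≤ 1 / (14 * B) := min_le_left _ _
  have hτ2 : τ ≤ c / (168 * B * h * (1 + h)) := min_le_right _ _
  have hτ0 : 0 < τ := lt_min (by positivity) (by positivity)
  have hτ4 : τ ≤ 1 / 4 := by
    refine hτ1.trans ?_
    rw [div_le_div_iff₀ (by positivity) (by norm_num)]; linarith
  refine ⟨τ, c / 2, hτ0, hτ4, by positivity, fun f k hr hgood => ?_⟩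
  obtain ⟨hε0, hε1, hε2⟩ := hr.airyEps_le
  have hx : 0 < ‖k‖ := norm_pos_iff.2 hr.ne_zero
  have hBτ : 14 * B * τ ≤ 1 := by
    rw [le_div_iff₀ (by positivity)] at hτ1; linarith
  have hBε : B * airyEps f ‖k‖ ≤ B * (2 * τ) := by gcongr
  obtain ⟨ν, a, a', b, b', c', hν0, ha, ha', hb, hb', hc', hνi, hν, hD, -⟩ :=
    hexp η f k _ _ _ hη hr.pos hr.re_nonneg hr.im_nonneg hr.ne_zero
      (by nlinarith) rfl rfl rfl
  have hν7 := hr.error_le hτ4 hκ hνi hν hgood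
  have hd := hprin k _ _ hr.im_nonneg hr.ne_zero rfl rfl
  set e := Complex.exp (2 * Complex.I * κ * k) with he
  have hen : ‖e‖ ≤ 1 := norm_exp_I_mul_le_one hκ.le hr.im_nonneg
  set q : ℂ := 1 / (2 * η * k) with hq
  have hqn := norm_reciprocal hη hq
  rw [← hh] at hqn
  have hpert := norm_det_sub_principal_le (q := q) hen ha ha' hb hc'
  rw [← hD] at hpert
  have hδ1 : B * ν ≤ B * (7 * airyEps f ‖k‖) := by gcongr
  have hδ2 : B * ν ≤ 1 := by linarith
  have hδ0 : 0 ≤ B * ν := by positivity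
  have h6 : 4 * (B * ν) + 2 * (B * ν) ^ 2 ≤ 42 * B * airyEps f ‖k‖ := by nlinarith
  have hq1 : 1 + ‖q‖ ≤ (1 + h) * (1 + 1 / ‖k‖) := by
    rw [hqn]; have : 0 < 1 / ‖k‖ := by positivity
    nlinarith
  have herr : (1 + ‖q‖) * ‖q‖ * (4 * (B * ν) + 2 * (B * ν) ^ 2) ≤ c / 2 * (1 + 1 / ‖k‖) := by
    calc _ ≤ ((1 + h) * (1 + 1 / ‖k‖)) * ‖q‖ * (42 * B * airyEps f ‖k‖) := by gcongr
      _ = (1 + h) * (1 + 1 / ‖k‖) * (42 * B * h) * (1 / ‖k‖ * airyEps f ‖k‖) := by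
        rw [hqn]; ring
      _ ≤ (1 + h) * (1 + 1 / ‖k‖) * (42 * B * h) * (2 * (c / (168 * B * h * (1 + h)))) :=
        mul_le_mul_of_nonneg_left (by linarith) (by positivity)
      _ = _ := by field_simp; norm_num
  have htri : ‖(1 + q * Complex.I) ^ 2 + q ^ 2 * e ^ 2‖ ≤ ‖Df κ η f (k ^ 2)‖ +
      ‖Df κ η f (k ^ 2) - ((1 + q * Complex.I) ^ 2 + q ^ 2 * e ^ 2)‖ := by
    rw [norm_sub_rev]
    have := norm_sub_norm_le ((1 + q * Complex.I) ^ 2 + q ^ 2 * e ^ 2) (Df κ η f (k ^ 2))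
    linarith
  have : c / 2 * 1 ≤ c / 2 * (1 + 1 / ‖k‖) := by
    gcongr
    have : 0 < 1 / ‖k‖ := by positivity
    linarith
  linarith

set_option maxHeartbeats 1000000 in
/-- In the lower half plane, below the region of decay, the determinant is exponentially large. -/
lemma exists_lower_bound_Df_growing (κ η : ℝ) (hκ : 0 < κ) (hη : 0 < η) : ∃ τ C K : ℝ, 0 < τ ∧
    τ ≤ 1 / 4 ∧ 0 < C ∧ 0 < K ∧ ∀ (f : ℝ) (k : ℂ), AiryRegime τ f k →
      K * resE f ‖k‖ ≤ resS f k →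
      rexp (resS f k - C * resE f ‖k‖) ≤ ‖Df κ η f (starRingEnd ℂ (k ^ 2))‖ := by
  obtain ⟨B, hB, hexp⟩ := exists_resonance_expansion κ hκ
  obtain ⟨τ₁, C₁, hτ₁, -, hC₁, hup⟩ := exists_upper_bound_Df κ η hκ hη
  obtain ⟨k₀, hk₀, hsmall⟩ := exists_lower_bound_growing_small κ η hκ hη
  set h := 1 / (2 * η) with hh
  have hh0 : 0 < h := by positivity
  set C₃ := 42 * B * (1 + h / k₀) * (1 + 1 / k₀ ^ 2) with hC₃
  have hC₃1 : 1 ≤ C₃ := by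
    have h1 : 1 ≤ 1 + h / k₀ := by have : 0 < h / k₀ := by positivity
                                   linarith
    have h2 : 1 ≤ 1 + 1 / k₀ ^ 2 := by have : 0 < 1 / k₀ ^ 2 := by positivity
                                       linarith
    have h3 : 1 ≤ 42 * B := by linarith
    exact one_le_mul_of_one_le_of_one_le (one_le_mul_of_one_le_of_one_le h3 h1) h2
  set τ := min τ₁ (min (1 / (168 * B * (1 + h))) (1 / (4 * C₃))) with hτd
  have hτ1 : τ ≤ τ₁ := min_le_left _ _
  have hτ2 : τ ≤ 1 / (168 * B * (1 + h)) := (min_le_right _ _).trans (min_le_left _ _)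
  have hτ3 : τ ≤ 1 / (4 * C₃) := (min_le_right _ _).trans (min_le_right _ _)
  have hτ0 : 0 < τ := lt_min hτ₁ (lt_min (by positivity) (by positivity))
  have hτ4 : τ ≤ 1 / 4 := by
    refine hτ3.trans ?_
    rw [div_le_div_iff₀ (by positivity) (by norm_num)]; linarith
  set C := 3 + 4 / h with hC
  set K := C₁ + C + 4 * C₃ / κ + (2 * κ + 2) with hK
  refine ⟨τ, C, K, hτ0, hτ4, by positivity, by positivity, fun f k hr hS => ?_⟩
  obtain ⟨hε0, hε1, hε2⟩ := hr.airyEps_le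
  obtain ⟨hL, hfL, hxL, hxiL, hLE, hxE, hE, hxLE⟩ := hr.scales hτ4
  have hx : 0 < ‖k‖ := norm_pos_iff.2 hr.ne_zero
  have hf := hr.pos
  have hBτ : 168 * B * (1 + h) * τ ≤ 1 := by
    rw [le_div_iff₀ (by positivity)] at hτ2; linarith
  have hBτ' : 168 * (B * τ) ≤ 1 := by
    have : 0 ≤ B * h * τ := by positivity
    nlinarith
  have hC₃τ : C₃ * τ ≤ 1 / 4 := by
    rw [le_div_iff₀ (by positivity)] at hτ3; linarith
  have hBε : B * airyEps f ‖k‖ ≤ B * (2 * τ) := by gcongr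
  obtain ⟨ν, a, a', b, b', c', hν0, ha, ha', hb, hb', hc', hνi, hν, -, hDc⟩ :=
    hexp η f k _ _ _ hη hr.pos hr.re_nonneg hr.im_nonneg hr.ne_zero
      (by nlinarith) rfl rfl rfl
  set E := resE f ‖k‖ with hEd
  set L := Real.log (f⁻¹ + ‖k‖ ^ 2)
  set S := resS f k with hSd
  have hE0 : 0 < E := by linarith
  have hKS : (2 * κ + 2) * E ≤ S := by
    refine le_trans ?_ hS
    have : 2 * κ + 2 ≤ K := by
      have : 0 < C₁ + C + 4 * C₃ / κ := by positivity
      linarith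
    gcongr
  have hν7 := hr.error_le hτ4 hκ hνi hν (Or.inr hKS)
  have hsm := fun hk => hsmall k _ _ hr.ne_zero hk rfl rfl
  have hlb := lower_bound_growing hκ hη hr.im_nonneg rfl rfl
  set e := Complex.exp (2 * Complex.I * κ * k) with he
  have hen : ‖e‖ ≤ 1 := norm_exp_I_mul_le_one hκ.le hr.im_nonneg
  have hen0 : 0 < ‖e‖ := norm_pos_iff.2 (Complex.exp_ne_zero _)
  set q : ℂ := 1 / (2 * η * k) with hq
  have hqn := norm_reciprocal hη hq
  rw [← hh] at hqn
  have hδ1 : B * ν ≤ B * (7 * airyEps f ‖k‖) := by gcongr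
  have hδ2 : B * ν ≤ 1 := by linarith
  have hδ0 : 0 ≤ B * ν := by positivity
  have h6 : 4 * (B * ν) + 2 * (B * ν) ^ 2 ≤ 42 * B * airyEps f ‖k‖ := by nlinarith
  have hpert := norm_growing_sub_principal_le (q := q) hen ha ha' hb hb'
  set m := (ωc * e + b) * e * (1 - q * (Complex.I + a')) +
    (ωc + b') * (1 + q * (Complex.I + a)) with hm
  set m₀ := (1 + q * Complex.I) + e ^ 2 * (1 - q * Complex.I) with hm₀
  have hmlow : ‖m₀‖ - (1 + ‖q‖) * (42 * B * airyEps f ‖k‖) ≤ ‖m‖ := by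
    have h1 : ‖ωc * m₀‖ = ‖m₀‖ := by rw [norm_mul, norm_ωc, one_mul]
    have h2 := norm_sub_norm_le (ωc * m₀) m
    rw [norm_sub_rev, h1] at h2
    have h3 : (1 + ‖q‖) * (4 * (B * ν) + 2 * (B * ν) ^ 2) ≤
      (1 + ‖q‖) * (42 * B * airyEps f ‖k‖) := by gcongr
    linarith
  have hexpE2 : rexp (-(2 * E)) ≤ f / ‖k‖ := by
    have h1 : rexp (-E) ≤ f := by
      rw [Real.exp_neg]
      exact inv_le_of_inv_le₀ hf (hfL.trans (Real.exp_le_exp.2 hLE))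
    have h2 : rexp (-E) ≤ 1 / ‖k‖ := by
      rw [Real.exp_neg, ← one_div]
      exact one_div_le_one_div_of_le hx (hxL.trans (Real.exp_le_exp.2 hLE))
    calc rexp (-(2 * E)) = rexp (-E) * rexp (-E) := by rw [← Real.exp_add]; ring_nf
      _ ≤ f * (1 / ‖k‖) := by gcongr
      _ = f / ‖k‖ := by ring
  have hmbd : 1 / 2 * rexp (-(2 * E)) ≤ ‖m‖ := by
    rcases le_total ‖k‖ k₀ with hk | hk
    · have h1 := hsm hk
      have h2 : (1 + ‖q‖) * (42 * B * airyEps f ‖k‖) ≤ 1 / 2 := by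
        calc _ = 42 * B * airyEps f ‖k‖ + 42 * B * h * (1 / ‖k‖ * airyEps f ‖k‖) := by
              rw [hqn]; ring
          _ ≤ 42 * B * (2 * τ) + 42 * B * h * (2 * τ) := by gcongr
          _ = 1 / 2 * (168 * B * (1 + h) * τ) := by ring
          _ ≤ 1 / 2 := by linarith
      have h3 : rexp (-(2 * E)) ≤ 1 := Real.exp_le_one_iff.2 (by linarith)
      linarith
    · have h1 : (1 + ‖q‖) * (42 * B * airyEps f ‖k‖) ≤ C₃ * (f / ‖k‖) := by
        calc _ = 42 * B * (1 + h * (1 / ‖k‖)) * (1 + 1 / ‖k‖ ^ 2) * (f / ‖k‖) := by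
              rw [hqn, airyEps]; field_simp; ring
          _ ≤ 42 * B * (1 + h * (1 / k₀)) * (1 + 1 / k₀ ^ 2) * (f / ‖k‖) := by gcongr
          _ = _ := by rw [hC₃]; ring
      have h2 : 2 * C₃ * (f / ‖k‖) ≤ 1 / 2 := by
        have := hr.div_pow_le (j := 1) (by norm_num)
        rw [pow_one] at this
        calc 2 * C₃ * (f / ‖k‖) ≤ 2 * C₃ * τ := by gcongr
          _ ≤ 1 / 2 := by linarith
      have h3 : 2 * C₃ * (f / ‖k‖) ≤ 2 * κ * k.im := by
        have hs := resS_le hf hr.im_nonneg (k := k)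
        rw [← hSd, le_div_iff₀ hf] at hs
        have hKC : 4 * C₃ / κ ≤ K := by
          have : 0 < C₁ + C + (2 * κ + 2) := by positivity
          linarith
        have hxE' : ‖k‖ * 1 ≤ E := (mul_le_mul_of_nonneg_left hL hx.le).trans hxLE
        have h4 : 4 * C₃ / κ * (‖k‖ * 1) ≤ S := by
          refine le_trans ?_ hS
          gcongr
        have h5 : 4 * C₃ / κ * (‖k‖ * 1) * f ≤ 4 * ‖k‖ ^ 2 * k.im :=
          (mul_le_mul_of_nonneg_right h4 hf.le).trans hs
        rw [show 2 * C₃ * (f / ‖k‖) =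
          (4 * C₃ / κ * (‖k‖ * 1) * f) * (κ / (2 * ‖k‖ ^ 2)) by field_simp; norm_num,
          show 2 * κ * k.im = 4 * ‖k‖ ^ 2 * k.im * (κ / (2 * ‖k‖ ^ 2)) by field_simp; ring]
        gcongr
      have h4 : 2 * C₃ * (f / ‖k‖) ≤ ‖m₀‖ := (le_min h2 h3).trans hlb
      have h5 : 1 * (f / ‖k‖) ≤ C₃ * (f / ‖k‖) := by gcongr
      have := Real.exp_pos (-(2 * E))
      linarith
  have hcoef : h * rexp (-E) * rexp S ≤ ‖ωc ^ 2 * q / (airyPhase f k * e)‖ := by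
    rw [norm_div, norm_mul, norm_pow, norm_ωc, one_pow, one_mul, norm_mul, norm_airyPhase,
      div_eq_mul_inv, mul_inv, ← Real.exp_neg, neg_neg, hqn]
    have h1 : rexp (-E) ≤ 1 / ‖k‖ := by
      rw [Real.exp_neg, ← one_div]
      exact one_div_le_one_div_of_le hx (hxL.trans (Real.exp_le_exp.2 hLE))
    have h2 : 1 ≤ ‖e‖⁻¹ := (one_le_inv₀ hen0).2 hen
    calc h * rexp (-E) * rexp S = h * rexp (-E) * (rexp S * 1) := by ring
      _ ≤ _ := by gcongr
  have hDup := (hup f k (hr.mono hτ1)).1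
  rw [← hEd] at hDup
  have h4h : rexp (-(4 / h * E)) ≤ h / 4 := by
    have := exp_neg_mul_le (M := 4 / h) (by positivity) hE
    rwa [one_div_div] at this
  have hprod : 2 * rexp (S - C * E) ≤ ‖ωc ^ 2 * q / (airyPhase f k * e) * m‖ := by
    rw [norm_mul]
    calc 2 * rexp (S - C * E) = 2 * (rexp (-E) * rexp S * rexp (-(2 * E)) *
          rexp (-(4 / h * E))) := by
          rw [← Real.exp_add, ← Real.exp_add, ← Real.exp_add]
          congr 2
          rw [hC]; ring
      _ ≤ 2 * (rexp (-E) * rexp S * rexp (-(2 * E)) * (h / 4)) := by gcongr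
      _ = h * rexp (-E) * rexp S * (1 / 2 * rexp (-(2 * E))) := by ring
      _ ≤ _ := by gcongr
  have hDsmall : rexp (C₁ * E) ≤ rexp (S - C * E) := by
    refine Real.exp_le_exp.2 ?_
    have h1 : (C₁ + C) * E ≤ K * E := by
      have : 0 < 4 * C₃ / κ + (2 * κ + 2) := by positivity
      gcongr
      linarith
    linarith
  rw [norm_Df_conj, hDc]
  have htri := norm_sub_le (Df κ η f (k ^ 2) + ωc ^ 2 * q / (airyPhase f k * e) * m)
    (Df κ η f (k ^ 2))
  rw [add_sub_cancel_left] at htri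
  linarith

set_option maxHeartbeats 1000000 in
/-- In the lower half plane, in the region of decay, the determinant is bounded below. -/
lemma exists_lower_bound_Df_decaying (κ η : ℝ) (hκ : 0 < κ) (hη : 0 < η) : ∃ τ c K : ℝ, 0 < τ ∧
    τ ≤ 1 / 4 ∧ 0 < c ∧ 0 < K ∧ ∀ (f : ℝ) (k : ℂ), AiryRegime τ f k →
      resS f k ≤ -(K * resE f ‖k‖) → c ≤ ‖Df κ η f (starRingEnd ℂ (k ^ 2))‖ := by
  obtain ⟨B, hB, hexp⟩ := exists_resonance_expansion κ hκ
  obtain ⟨τ₁, c₀, hτ₁, -, hc₀, hlow⟩ := exists_lower_bound_Df κ η hκ hη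
  set h := 1 / (2 * η) with hh
  have hh0 : 0 < h := by positivity
  set τ := min τ₁ (1 / (4 * B)) with hτd
  have hτ1 : τ ≤ τ₁ := min_le_left _ _
  have hτ2 : τ ≤ 1 / (4 * B) := min_le_right _ _
  have hτ0 : 0 < τ := lt_min hτ₁ (by positivity)
  have hτ4 : τ ≤ 1 / 4 := by
    refine hτ2.trans ?_
    rw [div_le_div_iff₀ (by positivity) (by norm_num)]; linarith
  set M := 16 * h * (1 + h) / c₀ with hM
  have hM0 : 0 < M := by positivity
  refine ⟨τ, c₀ / 2, 2 + 2 * κ + M, hτ0, hτ4, by positivity, by positivity, fun f k hr hS => ?_⟩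
  obtain ⟨hε0, hε1, hε2⟩ := hr.airyEps_le
  obtain ⟨hL, hfL, hxL, hxiL, hLE, hxE, hE, hxLE⟩ := hr.scales hτ4
  have hE0 : 0 < resE f ‖k‖ := by linarith
  have him : ‖k‖ / 2 ≤ k.im := by
    by_contra hi
    have h1 := resS_nonneg_of_im_lt hr.pos hr.im_nonneg (not_le.1 hi)
    have h2 : 0 < (2 + 2 * κ + M) * resE f ‖k‖ := by positivity
    linarith
  have hBτ : 4 * B * τ ≤ 1 := by
    rw [le_div_iff₀ (by positivity)] at hτ2; linarith
  have hBε : B * airyEps f ‖k‖ ≤ 1 := by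
    calc B * airyEps f ‖k‖ ≤ B * (2 * τ) := by gcongr
      _ ≤ 1 := by linarith
  obtain ⟨ν, a, a', b, b', c', hν0, ha, ha', hb, hb', hc', hνi, hν, -, hDc⟩ :=
    hexp η f k _ _ _ hη hr.pos hr.re_nonneg hr.im_nonneg hr.ne_zero hBε rfl rfl rfl
  have hD := hlow f k (hr.mono hτ1) (Or.inl him)
  have hδ : B * ν ≤ 1 := by rwa [hνi him]
  have hδ0 : 0 ≤ B * ν := by positivity
  set E := resE f ‖k‖ with hEd
  set L := Real.log (f⁻¹ + ‖k‖ ^ 2)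
  set S := resS f k with hSd
  set e := Complex.exp (2 * Complex.I * κ * k) with he
  have hen : ‖e‖ ≤ 1 := norm_exp_I_mul_le_one hκ.le hr.im_nonneg
  have hen' := norm_exp_I_mul_ge κ hκ.le k
  rw [← he] at hen'
  set q : ℂ := 1 / (2 * η * k) with hq
  have hqn := norm_reciprocal hη hq
  rw [← hh] at hqn
  have hqE : ‖q‖ ≤ h * rexp E := by
    rw [hqn]; gcongr; exact hxiL.trans (Real.exp_le_exp.2 hLE)
  have h1E : 1 ≤ rexp E := Real.one_le_exp hE0.le
  have hqE' : 1 + ‖q‖ ≤ (1 + h) * rexp E := by linarith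
  have hcoef : ‖ωc ^ 2 * q / (airyPhase f k * e)‖ ≤
      h * rexp E * (rexp S * rexp (2 * κ * E)) := by
    rw [norm_div, norm_mul, norm_pow, norm_ωc, one_pow, one_mul, norm_mul, norm_airyPhase,
      div_eq_mul_inv, mul_inv, ← Real.exp_neg, neg_neg]
    have : ‖e‖⁻¹ ≤ rexp (2 * κ * E) := by
      rw [inv_le_comm₀ (norm_pos_iff.2 (Complex.exp_ne_zero _)) (Real.exp_pos _), ← Real.exp_neg]
      refine le_trans (Real.exp_le_exp.2 ?_) hen'
      have : 2 * κ * ‖k‖ ≤ 2 * κ * E := by gcongr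
      linarith
    gcongr
  have hgrow := norm_growing_le (q := q) hen ha ha' hb hb'
  set m := (ωc * e + b) * e * (1 - q * (Complex.I + a')) +
    (ωc + b') * (1 + q * (Complex.I + a)) with hm
  have hmE : ‖m‖ ≤ 8 * ((1 + h) * rexp E) := by
    calc ‖m‖ ≤ 2 * (1 + ‖q‖) * (1 + B * ν) ^ 2 := hgrow
      _ ≤ 2 * ((1 + h) * rexp E) * (1 + 1) ^ 2 := by gcongr
      _ = _ := by ring
  have hprod : ‖ωc ^ 2 * q / (airyPhase f k * e) * m‖ ≤ c₀ / 2 := by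
    rw [norm_mul]
    calc _ ≤ h * rexp E * (rexp S * rexp (2 * κ * E)) * (8 * ((1 + h) * rexp E)) := by gcongr
      _ = 8 * h * (1 + h) * (rexp E * rexp E * rexp S * rexp (2 * κ * E)) := by ring
      _ = 8 * h * (1 + h) * rexp (S + (2 + 2 * κ) * E) := by
        rw [← Real.exp_add, ← Real.exp_add, ← Real.exp_add]; ring_nf
      _ ≤ 8 * h * (1 + h) * rexp (-(M * E)) := by
        have : S + (2 + 2 * κ) * E ≤ -(M * E) := by linarith
        gcongr
      _ ≤ 8 * h * (1 + h) * (1 / M) := by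
        have := exp_neg_mul_le hM0 hE
        gcongr
      _ = c₀ / 2 := by rw [hM]; field_simp; norm_num
  rw [norm_Df_conj, hDc]
  have htri := norm_sub_le (Df κ η f (k ^ 2) + ωc ^ 2 * q / (airyPhase f k * e) * m)
    (ωc ^ 2 * q / (airyPhase f k * e) * m)
  rw [add_sub_cancel_right] at htri
  linarith

/-- A nonzero entire function has finitely many zeros in a closed ball. -/
lemma finite_zeros_closedBall {g : ℂ → ℂ} (hg : Differentiable ℂ g) {w : ℂ} (hw : g w ≠ 0)
    (R : ℝ) : {z | z ∈ Metric.closedBall (0 : ℂ) R ∧ g z = 0}.Finite := by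
  by_contra hinf
  obtain ⟨x, -, hx⟩ := Set.Infinite.exists_accPt_of_subset_isCompact hinf
    (isCompact_closedBall (0 : ℂ) R) fun z hz => hz.1
  have hfreq : ∃ᶠ z in nhdsWithin x {x}ᶜ, g z = 0 :=
    (accPt_iff_frequently_nhdsNE.1 hx).mono fun z hz => hz.2
  exact hw (hg.differentiableOn.analyticOnNhd isOpen_univ
      |>.eqOn_zero_of_preconnected_of_frequently_eq_zero
      isPreconnected_univ (Set.mem_univ x) hfreq (Set.mem_univ w))

/-- A nonzero entire function is the product of a power of `z - u` and an entire function which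
does not vanish at `u`. -/
lemma exists_eq_pow_mul_of_differentiable {g : ℂ → ℂ} (hg : Differentiable ℂ g) {w : ℂ}
    (hw : g w ≠ 0) (u : ℂ) :
    ∃ (n : ℕ) (g₁ : ℂ → ℂ), Differentiable ℂ g₁ ∧ g₁ u ≠ 0 ∧ ∀ z, g z = (z - u) ^ n * g₁ z := by
  have hu : AnalyticAt ℂ g u := hg.analyticAt u
  have htop : analyticOrderAt g u ≠ ⊤ := by
    intro h
    rw [analyticOrderAt_eq_top] at h
    exact hw (hg.differentiableOn.analyticOnNhd isOpen_univ
      |>.eqOn_zero_of_preconnected_of_eventuallyEq_zero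
      isPreconnected_univ (Set.mem_univ u) h (Set.mem_univ w))
  obtain ⟨h, hh, hhu, hev⟩ := (hu.analyticOrderAt_ne_top).1 htop
  set n := analyticOrderNatAt g u
  have hval : g u = (u - u) ^ n * h u := by simpa using hev.self_of_nhds
  refine ⟨n, fun z => if z = u then h u else g z / (z - u) ^ n, fun z => ?_, by simpa using hhu,
    fun z => ?_⟩
  · by_cases hz : z = u
    · rw [hz]
      refine hh.differentiableAt.congr_of_eventuallyEq ?_
      filter_upwards [hev] with y hy
      split_ifs with hyu
      · rw [hyu]
      · have : y - u ≠ 0 := sub_ne_zero.2 hyu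
        rw [hy, smul_eq_mul]; field_simp
    · have hne : (z - u) ^ n ≠ 0 := pow_ne_zero _ (sub_ne_zero.2 hz)
      have : DifferentiableAt ℂ (fun y => g y / (y - u) ^ n) z :=
        (hg z).div (by fun_prop) hne
      refine this.congr_of_eventuallyEq ?_
      filter_upwards [isOpen_ne.mem_nhds hz] with y hy
      rw [if_neg hy]
  · dsimp only
    split_ifs with hz
    · rw [hz]; exact hval
    · have : z - u ≠ 0 := sub_ne_zero.2 hz
      field_simp

lemma sq_norm_sub_conj_mul (R : ℝ) (u z : ℂ) :
    ‖(R : ℂ) ^ 2 - starRingEnd ℂ u * z‖ ^ 2 - R ^ 2 * ‖z - u‖ ^ 2 =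
      (R ^ 2 - ‖u‖ ^ 2) * (R ^ 2 - ‖z‖ ^ 2) := by
  simp only [← Complex.normSq_eq_norm_sq, Complex.normSq_apply]
  simp [sq]
  ring

/-- The Poisson–Jensen inequality. -/
lemma log_norm_le_circleAverage_poissonKernel {g : ℂ → ℂ} (hg : Differentiable ℂ g) {R : ℝ}
    (hR : 0 < R) (hsph : ∀ z : ℂ, ‖z‖ = R → g z ≠ 0) {w : ℂ} (hw : ‖w‖ < R) (hgw : g w ≠ 0) :
    Real.log ‖g w‖ ≤
      Real.circleAverage (poissonKernel 0 w • fun z => Real.log ‖g z‖) 0 R := by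
  have key : ∀ s : Finset ℂ, ∀ g : ℂ → ℂ, Differentiable ℂ g → (∀ z : ℂ, ‖z‖ = R → g z ≠ 0) →
      g w ≠ 0 → (∀ z : ℂ, ‖z‖ ≤ R → g z = 0 → z ∈ s) → Real.log ‖g w‖ ≤
      Real.circleAverage (poissonKernel 0 w • fun z => Real.log ‖g z‖) 0 R := by
    intro s
    induction s using Finset.induction_on with
    | empty =>
      intro g hg hsph hgw hz
      have hharm : InnerProductSpace.HarmonicOnNhd (fun z => Real.log ‖g z‖)
          (Metric.closedBall 0 R) := fun z hzR =>
        (hg.analyticAt z).harmonicAt_log_norm fun h0 => by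
          simpa using hz z (by simpa using hzR) h0
      exact (hharm.circleAverage_poissonKernel_smul (by simpa using hw)).ge
    | insert u s _ ih =>
      intro g hg hsph hgw hz
      by_cases hu : ‖u‖ < R ∧ g u = 0
      swap
      · refine ih g hg hsph hgw fun z hzR hz0 => ?_
        rcases Finset.mem_insert.1 (hz z hzR hz0) with h | h
        · exact absurd ⟨lt_of_le_of_ne (h ▸ hzR) fun he => hsph u he (h ▸ hz0), h ▸ hz0⟩ hu
        · exact h
      obtain ⟨n, g₁, hg₁, hg₁u, hfac⟩ := exists_eq_pow_mul_of_differentiable hg hgw u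
      have huR : 0 < R ^ 2 - ‖u‖ ^ 2 := by nlinarith [hu.1, norm_nonneg u]
      have hR0 : (R : ℂ) ≠ 0 := by exact_mod_cast hR.ne'
      set b : ℂ → ℂ := fun z => ((R : ℂ) ^ 2 - starRingEnd ℂ u * z) / R with hb
      have hbn : ∀ z, ‖b z‖ = ‖(R : ℂ) ^ 2 - starRingEnd ℂ u * z‖ / R := fun z => by
        rw [hb, norm_div, Complex.norm_real, Real.norm_of_nonneg hR.le]
      have hb_ge : ∀ z : ℂ, ‖z‖ ≤ R → ‖z - u‖ ≤ ‖b z‖ := fun z hzR => by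
        rw [hbn, le_div_iff₀ hR]
        refine le_of_sq_le_sq ?_ (norm_nonneg _)
        have h1 := sq_norm_sub_conj_mul R u z
        have h2 : 0 ≤ R ^ 2 - ‖z‖ ^ 2 := by nlinarith [norm_nonneg z]
        nlinarith [mul_nonneg huR.le h2]
      have hb_eq : ∀ z : ℂ, ‖z‖ = R → ‖b z‖ = ‖z - u‖ := fun z hzR => by
        rw [hbn, div_eq_iff hR.ne']
        refine (sq_eq_sq₀ (norm_nonneg _) (by positivity)).1 ?_
        have h1 := sq_norm_sub_conj_mul R u z
        rw [hzR, sub_self, mul_zero] at h1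
        linarith
      have hb_ne : ∀ z : ℂ, ‖z‖ ≤ R → b z ≠ 0 := fun z hzR h0 => by
        have h1 := hb_ge z hzR
        rw [h0, norm_zero] at h1
        have h2 : z = u := sub_eq_zero.1 (norm_le_zero_iff.1 h1)
        rw [hb] at h0
        dsimp only at h0
        rw [div_eq_zero_iff, or_iff_left hR0, h2, mul_comm, Complex.mul_conj,
          Complex.normSq_eq_norm_sq] at h0
        exact huR.ne' (by exact_mod_cast h0)
      set h : ℂ → ℂ := fun z => b z ^ n * g₁ z with hh
      have hhd : Differentiable ℂ h := by
        rw [hh, hb]; fun_prop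
      have hnorm : ∀ z : ℂ, ‖z‖ = R → ‖h z‖ = ‖g z‖ := fun z hzR => by
        rw [hfac, hh]; simp only [norm_mul, norm_pow, hb_eq z hzR]
      have hle : ‖g w‖ ≤ ‖h w‖ := by
        rw [hfac, hh]; simp only [norm_mul, norm_pow]
        gcongr
        exact hb_ge w hw.le
      have hgw' : 0 < ‖g w‖ := norm_pos_iff.2 hgw
      have hih := ih h hhd (fun z hzR => by
          rw [← norm_ne_zero_iff, hnorm z hzR, norm_ne_zero_iff]; exact hsph z hzR)
        (norm_pos_iff.1 (hgw'.trans_le hle)) (fun z hzR hz0 => by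
          have hz1 : g₁ z = 0 := by
            rcases mul_eq_zero.1 hz0 with h0 | h0
            · exact absurd h0 (pow_ne_zero n (hb_ne z hzR))
            · exact h0
          rcases Finset.mem_insert.1 (hz z hzR (by rw [hfac, hz1, mul_zero])) with h1 | h1
          · exact absurd (h1 ▸ hz1) hg₁u
          · exact h1)
      refine (Real.log_le_log hgw' hle).trans (hih.trans (le_of_eq ?_))
      refine Real.circleAverage_congr_sphere fun z hz => ?_
      have hzR : ‖z‖ = R := by simpa [abs_of_pos hR] using hz
      simp only [Pi.smul_apply', hnorm z hzR]
  have hfin := finite_zeros_closedBall hg hgw R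
  exact key hfin.toFinset g hg hsph hgw fun z hzR hz0 => by
    simpa using ⟨hzR, hz0⟩

/-- The size `(4/3) x³/f` of the exponent on the circle of radius `x²`. -/
noncomputable def resPhi (f x : ℝ) : ℝ := 4 / 3 * x ^ 3 / f

/-- The leading part of `log |D_f|` at `x² e^{it}`, for `t ∈ [-π, π]`. -/
noncomputable def resH (f x t : ℝ) : ℝ := resPhi f x * max (Real.sin (3 / 2 * max (-t) 0)) 0

/-- The square root `x e^{iθ/2}` of `x² e^{iθ}`. -/
noncomputable def resK (x θ : ℝ) : ℂ := x * Complex.exp ((θ / 2 : ℝ) * Complex.I)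

lemma norm_resK {x : ℝ} (hx : 0 < x) (θ : ℝ) : ‖resK x θ‖ = x := by
  rw [resK, norm_mul, Complex.norm_exp_ofReal_mul_I, mul_one, Complex.norm_real,
    Real.norm_of_nonneg hx.le]

lemma resK_re (x θ : ℝ) : (resK x θ).re = x * Real.cos (θ / 2) := by
  rw [resK, Complex.re_ofReal_mul, Complex.exp_ofReal_mul_I_re]

lemma resK_im (x θ : ℝ) : (resK x θ).im = x * Real.sin (θ / 2) := by
  rw [resK, Complex.im_ofReal_mul, Complex.exp_ofReal_mul_I_im]

lemma resS_resK (f x θ : ℝ) : resS f (resK x θ) = resPhi f x * Real.sin (3 / 2 * θ) := by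
  have : resK x θ ^ 3 = ((x ^ 3 : ℝ) : ℂ) * Complex.exp ((3 / 2 * θ : ℝ) * Complex.I) := by
    rw [resK, mul_pow, ← Complex.exp_nat_mul]
    push_cast
    ring_nf
  rw [resS, this, Complex.im_ofReal_mul, Complex.exp_ofReal_mul_I_im, resPhi]
  ring

lemma resK_sq (x θ : ℝ) : resK x θ ^ 2 = circleMap 0 (x ^ 2) θ := by
  rw [resK, mul_pow, ← Complex.exp_nat_mul, circleMap_zero]
  push_cast
  ring_nf

lemma conj_resK_sq (x θ : ℝ) : starRingEnd ℂ (resK x θ ^ 2) = circleMap 0 (x ^ 2) (-θ) := by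
  rw [resK_sq, circleMap_zero, circleMap_zero, map_mul, Complex.conj_ofReal, ← Complex.exp_conj]
  simp

lemma airyRegime_resK {τ f x θ : ℝ} (hf : 0 < f) (hfτ : f ≤ τ) (hx : 0 < x)
    (hfx : f ≤ τ * x ^ 4) (h0 : 0 ≤ θ) (hπ : θ ≤ π) : AiryRegime τ f (resK x θ) := by
  have hn := norm_resK hx θ
  refine ⟨hf, hfτ, by rwa [hn], ?_, ?_, norm_pos_iff.1 (by rwa [hn])⟩
  · rw [resK_re]
    exact mul_nonneg hx.le (Real.cos_nonneg_of_mem_Icc ⟨by linarith [Real.pi_pos], by linarith⟩)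
  · rw [resK_im]
    exact mul_nonneg hx.le (Real.sin_nonneg_of_nonneg_of_le_pi (by linarith)
      (by linarith [Real.pi_pos]))

lemma resPhi_nonneg {f x : ℝ} (hf : 0 < f) (hx : 0 < x) : 0 ≤ resPhi f x := by
  unfold resPhi; positivity

lemma half_le_sin_three_halves {θ : ℝ} (h0 : 0 ≤ θ) (hπ : θ ≤ π / 3) :
    θ / 2 ≤ Real.sin (3 / 2 * θ) := by
  have h1 := Real.mul_le_sin (x := 3 / 2 * θ) (by linarith) (by linarith)
  have h2 : 1 / 2 * θ ≤ 2 / π * (3 / 2) * θ := by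
    gcongr
    rw [div_mul_eq_mul_div, div_le_div_iff₀ (by norm_num) Real.pi_pos]
    linarith [Real.pi_lt_four]
  linarith

/-- The zeros of `sin (3θ/2)` on `[0, π]` are simple. -/
lemma sin_three_halves_bounds {θ : ℝ} (h0 : 0 ≤ θ) (hπ : θ ≤ π) :
    (θ ≤ 2 * π / 3 → θ / 2 ≤ Real.sin (3 / 2 * θ) ∨ (2 * π / 3 - θ) / 2 ≤ Real.sin (3 / 2 * θ)) ∧
      (2 * π / 3 ≤ θ → Real.sin (3 / 2 * θ) ≤ -((θ - 2 * π / 3) / 2)) := by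
  refine ⟨fun h => ?_, fun h => ?_⟩
  · rcases le_total θ (π / 3) with h1 | h1
    · exact Or.inl (half_le_sin_three_halves h0 h1)
    · right
      have := half_le_sin_three_halves (θ := 2 * π / 3 - θ) (by linarith) (by linarith)
      rwa [show 3 / 2 * (2 * π / 3 - θ) = π - 3 / 2 * θ by ring, Real.sin_pi_sub] at this
  · have := half_le_sin_three_halves (θ := θ - 2 * π / 3) (by linarith) (by linarith)
    rw [show 3 / 2 * (θ - 2 * π / 3) = 3 / 2 * θ - π by ring, Real.sin_sub_pi] at this
    linarith

lemma resK_im_ge {x θ : ℝ} (hx : 0 < x) (h0 : π / 3 ≤ θ) (hπ : θ ≤ π) :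
    x / 2 ≤ (resK x θ).im := by
  rw [resK_im]
  have h1 : Real.sin (π / 6) ≤ Real.sin (θ / 2) :=
    Real.sin_le_sin_of_le_of_le_pi_div_two (by linarith [Real.pi_pos]) (by linarith) (by linarith)
  rw [Real.sin_pi_div_six] at h1
  nlinarith

set_option maxHeartbeats 1000000 in
/-- Two sided bounds for `log |D_f|` on circles; the lower bound excludes small arcs around the
arguments `0` and `-2π/3`. -/
lemma exists_log_bounds (κ η : ℝ) (hκ : 0 < κ) (hη : 0 < η) : ∃ τ C K : ℝ, 0 < τ ∧ τ ≤ 1 / 4 ∧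
    0 < C ∧ 1 ≤ K ∧ ∀ f x t : ℝ, 0 < f → f ≤ τ → 0 < x → f ≤ τ * x ^ 4 → -π ≤ t → t ≤ π →
      Real.log ‖Df κ η f (circleMap 0 (x ^ 2) t)‖ ≤ resH f x t + C * resE f x ∧
      (2 * K * resE f x ≤ resPhi f x * |t| →
        2 * K * resE f x ≤ resPhi f x * |t + 2 * π / 3| →
        Df κ η f (circleMap 0 (x ^ 2) t) ≠ 0 ∧
        resH f x t - C * resE f x ≤ Real.log ‖Df κ η f (circleMap 0 (x ^ 2) t)‖) := by
  obtain ⟨τ₁, C₁, hτ₁, hτ₁4, hC₁, hup⟩ := exists_upper_bound_Df κ η hκ hη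
  obtain ⟨τ₂, c₂, hτ₂, -, hc₂, hlow⟩ := exists_lower_bound_Df κ η hκ hη
  obtain ⟨τ₃, C₃, K₃, hτ₃, -, hC₃, hK₃, hgrow⟩ := exists_lower_bound_Df_growing κ η hκ hη
  obtain ⟨τ₄, c₄, K₄, hτ₄, -, hc₄, hK₄, hdec⟩ := exists_lower_bound_Df_decaying κ η hκ hη
  set τ := min (min τ₁ τ₂) (min τ₃ τ₄) with hτ
  have hl1 : τ ≤ τ₁ := (min_le_left _ _).trans (min_le_left _ _)
  have hl2 : τ ≤ τ₂ := (min_le_left _ _).trans (min_le_right _ _)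
  have hl3 : τ ≤ τ₃ := (min_le_right _ _).trans (min_le_left _ _)
  have hl4 : τ ≤ τ₄ := (min_le_right _ _).trans (min_le_right _ _)
  have hτ0 : 0 < τ := lt_min (lt_min hτ₁ hτ₂) (lt_min hτ₃ hτ₄)
  set C := C₁ + |Real.log c₂| + C₃ + |Real.log c₄| with hC
  set K := 1 + (2 * κ + 2) + K₃ + K₄ with hK
  refine ⟨τ, C, K, hτ0, hl1.trans hτ₁4, by positivity, by linarith,
    fun f x t hf hfτ hx hfx ht1 ht2 => ?_⟩
  set E := resE f x with hEd
  set P := resPhi f x with hPd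
  have hP0 : 0 ≤ P := resPhi_nonneg hf hx
  have hE1 : 1 ≤ E := by
    have := (airyRegime_resK hf hfτ hx hfx le_rfl Real.pi_pos.le).scales (hl1.trans hτ₁4)
    rw [norm_resK hx] at this
    exact this.2.2.2.2.2.2.1
  have hE0 : 0 < E := by linarith
  have hCE : ∀ c : ℝ, c ≤ C → c ≤ C * E := fun c hc =>
    hc.trans (le_mul_of_one_le_right (by positivity) hE1)
  have hlc : ∀ c d : ℝ, 0 < c → |Real.log c| ≤ C → c ≤ d → 0 < d ∧ -(C * E) ≤ Real.log d :=
    fun c d hc hcC hcd => ⟨hc.trans_le hcd, by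
      have h1 := Real.log_le_log hc hcd
      have h2 := neg_abs_le (Real.log c)
      have h3 := hCE _ hcC
      linarith⟩
  have ha2 := abs_nonneg (Real.log c₂)
  have ha4 := abs_nonneg (Real.log c₄)
  have hlogle : ∀ d m : ℝ, 0 ≤ d → d ≤ rexp m → 0 ≤ m → Real.log d ≤ m := fun d m hd hdm hm => by
    rcases hd.eq_or_lt with h | h
    · rw [← h, Real.log_zero]; exact hm
    · exact (Real.log_le_iff_le_exp h).2 hdm
  rcases le_total 0 t with ht | ht
  · have hr := airyRegime_resK hf hfτ hx hfx ht ht2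
    have hn := norm_resK hx t
    have hH : resH f x t = 0 := by
      rw [resH, max_eq_right (by linarith : -t ≤ 0)]; simp
    rw [hH, ← resK_sq]
    refine ⟨?_, fun h1 _ => ?_⟩
    · have h := (hup f _ (hr.mono hl1)).1
      rw [hn, ← hEd] at h
      have h3 : C₁ * E ≤ C * E := by gcongr; linarith
      have := hlogle _ _ (norm_nonneg _) h (by positivity)
      linarith
    · have hgood : ‖resK x t‖ / 2 ≤ (resK x t).im ∨
          (2 * κ + 2) * resE f ‖resK x t‖ ≤ resS f (resK x t) := by
        rw [hn, resS_resK, ← hEd, ← hPd]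
        rcases le_total t (π / 3) with h3 | h3
        · right
          have h4 : P * (t / 2) ≤ P * Real.sin (3 / 2 * t) := by
            gcongr; exact half_le_sin_three_halves ht h3
          rw [abs_of_nonneg ht] at h1
          have h5 : (2 * κ + 2) * E ≤ K * E := by gcongr; linarith
          linarith
        · exact Or.inl (resK_im_ge hx h3 ht2)
      obtain ⟨h3, h4⟩ := hlc c₂ _ hc₂ (by linarith) (hlow f _ (hr.mono hl2) hgood)
      exact ⟨norm_pos_iff.1 h3, by linarith⟩
  · obtain ⟨θ, hθ⟩ : ∃ θ, θ = -t := ⟨_, rfl⟩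
    obtain rfl : t = -θ := by linarith
    have hθ0 : 0 ≤ θ := by linarith
    have hθπ : θ ≤ π := by linarith
    have hr := airyRegime_resK hf hfτ hx hfx hθ0 hθπ
    have hn := norm_resK hx θ
    have hH : resH f x (-θ) = max (resS f (resK x θ)) 0 := by
      rw [resH, neg_neg, max_eq_left hθ0, resS_resK, mul_max_of_nonneg _ _ hP0, mul_zero]
    have hS := resS_resK f x θ
    rw [← hPd] at hS
    rw [hH, ← conj_resK_sq]
    refine ⟨?_, fun h1 h2 => ?_⟩
    · have h := (hup f _ (hr.mono hl1)).2
      rw [hn, ← hEd] at h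
      have h3 : C₁ * E ≤ C * E := by gcongr; linarith
      have := hlogle _ _ (norm_nonneg _) h
        (add_nonneg (le_max_right _ _) (by positivity))
      linarith
    · rw [abs_neg, abs_of_nonneg hθ0] at h1
      obtain ⟨hb1, hb2⟩ := sin_three_halves_bounds hθ0 hθπ
      rcases le_total θ (2 * π / 3) with h3 | h3
      · rw [abs_of_nonneg (by linarith)] at h2
        have hSK : K * E ≤ resS f (resK x θ) := by
          rw [hS]
          rcases hb1 h3 with h4 | h4
          · have := mul_le_mul_of_nonneg_left h4 hP0
            linarith
          · have := mul_le_mul_of_nonneg_left h4 hP0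
            linarith
        have h5 : K₃ * E ≤ K * E := by gcongr; linarith
        have h6 := hgrow f _ (hr.mono hl3) (by rw [hn, ← hEd]; linarith)
        rw [hn, ← hEd] at h6
        have h7 := (Real.exp_pos _).trans_le h6
        refine ⟨norm_pos_iff.1 h7, ?_⟩
        have h8 := (Real.le_log_iff_exp_le h7).2 h6
        have h9 : C₃ * E ≤ C * E := by gcongr; linarith
        have h10 : 0 ≤ K * E := by positivity
        rw [max_eq_left (by linarith)]
        linarith
      · rw [abs_of_nonpos (by linarith)] at h2
        have hSK : resS f (resK x θ) ≤ -(K * E) := by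
          rw [hS]
          have := mul_le_mul_of_nonneg_left (hb2 h3) hP0
          linarith
        have h5 : K₄ * E ≤ K * E := by gcongr; linarith
        have h10 : 0 ≤ K * E := by positivity
        obtain ⟨h6, h7⟩ := hlc c₄ _ hc₄ (by linarith)
          (hdec f _ (hr.mono hl4) (by rw [hn, ← hEd]; linarith))
        refine ⟨norm_pos_iff.1 h6, ?_⟩
        rw [max_eq_right (by linarith)]
        linarith

lemma circleAverage_eq_integral_symm (F : ℂ → ℝ) (r : ℝ) :
    Real.circleAverage F 0 r = (2 * π)⁻¹ * ∫ t in (-π)..π, F (circleMap 0 r t) := by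
  have hper : Function.Periodic (fun t => F (circleMap 0 r t)) (2 * π) :=
    (periodic_circleMap 0 r).comp F
  have h := hper.intervalIntegral_add_eq (-π) 0
  rw [show -π + 2 * π = π by ring, zero_add] at h
  rw [Real.circleAverage_def, smul_eq_mul, h]

lemma continuous_log_norm_circleMap {g : ℂ → ℂ} (hg : Differentiable ℂ g) {r : ℝ} (hr : 0 < r)
    (hsph : ∀ z : ℂ, ‖z‖ = r → g z ≠ 0) :
    Continuous fun t => Real.log ‖g (circleMap 0 r t)‖ :=
  ((hg.continuous.comp (continuous_circleMap 0 r)).norm).log fun t =>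
    norm_ne_zero_iff.2 (hsph _ (by simp [abs_of_pos hr]))

lemma continuous_poissonKernel_circleMap {w : ℂ} {r : ℝ} (hr : 0 < r) (hw : ‖w‖ < r) :
    Continuous fun t => poissonKernel 0 w (circleMap 0 r t) := by
  simp only [poissonKernel_def, sub_zero]
  refine Continuous.div (by fun_prop) (by fun_prop) fun t => ?_
  refine pow_ne_zero 2 (norm_ne_zero_iff.2 (sub_ne_zero.2 fun h => ?_))
  rw [← h] at hw
  simp [abs_of_pos hr] at hw

lemma poissonKernel_circleMap_nonneg {w : ℂ} {r : ℝ} (hw : ‖w‖ < r) (t : ℝ) :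
    0 ≤ poissonKernel 0 w (circleMap 0 r t) := by
  simp only [poissonKernel_def, sub_zero, norm_circleMap_zero, sq_abs]
  have : ‖w‖ ^ 2 ≤ r ^ 2 := by gcongr
  exact div_nonneg (by linarith) (by positivity)

lemma integral_poissonKernel_circleMap {w : ℂ} {r : ℝ} (hw : ‖w‖ < r) :
    ∫ t in (-π)..π, poissonKernel 0 w (circleMap 0 r t) = 2 * π := by
  have hharm : InnerProductSpace.HarmonicOnNhd (fun _ : ℂ => (1 : ℝ)) (Metric.closedBall 0 r) :=
    fun z _ => by simp
  have h := hharm.circleAverage_poissonKernel_smul (w := w) (by simpa using hw)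
  rw [circleAverage_eq_integral_symm] at h
  simp only [Pi.smul_apply', smul_eq_mul, mul_one] at h
  field_simp at h
  linarith

/-- The Poisson kernel based at distance `rs` from the circle is at least `1/(121 s)` on the arc of
half-length `10 s` around its base angle. -/
lemma inv_le_poissonKernel_circleMap {r s t θ : ℝ} (hr : 0 < r) (hs : 0 < s) (hs1 : s < 1)
    (ht : |t - θ| ≤ 10 * s) :
    1 ≤ 121 * s * poissonKernel 0 (circleMap 0 (r * (1 - s)) θ) (circleMap 0 r t) := by
  have hρ : 0 < r * (1 - s) := mul_pos hr (by linarith)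
  have hdist : ‖circleMap 0 r t - circleMap 0 (r * (1 - s)) θ‖ ≤ 11 * (r * s) := by
    have h1 : ‖circleMap 0 r t - circleMap 0 r θ‖ ≤ r * |t - θ| := by
      have := (lipschitzWith_circleMap 0 r).dist_le_mul t θ
      rwa [dist_eq_norm, Real.dist_eq, Real.coe_nnabs, abs_of_pos hr] at this
    have h2 : ‖circleMap 0 r θ - circleMap 0 (r * (1 - s)) θ‖ = r * s := by
      have : circleMap 0 r θ - circleMap 0 (r * (1 - s)) θ = circleMap 0 (r * s) θ := by
        simp only [circleMap_zero]; push_cast; ring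
      rw [this, norm_circleMap_zero, abs_of_pos (mul_pos hr hs)]
    have h3 := norm_sub_le_norm_sub_add_norm_sub (circleMap 0 r t) (circleMap 0 r θ)
      (circleMap 0 (r * (1 - s)) θ)
    have h4 := mul_le_mul_of_nonneg_left ht hr.le
    linarith
  have hpos : 0 < ‖circleMap 0 r t - circleMap 0 (r * (1 - s)) θ‖ := by
    have h3 := norm_sub_norm_le (circleMap 0 r t) (circleMap 0 (r * (1 - s)) θ)
    rw [norm_circleMap_zero, norm_circleMap_zero, abs_of_pos hr, abs_of_pos hρ] at h3
    nlinarith [mul_pos hr hs]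
  simp only [poissonKernel_def, sub_zero, norm_circleMap_zero, sq_abs]
  rw [← mul_div_assoc, le_div_iff₀ (by positivity), one_mul]
  have h5 := pow_le_pow_left₀ hpos.le hdist 2
  refine h5.trans ?_
  have h6 : 0 ≤ s * (1 - s) := mul_nonneg hs.le (by linarith)
  nlinarith [mul_nonneg (sq_nonneg r) h6]

lemma integral_poissonKernel_mul_ge {g : ℂ → ℂ} (hg : Differentiable ℂ g) {r : ℝ} (hr : 0 < r)
    (hsph : ∀ z : ℂ, ‖z‖ = r → g z ≠ 0) {w : ℂ} (hw : ‖w‖ < r) (hgw : g w ≠ 0)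
    {h : ℝ → ℝ} (hc : Continuous h) {B : ℝ} (hB : ∀ t, h t ≤ B) :
    2 * π * (Real.log ‖g w‖ - B) ≤ ∫ t in (-π)..π, poissonKernel 0 w (circleMap 0 r t) *
      (Real.log ‖g (circleMap 0 r t)‖ - h t) := by
  have hP := continuous_poissonKernel_circleMap hr hw
  have hu := continuous_log_norm_circleMap hg hr hsph
  have h1 := log_norm_le_circleAverage_poissonKernel hg hr hsph hw hgw
  rw [circleAverage_eq_integral_symm, inv_mul_eq_div, le_div_iff₀ (by positivity)] at h1
  simp only [Pi.smul_apply', smul_eq_mul] at h1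
  have h2 : ∫ t in (-π)..π, poissonKernel 0 w (circleMap 0 r t) * h t ≤ 2 * π * B := by
    rw [← integral_poissonKernel_circleMap hw, ← intervalIntegral.integral_mul_const]
    refine intervalIntegral.integral_mono_on (by linarith [Real.pi_pos])
      ((hP.mul hc).intervalIntegrable _ _) ((hP.mul continuous_const).intervalIntegrable _ _)
      fun t _ => mul_le_mul_of_nonneg_left (hB t) (poissonKernel_circleMap_nonneg hw t)
  simp only [mul_sub]
  have h3 := intervalIntegral.integral_sub (μ := MeasureTheory.volume)
    ((hP.mul hu).intervalIntegrable (-π) π) ((hP.mul hc).intervalIntegrable (-π) π)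
  simp only [Pi.mul_apply] at h3
  linarith

/-- Comparison of the mean of `log |g|` over a circle with that of a model function which is
accurate away from two short arcs. -/
lemma abs_integral_log_norm_sub_le {g : ℂ → ℂ} (hg : Differentiable ℂ g) {r : ℝ} (hr : 0 < r)
    (hsph : ∀ z : ℂ, ‖z‖ = r → g z ≠ 0) {H : ℝ → ℝ} (hH : Continuous H) {Φ A s θ₀ θ₁ ψ₀ ψ₁ : ℝ}
    (hHΦ : ∀ t, H t ≤ Φ) (hΦ : 0 ≤ Φ) (hA : 0 ≤ A) (hs : 0 < s) (hs1 : s < 1)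
    (hψ₀ : |θ₀ - ψ₀| ≤ 8 * s) (hψ₁ : |θ₁ - ψ₁| ≤ 8 * s)
    (hup : ∀ t, -π ≤ t → t ≤ π → Real.log ‖g (circleMap 0 r t)‖ ≤ H t + A)
    (hlow : ∀ t, -π ≤ t → t ≤ π → 2 * s ≤ |t - θ₀| → 2 * s ≤ |t - θ₁| →
      H t - A ≤ Real.log ‖g (circleMap 0 r t)‖)
    (h₀ : g (circleMap 0 (r * (1 - s)) ψ₀) ≠ 0)
    (h₀' : -A ≤ Real.log ‖g (circleMap 0 (r * (1 - s)) ψ₀)‖)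
    (h₁ : g (circleMap 0 (r * (1 - s)) ψ₁) ≠ 0)
    (h₁' : -A ≤ Real.log ‖g (circleMap 0 (r * (1 - s)) ψ₁)‖) :
    |(∫ t in (-π)..π, Real.log ‖g (circleMap 0 r t)‖) - ∫ t in (-π)..π, H t| ≤
      2 * π * A + 484 * π * (s * (2 * A + Φ)) := by
  have hρ : 0 < r * (1 - s) := mul_pos hr (by linarith)
  have hn : ∀ ψ, ‖circleMap 0 (r * (1 - s)) ψ‖ < r := fun ψ => by
    rw [norm_circleMap_zero, abs_of_pos hρ]; nlinarith
  set P : ℝ → ℝ → ℝ := fun ψ t =>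
    poissonKernel 0 (circleMap 0 (r * (1 - s)) ψ) (circleMap 0 r t) with hPdef
  have hPc : ∀ ψ, Continuous (P ψ) := fun ψ => continuous_poissonKernel_circleMap hr (hn ψ)
  have hP0 : ∀ ψ t, 0 ≤ P ψ t := fun ψ t => poissonKernel_circleMap_nonneg (hn ψ) t
  have hu := continuous_log_norm_circleMap hg hr hsph
  set φ : ℝ → ℝ := fun t => Real.log ‖g (circleMap 0 r t)‖ - (H t + A) with hφ
  have hφc : Continuous φ := hu.sub (hH.add continuous_const)
  have hφ0 : ∀ t, -π ≤ t → t ≤ π → φ t ≤ 0 := fun t h1 h2 => by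
    have := hup t h1 h2
    simp only [hφ]; linarith
  have hnear : ∀ θ ψ t, |θ - ψ| ≤ 8 * s → |t - θ| < 2 * s → -π ≤ t → t ≤ π →
      121 * s * (P ψ t * φ t) ≤ φ t := fun θ ψ t hψ ht h1 h2 => by
    have h3 : |t - ψ| ≤ 10 * s := by
      have := abs_sub_le t θ ψ
      linarith
    have h4 := inv_le_poissonKernel_circleMap hr hs hs1 h3
    have h5 := mul_le_mul_of_nonpos_right h4 (hφ0 t h1 h2)
    simp only [hPdef]
    linarith
  have hpt : ∀ t ∈ Set.Icc (-π) π,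
      -(2 * A) + 121 * s * (P ψ₀ t * φ t + P ψ₁ t * φ t) ≤ φ t := fun t ⟨h1, h2⟩ => by
    have hp : ∀ ψ, 121 * s * (P ψ t * φ t) ≤ 0 := fun ψ =>
      mul_nonpos_of_nonneg_of_nonpos (by positivity)
        (mul_nonpos_of_nonneg_of_nonpos (hP0 ψ t) (hφ0 t h1 h2))
    have hp0 := hp ψ₀
    have hp1 := hp ψ₁
    rcases lt_or_ge (|t - θ₀|) (2 * s) with h3 | h3
    · have := hnear θ₀ ψ₀ t hψ₀ h3 h1 h2
      linarith
    rcases lt_or_ge (|t - θ₁|) (2 * s) with h4 | h4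
    · have := hnear θ₁ ψ₁ t hψ₁ h4 h1 h2
      linarith
    have := hlow t h1 h2 h3 h4
    simp only [hφ] at hp0 hp1 ⊢
    linarith
  have hππ : -π ≤ π := by linarith [Real.pi_pos]
  have hPφ : ∀ ψ, g (circleMap 0 (r * (1 - s)) ψ) ≠ 0 →
      -A ≤ Real.log ‖g (circleMap 0 (r * (1 - s)) ψ)‖ →
      -(2 * π * (2 * A + Φ)) ≤ ∫ t in (-π)..π, P ψ t * φ t := fun ψ h h' => by
    have h1 := integral_poissonKernel_mul_ge hg hr hsph (hn ψ) h (h := fun t => H t + A)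
      (hH.add continuous_const) (B := Φ + A) fun t => by linarith [hHΦ t]
    refine le_trans ?_ h1
    have h2 : -(2 * A + Φ) ≤
      Real.log ‖g (circleMap 0 (r * (1 - s)) ψ)‖ - (Φ + A) := by linarith
    have h3 := mul_le_mul_of_nonneg_left h2 Real.two_pi_pos.le
    linarith
  have hintg := intervalIntegral.integral_mono_on (μ := MeasureTheory.volume) hππ
    (Continuous.intervalIntegrable (by fun_prop) _ _) (hφc.intervalIntegrable _ _) hpt
  have hintg0 := intervalIntegral.integral_mono_on (μ := MeasureTheory.volume)
    (g := fun _ => (0 : ℝ)) hππ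
    (hφc.intervalIntegrable _ _) (continuous_const.intervalIntegrable _ _)
    fun t ht => hφ0 t ht.1 ht.2
  have hi : ∀ ψ, IntervalIntegrable (fun t => P ψ t * φ t) MeasureTheory.volume (-π) π :=
    fun ψ => ((hPc ψ).mul hφc).intervalIntegrable _ _
  rw [intervalIntegral.integral_add (continuous_const.intervalIntegrable _ _)
    (((hi ψ₀).add (hi ψ₁)).const_mul _), intervalIntegral.integral_const_mul,
    intervalIntegral.integral_add (hi ψ₀) (hi ψ₁), intervalIntegral.integral_const,
    smul_eq_mul] at hintg
  have hφi : ∫ t in (-π)..π, φ t = (∫ t in (-π)..π, Real.log ‖g (circleMap 0 r t)‖) -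
      (∫ t in (-π)..π, H t) - 2 * π * A := by
    have hA1 : Continuous fun _ : ℝ => A := continuous_const
    have h1 := intervalIntegral.integral_sub (μ := MeasureTheory.volume)
      (hu.intervalIntegrable (-π) π) ((hH.add hA1).intervalIntegrable (-π) π)
    have h2 := intervalIntegral.integral_add (μ := MeasureTheory.volume)
      (hH.intervalIntegrable (-π) π) (hA1.intervalIntegrable (-π) π)
    rw [intervalIntegral.integral_const, smul_eq_mul] at h2
    simp only [Pi.add_apply] at h1
    rw [h1, h2]
    ring
  rw [intervalIntegral.integral_zero] at hintg0
  rw [hφi] at hintg hintg0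
  have h4 := add_le_add (hPφ ψ₀ h₀ h₀') (hPφ ψ₁ h₁ h₁')
  have h5 := mul_le_mul_of_nonneg_left h4 (by positivity : 0 ≤ 121 * s)
  have h6 : 0 ≤ π * A := by positivity
  rw [abs_le]
  have h7 : 0 ≤ π * (s * (2 * A + Φ)) := by positivity
  constructor <;> linarith

lemma continuous_resH (f x : ℝ) : Continuous (resH f x) := by
  unfold resH; fun_prop

lemma resH_nonneg {f x : ℝ} (hf : 0 < f) (hx : 0 < x) (t : ℝ) : 0 ≤ resH f x t :=
  mul_nonneg (resPhi_nonneg hf hx) (le_max_right _ _)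

lemma resH_le {f x : ℝ} (hf : 0 < f) (hx : 0 < x) (t : ℝ) : resH f x t ≤ resPhi f x := by
  have h : max (Real.sin (3 / 2 * max (-t) 0)) 0 ≤ 1 := max_le (Real.sin_le_one _) zero_le_one
  simpa [resH] using mul_le_mul_of_nonneg_left h (resPhi_nonneg hf hx)

lemma integral_resH (f x : ℝ) : ∫ t in (-π)..π, resH f x t = 4 / 3 * resPhi f x := by
  have hπ := Real.pi_pos
  have hi : ∀ a b, IntervalIntegrable (resH f x) MeasureTheory.volume a b :=
    fun a b => (continuous_resH f x).intervalIntegrable a b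
  have h1 : ∫ t in (-π)..(-(2 * π / 3)), resH f x t = 0 := by
    rw [intervalIntegral.integral_congr (g := fun _ => (0 : ℝ)) fun t ht => ?_,
      intervalIntegral.integral_zero]
    rw [Set.uIcc_of_le (by linarith)] at ht
    have hs : Real.sin (3 / 2 * -t) ≤ 0 := by
      rw [← neg_neg (Real.sin _), ← Real.sin_sub_pi, neg_nonpos]
      exact Real.sin_nonneg_of_nonneg_of_le_pi (by linarith [ht.2]) (by linarith [ht.1])
    simp only [resH]
    rw [max_eq_left (by linarith [ht.2] : 0 ≤ -t), max_eq_right hs, mul_zero]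
  have h2 : ∫ t in (-(2 * π / 3))..0, resH f x t = 4 / 3 * resPhi f x := by
    rw [intervalIntegral.integral_congr (g := fun t => resPhi f x * Real.sin (-(3 / 2) * t))
      fun t ht => ?_, intervalIntegral.integral_const_mul]
    · rw [intervalIntegral.integral_comp_mul_left (fun t => Real.sin t) (by norm_num), integral_sin,
        show -(3 / 2 : ℝ) * -(2 * π / 3) = π by ring, mul_zero, Real.cos_pi, Real.cos_zero,
        smul_eq_mul]
      ring
    · rw [Set.uIcc_of_le (by linarith)] at ht
      have hs : 0 ≤ Real.sin (3 / 2 * -t) :=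
        Real.sin_nonneg_of_nonneg_of_le_pi (by linarith [ht.2]) (by linarith [ht.1])
      simp only [resH]
      rw [max_eq_left (by linarith [ht.2] : 0 ≤ -t), max_eq_left hs]
      ring_nf
  have h3 : ∫ t in (0 : ℝ)..π, resH f x t = 0 := by
    rw [intervalIntegral.integral_congr (g := fun _ => (0 : ℝ)) fun t ht => ?_,
      intervalIntegral.integral_zero]
    rw [Set.uIcc_of_le hπ.le] at ht
    simp only [resH]
    rw [max_eq_right (by linarith [ht.1] : -t ≤ 0), mul_zero, Real.sin_zero, max_self, mul_zero]
  rw [← intervalIntegral.integral_add_adjacent_intervals (hi (-π) 0) (hi 0 π),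
    ← intervalIntegral.integral_add_adjacent_intervals (hi (-π) (-(2 * π / 3)))
      (hi (-(2 * π / 3)) 0), h1, h2, h3]
  ring

lemma resE_mono {f x y : ℝ} (hf : 0 < f) (hf1 : f ≤ 1) (hx : 0 < x) (hxy : x ≤ y) :
    resE f x ≤ resE f y := by
  have h1 : 1 ≤ f⁻¹ := (one_le_inv₀ hf).2 hf1
  have h2 : 0 ≤ Real.log (f⁻¹ + x ^ 2) := Real.log_nonneg (by nlinarith)
  unfold resE
  gcongr
  linarith

lemma resE_pos {f x : ℝ} (hf : 0 < f) (hf1 : f ≤ 1) (hx : 0 < x) : 0 < resE f x := by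
  have h1 : 1 ≤ f⁻¹ := (one_le_inv₀ hf).2 hf1
  exact mul_pos (by linarith) (Real.log_pos (by nlinarith))

lemma differentiable_Df (κ η f : ℝ) : Differentiable ℂ (Df κ η f) := by
  have := differentiable_Ai
  unfold Df alphaP alphaM betaP betaM
  fun_prop

set_option maxHeartbeats 1000000 in
lemma exists_integral_log_norm_Df (κ η : ℝ) (hκ : 0 < κ) (hη : 0 < η) :
    ∃ τ C : ℝ, 0 < τ ∧ τ ≤ 1 ∧ 0 < C ∧ ∀ f x : ℝ, 0 < f → f ≤ τ → 0 < x → f ≤ τ * x ^ 4 →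
      C * resE f x ≤ resPhi f x → (∀ z : ℂ, ‖z‖ = x ^ 2 → Df κ η f z ≠ 0) →
      |(∫ t in (-π)..π, Real.log ‖Df κ η f (circleMap 0 (x ^ 2) t)‖) - 4 / 3 * resPhi f x| ≤
        C * resE f x := by
  obtain ⟨τ, C, K, hτ, hτ1, hC, hK, hmain⟩ := exists_log_bounds κ η hκ hη
  have hπ := Real.pi_pos
  have hπ3 := Real.pi_gt_three
  set B := 2 * π * C + 484 * π * (2 * C + K) with hB
  have hB0 : 0 < B := by positivity
  refine ⟨τ / 2, B + 100 * K, by positivity, by linarith, by positivity,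
    fun f x hf hfτ hx hfx hsmall hsph => ?_⟩
  have hf1 : f ≤ 1 := by linarith
  have hE := resE_pos hf hf1 hx
  have hΦ : 0 < resPhi f x := lt_of_lt_of_le (by positivity) hsmall
  set s := K * resE f x / resPhi f x with hs
  have hs0 : 0 < s := by positivity
  have hsΦ : s * resPhi f x = K * resE f x := div_mul_cancel₀ _ hΦ.ne'
  have hs1 : s ≤ 1 / 100 := by
    rw [hs, div_le_iff₀ hΦ]
    nlinarith [mul_pos hB0 hE]
  have hx4 : 0 < x ^ 4 := by positivity
  -- the base points
  set c := √(1 - s) with hc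
  have hc2 : c ^ 2 = 1 - s := Real.sq_sqrt (by linarith)
  have hc0 : 0 < c := Real.sqrt_pos.2 (by linarith)
  have hc1 : c ≤ 1 := Real.sqrt_le_one.2 (by linarith)
  have hcc : 99 / 100 ≤ c := by nlinarith
  have hxc : 0 < x * c := by positivity
  have hc4 : 1 / 2 ≤ c ^ 4 := by
    rw [show c ^ 4 = (c ^ 2) ^ 2 by ring, hc2]; nlinarith
  have hc3 : 1 / 2 ≤ c ^ 3 := by
    rw [show c ^ 3 = c ^ 2 * c by ring, hc2]; nlinarith
  have hρ : (x * c) ^ 2 = x ^ 2 * (1 - s) := by rw [mul_pow, hc2]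
  have hE' : resE f (x * c) ≤ resE f x :=
    resE_mono hf hf1 hxc (mul_le_of_le_one_right hx.le hc1)
  have hΦ' : resPhi f x / 2 ≤ resPhi f (x * c) := by
    have : resPhi f (x * c) = resPhi f x * c ^ 3 := by unfold resPhi; ring
    rw [this]; nlinarith
  have hfx' : f ≤ τ * (x * c) ^ 4 := by
    rw [mul_pow]; nlinarith [mul_pos hτ hx4]
  have hgap : ∀ d : ℝ, 8 * s ≤ d → 2 * K * resE f (x * c) ≤ resPhi f (x * c) * d := fun d hd => by
    have h1 : resPhi f x / 2 * (8 * s) ≤ resPhi f (x * c) * d :=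
      mul_le_mul hΦ' hd (by positivity) (resPhi_nonneg hf hxc)
    have h2 : K * resE f (x * c) ≤ K * resE f x := by gcongr
    have h3 : 0 ≤ K * resE f x := by positivity
    linarith
  have hbase : ∀ t, -π ≤ t → t ≤ π → 8 * s ≤ |t| → 8 * s ≤ |t + 2 * π / 3| →
      Df κ η f (circleMap 0 (x ^ 2 * (1 - s)) t) ≠ 0 ∧
      -(C * resE f x) ≤ Real.log ‖Df κ η f (circleMap 0 (x ^ 2 * (1 - s)) t)‖ := by
    intro t h1 h2 h3 h4
    obtain ⟨h5, h6⟩ := (hmain f (x * c) t hf (by linarith) hxc hfx' h1 h2).2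
      (hgap _ h3) (hgap _ h4)
    rw [hρ] at h5 h6
    refine ⟨h5, le_trans ?_ h6⟩
    have h7 := resH_nonneg hf hxc t
    have h8 : C * resE f (x * c) ≤ C * resE f x := by gcongr
    linarith
  have hb0 := hbase (8 * s) (by linarith) (by linarith) (le_abs_self _)
    (le_trans (by linarith) (le_abs_self _))
  have hb1 := hbase (-(2 * π / 3) - 8 * s) (by linarith) (by linarith)
    (le_trans (by linarith) (neg_le_abs _)) (le_trans (by linarith) (neg_le_abs _))
  have hfx2 : f ≤ τ * x ^ 4 := by linarith [mul_pos hτ hx4]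
  have key := abs_integral_log_norm_sub_le (differentiable_Df κ η f) (by positivity) hsph
    (continuous_resH f x) (resH_le hf hx) hΦ.le (by positivity : 0 ≤ C * resE f x) hs0
    (by linarith) (θ₀ := 0) (θ₁ := -(2 * π / 3)) (ψ₀ := 8 * s) (ψ₁ := -(2 * π / 3) - 8 * s)
    (by rw [zero_sub, abs_neg, abs_of_pos (by positivity)])
    (by rw [sub_sub_cancel, abs_of_pos (by positivity)])
    (fun t h1 h2 => (hmain f x t hf (by linarith) hx hfx2 h1 h2).1)
    (fun t h1 h2 h3 h4 => ((hmain f x t hf (by linarith) hx hfx2 h1 h2).2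
      (by rw [sub_zero] at h3; linarith [mul_le_mul_of_nonneg_left h3 hΦ.le])
      (by rw [sub_neg_eq_add] at h4; linarith [mul_le_mul_of_nonneg_left h4 hΦ.le])).2)
    hb0.1 hb0.2 hb1.1 hb1.2
  rw [integral_resH] at key
  refine key.trans ?_
  have h1 : s * (2 * (C * resE f x) + resPhi f x) ≤ (2 * C + K) * resE f x := by
    nlinarith [mul_pos hC hE]
  have h2 := mul_le_mul_of_nonneg_left h1 (by positivity : 0 ≤ 484 * π)
  have h3 : 0 ≤ 100 * K * resE f x := by positivity
  rw [hB]
  linarith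

lemma hasDerivAt_Ai_zero : HasDerivAt Ai (airyCoeff 1) 0 := by
  have h : HasFPowerSeriesAt Ai (FormalMultilinearSeries.ofScalars ℂ airyCoeff) 0 := by
    rw [hasFPowerSeriesAt_iff]
    refine Filter.Eventually.of_forall fun z => ?_
    simpa [mul_comm] using hasSum_Ai' z
  simpa using h.hasDerivAt

lemma Ai_zero : Ai 0 = airyCoeff 0 := by
  have h := hasSum_Ai' 0
  refine h.unique ?_
  simpa using hasSum_single (f := fun n : ℕ => airyCoeff n * (0 : ℂ) ^ n) 0
    fun n hn => by simp [hn]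

lemma cubicMoment_pos (n : ℕ) : 0 < cubicMoment n := by
  rw [cubicMoment_eq]
  have := Real.Gamma_pos_of_pos (s := ((n : ℝ) + 1) / 3) (by positivity)
  positivity

lemma cubicMoment_zero_mul_one : cubicMoment 0 * cubicMoment 1 = 2 * π / (3 * √3) := by
  have h : (3 : ℝ) ^ ((((0 : ℕ) : ℝ) - 2) / 3) * (3 : ℝ) ^ ((((1 : ℕ) : ℝ) - 2) / 3) = 3⁻¹ := by
    rw [← Real.rpow_add (by norm_num), ← Real.rpow_neg_one]
    norm_num
  rw [cubicMoment_eq, cubicMoment_eq, mul_mul_mul_comm, h,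
    show (((0 : ℕ) : ℝ) + 1) / 3 = 1 / 3 by norm_num,
    show (((1 : ℕ) : ℝ) + 1) / 3 = 2 / 3 by norm_num, Gamma_third_mul]
  field_simp

lemma airyCoeff_zero_ne_zero : airyCoeff 0 ≠ 0 := by
  have := cubicMoment_pos 0
  rw [airyCoeff_zero, Complex.ofReal_ne_zero]
  positivity

/-- The unit `e^{-iπ/6}/(2π)` is `(ω - 1) a₀ a₁`. -/
lemma ωc_sub_one_mul_airyCoeff :
    (ωc - 1) * (airyCoeff 0 * airyCoeff 1) = Complex.I * ωc ^ 2 / (2 * π) := by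
  have h3 := sqrt_three_sq_complex
  have h30 : ((√3 : ℝ) : ℂ) ≠ 0 := fun h => by norm_num [h] at h3
  have hpi : (π : ℂ) ≠ 0 := by exact_mod_cast Real.pi_ne_zero
  have hω : 1 - ωc = √3 * (Complex.I * ωc ^ 2) := by
    rw [show ωc ^ 2 = -1 - ωc by linear_combination ωc_sq_add, ωc_eq]
    push_cast
    linear_combination (-1 / 2 : ℂ) * h3 + ((√3 : ℝ) : ℂ) ^ 2 / 2 * Complex.I_sq
  have hm : airyCoeff 0 * airyCoeff 1 = -(1 / (2 * π * √3)) := by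
    have : airyCoeff 0 * airyCoeff 1 =
        ((-((√3) ^ 2 / (4 * π ^ 2) * (cubicMoment 0 * cubicMoment 1)) : ℝ) : ℂ) := by
      rw [airyCoeff_zero, airyCoeff_one]; push_cast; ring
    rw [this, cubicMoment_zero_mul_one]
    push_cast
    rw [h3]
    field_simp
    norm_num
  rw [hm, show ωc - 1 = -(√3 * (Complex.I * ωc ^ 2)) by rw [← hω]; ring]
  field_simp

lemma tendsto_cbrt_mul_Df_zero (κ η : ℝ) (hη : 0 < η) :
    Filter.Tendsto (fun f : ℝ => ((f ^ ((1 : ℝ) / 3) : ℝ) : ℂ) * Df κ η f 0)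
      (nhdsWithin 0 (Set.Ioi 0))
      (nhds (2 * airyCoeff 0 ^ 2 * (1 + κ / η) / (η * (Complex.I * ωc ^ 2 / (2 * π))))) := by
  set c : ℂ := Complex.I * ωc ^ 2 / (2 * π) with hc
  have hc0 : c ≠ 0 := by
    rw [hc]
    have := ωc_ne_zero
    have := Real.pi_ne_zero
    simp [*]
  have hη0 : (η : ℂ) ≠ 0 := by exact_mod_cast hη.ne'
  have hA := differentiable_Ai
  set h : ℂ → ℂ := fun s => Ai (ωc * s) * Ai (-s) - Ai (-(ωc * s)) * Ai s with hh
  have hd : HasDerivAt h (2 * c) 0 := by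
    have e : ∀ u : ℂ, HasDerivAt (fun s => Ai (u * s)) (airyCoeff 1 * u) 0 := fun u =>
      HasDerivAt.comp (h₂ := Ai) 0 (by simpa using hasDerivAt_Ai_zero)
        (by simpa using (hasDerivAt_id (0 : ℂ)).const_mul u)
    have := ((e ωc).mul (e (-1))).sub ((e (-ωc)).mul (e 1))
    simp only [mul_zero, Ai_zero] at this
    have h2 := this.congr_deriv (g' := 2 * c) (by
      rw [hc, ← ωc_sub_one_mul_airyCoeff]; ring)
    refine h2.congr_of_eventuallyEq (Filter.Eventually.of_forall fun s => ?_)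
    simp [hh]
  set F : ℂ → ℂ := fun p => p + (Ai (ωc * (κ * p)) * Ai (κ * p) +
    Ai (-(ωc * (κ * p))) * Ai (-(κ * p))) / (η * c) +
    Ai (-(ωc * (κ * p))) * Ai (κ * p) * (κ * dslope h 0 (κ * p)) / (η ^ 2 * c ^ 2) with hF
  have hF0 : F 0 = 2 * airyCoeff 0 ^ 2 * (1 + κ / η) / (η * c) := by
    simp only [hF, mul_zero, neg_zero, Ai_zero, dslope_same, hd.deriv]
    field_simp
    ring
  have hFc : ContinuousAt F 0 := by
    have hds : ContinuousAt (fun p : ℂ => dslope h 0 (κ * p)) 0 := by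
      refine ContinuousAt.comp (g := dslope h 0) ?_ (by fun_prop)
      rw [mul_zero]
      exact continuousAt_dslope_same.2 hd.differentiableAt
    have hAc := hA.continuous
    rw [hF]
    fun_prop
  have hp : Filter.Tendsto (fun f : ℝ => ((f ^ ((1 : ℝ) / 3) : ℝ) : ℂ))
      (nhdsWithin 0 (Set.Ioi 0)) (nhds 0) := by
    have h1 : ContinuousAt (fun f : ℝ => ((f ^ ((1 : ℝ) / 3) : ℝ) : ℂ)) 0 :=
      Complex.continuous_ofReal.continuousAt.comp
        (Real.continuousAt_rpow_const _ _ (Or.inr (by norm_num)))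
    have h2 := h1.tendsto
    rw [Real.zero_rpow (by norm_num), Complex.ofReal_zero] at h2
    exact h2.mono_left nhdsWithin_le_nhds
  have hlim := hFc.tendsto.comp hp
  rw [hF0] at hlim
  refine hlim.congr' ?_
  filter_upwards [self_mem_nhdsWithin] with f hf
  have hf : 0 < f := hf
  set p : ℝ := f ^ ((1 : ℝ) / 3) with hpdef
  have hp0 : 0 < p := Real.rpow_pos_of_pos hf _
  have hpc : (p : ℂ) ≠ 0 := by exact_mod_cast hp0.ne'
  have hfp : f * f ^ (-(2 : ℝ) / 3) = p := by
    rw [hpdef]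
    nth_rw 1 [← Real.rpow_one f]
    rw [← Real.rpow_add hf]; norm_num
  have hfp' : (κ : ℂ) * f * ((f ^ (-(2 : ℝ) / 3) : ℝ) : ℂ) = κ * p := by
    rw [← hfp]; push_cast; ring
  have hW : Wf f = p * c := by rw [Wf_eq, hc]; ring
  have hslope : (κ * p : ℂ) * dslope h 0 (κ * p) = h (κ * p) := by
    have := sub_smul_dslope h 0 ((κ : ℂ) * p)
    have h00 : h 0 = 0 := by simp [hh]
    simpa [h00] using this
  have e1 : -ωc * (0 - κ * f) * ((f ^ (-(2 : ℝ) / 3) : ℝ) : ℂ) = ωc * (κ * p) := by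
    rw [← hfp']; ring
  have e2 : -ωc * (0 + κ * f) * ((f ^ (-(2 : ℝ) / 3) : ℝ) : ℂ) = -(ωc * (κ * p)) := by
    rw [← hfp']; ring
  have e3 : -(0 - κ * f) * ((f ^ (-(2 : ℝ) / 3) : ℝ) : ℂ) = (κ * p : ℂ) := by
    rw [← hfp']; ring
  have e4 : -(0 + κ * f) * ((f ^ (-(2 : ℝ) / 3) : ℝ) : ℂ) = -(κ * p : ℂ) := by
    rw [← hfp']; ring
  simp only [Df, alphaP, alphaM, betaP, betaM, hW, e1, e2, e3, e4]
  have hslope' : Ai (ωc * (κ * p)) * Ai (-(κ * p)) - Ai (-(ωc * (κ * p))) * Ai (κ * p) =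
    κ * p * dslope h 0 (κ * p) := hslope.symm
  change F p = _
  rw [hslope']
  simp only [hF]
  generalize dslope h 0 (κ * p) = δ
  field_simp

lemma exists_log_norm_Df_zero (κ η : ℝ) (hκ : 0 < κ) (hη : 0 < η) :
    ∃ f₀ C : ℝ, 0 < f₀ ∧ 0 < C ∧ ∀ f, 0 < f → f < f₀ →
      Df κ η f 0 ≠ 0 ∧ |Real.log ‖Df κ η f 0‖| ≤ C * Real.log f⁻¹ := by
  have hlim := (tendsto_cbrt_mul_Df_zero κ η hη).norm
  set L := ‖2 * airyCoeff 0 ^ 2 * (1 + κ / η) / (η * (Complex.I * ωc ^ 2 / (2 * π)))‖ with hL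
  have hL0 : 0 < L := by
    have h1 : (1 + κ / η : ℂ) ≠ 0 := by
      have : (1 + κ / η : ℝ) ≠ 0 := by positivity
      exact_mod_cast this
    have h2 : (η : ℂ) ≠ 0 := by exact_mod_cast hη.ne'
    have h3 := airyCoeff_zero_ne_zero
    have h4 := ωc_ne_zero
    have h5 : (π : ℂ) ≠ 0 := by exact_mod_cast Real.pi_ne_zero
    rw [hL, norm_pos_iff]
    simp [*]
  have hev := (hlim.eventually_const_lt (show L / 2 < L by linarith)).and
    (hlim.eventually_lt_const (show L < 2 * L by linarith))
  rw [eventually_nhdsWithin_iff, Metric.eventually_nhds_iff] at hev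
  obtain ⟨ε, hε, hev⟩ := hev
  refine ⟨min ε (1 / 4), |Real.log (L / 2)| + |Real.log (2 * L)| + 1, by positivity, by positivity,
    fun f hf hff => ?_⟩
  obtain ⟨h1, h2⟩ := hev (y := f) (by
    rw [Real.dist_eq, sub_zero, abs_of_pos hf]; exact hff.trans_le (min_le_left _ _)) hf
  have hf4 : f < 1 / 4 := hff.trans_le (min_le_right _ _)
  have hp0 : 0 < f ^ ((1 : ℝ) / 3) := Real.rpow_pos_of_pos hf _
  rw [norm_mul, Complex.norm_real, Real.norm_of_nonneg hp0.le] at h1 h2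
  have hD : 0 < ‖Df κ η f 0‖ := pos_of_mul_pos_right (lt_trans (by positivity) h1) hp0.le
  refine ⟨norm_pos_iff.1 hD, ?_⟩
  have hl1 : 1 ≤ Real.log f⁻¹ := by
    rw [Real.le_log_iff_exp_le (by positivity)]
    have : (4 : ℝ) ≤ f⁻¹ := by
      rw [le_inv_comm₀ (by norm_num) hf]; linarith
    linarith [Real.exp_one_lt_d9]
  have h3 := Real.log_le_log (by positivity) h1.le
  have h4 := Real.log_le_log (by positivity) h2.le
  rw [Real.log_mul hp0.ne' hD.ne', Real.log_rpow hf] at h3 h4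
  rw [Real.log_inv] at hl1 ⊢
  have h5 := neg_abs_le (Real.log (L / 2))
  have h6 := le_abs_self (Real.log (2 * L))
  have h7 := abs_nonneg (Real.log (L / 2))
  have h8 := abs_nonneg (Real.log (2 * L))
  have h9 := mul_le_mul_of_nonneg_left hl1 h7
  have h10 := mul_le_mul_of_nonneg_left hl1 h8
  rw [abs_le]
  constructor <;> linarith

lemma exists_radius_forall_ne_zero {g : ℂ → ℂ} (hg : Differentiable ℂ g) {w : ℂ} (hw : g w ≠ 0)
    {a b : ℝ} (hab : a < b) : ∃ r, a < r ∧ r < b ∧ ∀ z : ℂ, ‖z‖ = r → g z ≠ 0 := by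
  obtain ⟨r, hr, hr'⟩ := (Set.Ioo_infinite hab).exists_notMem_finite
    ((finite_zeros_closedBall hg hw b).image norm)
  refine ⟨r, hr.1, hr.2, fun z hz h0 => hr' ⟨z, ⟨?_, h0⟩, hz⟩⟩
  simpa [hz] using hr.2.le

/-- On the circles under consideration the leading term dominates the error term. -/
lemma resE_le_resPhi {C y x : ℝ} (hC : 0 < C) (hy : 0 < y) (hy1 : y ≤ 1) (hyC : 14 * C * y ≤ 1)
    (hx : y ^ 2 ≤ x) : C * resE (y ^ 8) x ≤ resPhi (y ^ 8) x := by
  have hx0 : 0 < x := lt_of_lt_of_le (by positivity) hx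
  have hy8 : y ^ 8 ≤ 1 := pow_le_one₀ hy.le hy1
  have hlog : Real.log ((y ^ 8)⁻¹ + x ^ 2) ≤ 8 / y + x ^ 2 := by
    have h1 : (y ^ 8)⁻¹ + x ^ 2 ≤ (y ^ 8)⁻¹ * (1 + x ^ 2) := by
      have : 1 ≤ (y ^ 8)⁻¹ := (one_le_inv₀ (by positivity)).2 hy8
      nlinarith [sq_nonneg x]
    have h2 := Real.log_le_log (by positivity) h1
    rw [Real.log_mul (by positivity) (by positivity), ← inv_pow, Real.log_pow] at h2
    have h3 := Real.log_le_sub_one_of_pos (inv_pos.2 hy)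
    have h4 := Real.log_le_sub_one_of_pos (show 0 < 1 + x ^ 2 by positivity)
    push_cast at h2
    rw [div_eq_mul_inv]
    rw [inv_pow] at h2
    linarith
  have hmul : y ^ 8 * ((1 + x) * (8 / y + x ^ 2)) ≤ 18 * (y * x ^ 3) := by
    have e : y ^ 8 * ((1 + x) * (8 / y + x ^ 2)) =
        8 * (y * (y ^ 2) ^ 3) + 8 * (y ^ 3 * ((y ^ 2) ^ 2 * x)) + y ^ 6 * (y ^ 2 * x ^ 2) +
          y ^ 8 * x ^ 3 := by
      field_simp; ring
    have h1 : (y ^ 2) ^ 3 ≤ x ^ 3 := by gcongr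
    have h2 : (y ^ 2) ^ 2 * x ≤ x ^ 3 := by
      calc (y ^ 2) ^ 2 * x ≤ x ^ 2 * x := by gcongr
        _ = x ^ 3 := by ring
    have h3 : y ^ 2 * x ^ 2 ≤ x ^ 3 := by
      calc y ^ 2 * x ^ 2 ≤ x * x ^ 2 := by gcongr
        _ = x ^ 3 := by ring
    have hp : ∀ n ≠ 0, y ^ n ≤ y := fun n hn => pow_le_of_le_one hy.le hy1 hn
    have k1 : y * (y ^ 2) ^ 3 ≤ y * x ^ 3 := by gcongr
    have k2 : y ^ 3 * ((y ^ 2) ^ 2 * x) ≤ y * x ^ 3 :=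
      mul_le_mul (hp 3 (by norm_num)) h2 (by positivity) hy.le
    have k3 : y ^ 6 * (y ^ 2 * x ^ 2) ≤ y * x ^ 3 :=
      mul_le_mul (hp 6 (by norm_num)) h3 (by positivity) hy.le
    have k4 : y ^ 8 * x ^ 3 ≤ y * x ^ 3 :=
      mul_le_mul_of_nonneg_right (hp 8 (by norm_num)) (by positivity)
    rw [e]; linarith
  rw [resPhi, le_div_iff₀ (by positivity), resE]
  have h5 : (1 + x) * Real.log ((y ^ 8)⁻¹ + x ^ 2) ≤ (1 + x) * (8 / y + x ^ 2) :=
    mul_le_mul_of_nonneg_left hlog (by linarith)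
  have h6 := mul_le_mul_of_nonneg_left h5 (by positivity : 0 ≤ C * y ^ 8)
  have h7 := mul_le_mul_of_nonneg_left hmul hC.le
  have h8 := mul_le_mul_of_nonneg_right hyC (by positivity : 0 ≤ x ^ 3)
  have h9 : 0 ≤ x ^ 3 := by positivity
  generalize 8 / y + x ^ 2 = q at h6 h7
  generalize Real.log ((y ^ 8)⁻¹ + x ^ 2) = l at h6 ⊢
  linarith

lemma integral_log_norm_div {g : ℂ → ℂ} (hg : Differentiable ℂ g) {r : ℝ} (hr : 0 < r)
    (hsph : ∀ z : ℂ, ‖z‖ = r → g z ≠ 0) {c : ℂ} (hc : c ≠ 0) :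
    ∫ t in (0 : ℝ)..(2 * π), Real.log ‖g ((r : ℂ) * Complex.exp (Complex.I * t)) / c‖ =
      (∫ t in (-π)..π, Real.log ‖g (circleMap 0 r t)‖) - 2 * π * Real.log ‖c‖ := by
  have hper : Function.Periodic (fun t => Real.log ‖g (circleMap 0 r t)‖) (2 * π) :=
    (periodic_circleMap 0 r).comp fun z => Real.log ‖g z‖
  have h := hper.intervalIntegral_add_eq (-π) 0
  rw [show -π + 2 * π = π by ring, zero_add] at h
  have hcont := continuous_log_norm_circleMap hg hr hsph
  have hcongr : ∀ t : ℝ, Real.log ‖g ((r : ℂ) * Complex.exp (Complex.I * t)) / c‖ =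
      Real.log ‖g (circleMap 0 r t)‖ - Real.log ‖c‖ := fun t => by
    have h0 : g (circleMap 0 r t) ≠ 0 := hsph _ (by simp [abs_of_pos hr])
    rw [mul_comm Complex.I, ← circleMap_zero, norm_div,
      Real.log_div (norm_ne_zero_iff.2 h0) (norm_ne_zero_iff.2 hc)]
  simp only [hcongr]
  rw [intervalIntegral.integral_sub (hcont.intervalIntegrable _ _)
    (continuous_const.intervalIntegrable _ _), intervalIntegral.integral_const, h, smul_eq_mul,
    sub_zero]

/-- Evaluation of the Jensen integral of `B_f = D_f/D_f(0)`: for small `f` and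
any `R_L > 2f^a` there is a radius `r` close to `R_L`, with no zeros of `D_f`
on the circle `|z| = r`, such that the Jensen integral equals
`(8/(9π))·r^{3/2}/f` up to `O((1 + r^{1/2})·log²(f⁻¹ + r))`. -/
theorem stmt18 (κ η a : ℝ) (hκ : 0 < κ) (hη : 0 < η)
    (ha0 : 0 < a) (ha1 : a < 1 / 2) :
    ∃ C > (0 : ℝ), ∃ f₀ > (0 : ℝ), ∀ f : ℝ, 0 < f → f < f₀ →
      Df κ η f 0 ≠ 0 ∧
      ∀ RL : ℝ, 2 * f ^ a < RL → ∃ r : ℝ, (1 - f) * RL < r ∧ r < RL ∧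
        (∀ z : ℂ, ‖z‖ = r → Df κ η f z ≠ 0) ∧
        |(1 / (2 * π)) *
            (∫ t in (0 : ℝ)..(2 * π),
              Real.log (‖Df κ η f ((r : ℂ) * Complex.exp (Complex.I * t))
                / Df κ η f 0‖))
          - (8 / (9 * π)) * r ^ ((3 : ℝ) / 2) / f| ≤
          C * (1 + r ^ ((1 : ℝ) / 2)) * (Real.log (f⁻¹ + r)) ^ 2 := by
  obtain ⟨τ, C₁, hτ, hτ1, hC₁, hmean⟩ := exists_integral_log_norm_Df κ η hκ hη
  obtain ⟨f₁, C₀, hf₁, hC₀, hzero⟩ := exists_log_norm_Df_zero κ η hκ hη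
  have hπ := Real.pi_pos
  have hπ3 := Real.pi_gt_three
  have h2a : 0 < 1 - 2 * a := by linarith
  refine ⟨C₁ + C₀, by positivity, min (min f₁ (1 / 4)) (min (min τ (τ ^ (1 / (1 - 2 * a))))
    ((1 / (14 * C₁)) ^ (8 : ℝ))), by positivity, fun f hf hff => ?_⟩
  simp only [lt_min_iff] at hff
  obtain ⟨⟨hff₁, hf4⟩, ⟨hfτ, hfτa⟩, hfC⟩ := hff
  obtain ⟨hD0, hD0log⟩ := hzero f hf hff₁
  refine ⟨hD0, fun RL hRL => ?_⟩
  have hfa : 0 < f ^ a := Real.rpow_pos_of_pos hf a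
  have hRL0 : 0 < RL := by linarith
  obtain ⟨r, hr1, hr2, hsph⟩ := exists_radius_forall_ne_zero (differentiable_Df κ η f) hD0
    (show (1 - f) * RL < RL by nlinarith)
  refine ⟨r, hr1, hr2, hsph, ?_⟩
  have hfr : f ^ a ≤ r := by nlinarith
  have hr0 : 0 < r := hfa.trans_le hfr
  set x := √r with hx
  have hx0 : 0 < x := Real.sqrt_pos.2 hr0
  have hx2 : x ^ 2 = r := Real.sq_sqrt hr0.le
  have hrx1 : r ^ ((1 : ℝ) / 2) = x := (Real.sqrt_eq_rpow r).symm
  have hrx3 : r ^ ((3 : ℝ) / 2) = x ^ 3 := by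
    rw [← hrx1, ← Real.rpow_natCast, ← Real.rpow_mul hr0.le]; norm_num
  have hfx : f ≤ τ * x ^ 4 := by
    have h1 : f ^ (1 - 2 * a) ≤ τ := by
      have := Real.rpow_le_rpow hf.le hfτa.le h2a.le
      rwa [← Real.rpow_mul hτ.le, one_div_mul_cancel h2a.ne', Real.rpow_one] at this
    calc f = f ^ (1 - 2 * a) * (f ^ a) ^ 2 := by
          rw [← Real.rpow_natCast (f ^ a), ← Real.rpow_mul hf.le, ← Real.rpow_add hf]
          norm_num
          ring_nf
          simp
      _ ≤ τ * r ^ 2 := by gcongr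
      _ = τ * x ^ 4 := by rw [← hx2]; ring
  have hsmall : C₁ * resE f x ≤ resPhi f x := by
    set y := f ^ ((1 : ℝ) / 8) with hy
    have hy0 : 0 < y := Real.rpow_pos_of_pos hf _
    have hy8 : y ^ 8 = f := by
      rw [hy, ← Real.rpow_natCast, ← Real.rpow_mul hf.le]; norm_num
    have hy1 : y ≤ 1 := Real.rpow_le_one hf.le (by linarith) (by norm_num)
    have hyC : y ≤ 1 / (14 * C₁) := by
      have := Real.rpow_le_rpow hf.le hfC.le (show (0 : ℝ) ≤ 1 / 8 by norm_num)
      rwa [← Real.rpow_mul (by positivity), show (8 : ℝ) * (1 / 8) = 1 by norm_num,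
        Real.rpow_one] at this
    rw [le_div_iff₀ (by positivity)] at hyC
    have hyx : y ^ 2 ≤ x := by
      refine Real.le_sqrt_of_sq_le (le_trans ?_ hfr)
      rw [hy, ← Real.rpow_natCast, ← Real.rpow_natCast, ← Real.rpow_mul hf.le,
        ← Real.rpow_mul hf.le]
      refine Real.rpow_le_rpow_of_exponent_ge hf (by linarith) ?_
      norm_num
      linarith
    rw [← hy8]
    exact resE_le_resPhi hC₁ hy0 hy1 (by linarith) hyx
  have hmain := hmean f x hf hfτ.le hx0 hfx hsmall (by rwa [hx2])
  rw [hx2] at hmain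
  rw [integral_log_norm_div (differentiable_Df κ η f) hr0 hsph hD0, hrx1, hrx3]
  set J := ∫ t in (-π)..π, Real.log ‖Df κ η f (circleMap 0 r t)‖
  have hE : resE f x = (1 + x) * Real.log (f⁻¹ + r) := by rw [resE, hx2]
  set l := Real.log (f⁻¹ + r) with hl
  have hfinv : 4 ≤ f⁻¹ := by rw [le_inv_comm₀ (by norm_num) hf]; linarith
  have hfl : Real.log f⁻¹ ≤ l := Real.log_le_log (by positivity) (by linarith)
  have hl1 : 1 ≤ l := by
    rw [hl, Real.le_log_iff_exp_le (by positivity)]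
    linarith [Real.exp_one_lt_d9]
  have hsplit : 1 / (2 * π) * (J - 2 * π * Real.log ‖Df κ η f 0‖) - 8 / (9 * π) * x ^ 3 / f =
      1 / (2 * π) * (J - 4 / 3 * resPhi f x) - Real.log ‖Df κ η f 0‖ := by
    unfold resPhi
    field_simp
    ring
  rw [hsplit]
  have h1 : |1 / (2 * π) * (J - 4 / 3 * resPhi f x)| ≤ C₁ * resE f x := by
    rw [abs_mul, abs_of_pos (by positivity)]
    have h2 : 1 / (2 * π) ≤ 1 := by rw [div_le_one (by positivity)]; linarith
    exact (mul_le_of_le_one_left (abs_nonneg _) h2).trans hmain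
  have h2 := abs_sub (1 / (2 * π) * (J - 4 / 3 * resPhi f x)) (Real.log ‖Df κ η f 0‖)
  have hll : l ≤ l ^ 2 := by nlinarith
  have h3 : C₁ * resE f x ≤ C₁ * ((1 + x) * l ^ 2) := by
    rw [hE]; gcongr
  have h4 : C₀ * Real.log f⁻¹ ≤ C₀ * ((1 + x) * l ^ 2) := by
    have : Real.log f⁻¹ ≤ (1 + x) * l ^ 2 := by nlinarith [mul_nonneg hx0.le (sq_nonneg l)]
    gcongr
  linarith
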